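/- For any discrete memoryless channel W: X → Y on finite alphabets and α ∈ (0,∞]: if 0 ≤ r < I_∞(W), then the reliability function satisfies E_rf^{(α)}(W,r) = sup_{β≥1} (β−1)(r − I_β(W)) when α ∈ (0,1], and E_rf^{(α)}(W,r) = max{ sup_{β≥α} (β−1)(r − I_β(W)), 0 } when α ∈ (1,∞]; moreover E_rf^{(α)}(W,r) = ∞ for all r ≥ I_∞(W). -/

import Mathlib

open scoped ENNReal NNReal BigOperators Classical
open Filter

noncomputable section

namespace RST

/-- Base-2 logarithm `ℝ≥0∞ → EReal`, with `log 0 = ⊥` and `log ⊤ = ⊤`. -/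
def elog2 (s : ℝ≥0∞) : EReal :=
  if s = 0 then ⊥ else if s = ⊤ then ⊤ else ((Real.logb 2 s.toReal : ℝ) : EReal)

/-- Base-2 logarithm `EReal → EReal` (for nonnegative arguments). -/
def eLog2 (x : EReal) : EReal :=
  if x = ⊤ then ⊤ else if x ≤ 0 then ⊥ else ((Real.logb 2 x.toReal : ℝ) : EReal)

/-- Base-2 exponential `EReal → ℝ≥0∞`. -/
def epow2 (x : EReal) : ℝ≥0∞ :=
  if x = ⊤ then ⊤ else if x = ⊥ then 0 else ENNReal.ofReal ((2 : ℝ) ^ x.toReal)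

variable {X Y : Type*}

/-- A probability distribution on a finite alphabet, as an `ℝ≥0∞`-valued function. -/
def IsDist [Fintype X] (P : X → ℝ≥0∞) : Prop := ∑ x, P x = 1

/-- A discrete memoryless channel: every row is a probability distribution. -/
def IsChannel [Fintype X] [Fintype Y] (W : X → Y → ℝ≥0∞) : Prop := ∀ x, ∑ y, W x y = 1

/-- Order-`α` Rényi divergence (base 2), with the order `α ∈ [0,∞]` encoded as `ℝ≥0∞`.
The conventions `0/0 = 0` and `a/0 = ∞` (for `a > 0`, `α > 1`) are built into `ℝ≥0∞`
arithmetic.  The second argument is allowed to be an arbitrary nonnegative vector. -/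
def renyiD [Fintype X] (α : ℝ≥0∞) (P Q : X → ℝ≥0∞) : EReal :=
  if α = 0 then - elog2 (∑ x ∈ Finset.univ.filter fun x => P x ≠ 0, Q x)
  else if α = 1 then ∑ x, ((P x).toReal : EReal) * elog2 (P x / Q x)
  else if α = ⊤ then elog2 (⨆ x, P x / Q x)
  else (((α.toReal - 1)⁻¹ : ℝ) : EReal) *
    elog2 (∑ x, P x ^ α.toReal * Q x ^ (1 - α.toReal))

/-- The `X`-marginal of a joint distribution on `X × Y`. -/
def margX [Fintype X] [Fintype Y] (P : X × Y → ℝ≥0∞) : X → ℝ≥0∞ := fun x => ∑ y, P (x, y)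

/-- Order-`α` Rényi mutual information `I_α(X:Y)_P = min_{Q_Y} D_α(P‖P_X × Q_Y)`. -/
def renyiMI [Fintype X] [Fintype Y] (α : ℝ≥0∞) (P : X × Y → ℝ≥0∞) : EReal :=
  ⨅ Q : {Q : Y → ℝ≥0∞ // IsDist Q}, renyiD α P fun p => margX P p.1 * Q.1 p.2

/-- The joint input-output distribution `P_X · W`. -/
def joint [Fintype X] [Fintype Y] (PX : X → ℝ≥0∞) (W : X → Y → ℝ≥0∞) : X × Y → ℝ≥0∞ :=
  fun p => PX p.1 * W p.1 p.2

/-- Order-`α` Rényi capacity `I_α(W) = max_{P_X} I_α(X:Y)_{P_X · W}`. -/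
def renyiCap [Fintype X] [Fintype Y] (α : ℝ≥0∞) (W : X → Y → ℝ≥0∞) : EReal :=
  ⨆ P : {P : X → ℝ≥0∞ // IsDist P}, renyiMI α (joint P.1 W)

/-- `N` is a simulation of a channel `X → Y` with communication cost at most `c` bits:
shared randomness `K = Fin m` with distribution `PK`, a message set `{1,…,M}` with
`log₂ M ≤ c`, an encoder `E` and a decoder `D`. -/
def IsSimulation [Fintype X] [Fintype Y] (c : ℝ) (N : X → Y → ℝ≥0∞) : Prop :=
  ∃ (m M : ℕ) (PK : Fin m → ℝ≥0∞) (E : X → Fin m → Fin M → ℝ≥0∞)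
    (D : Fin M → Fin m → Y → ℝ≥0∞),
    0 < M ∧ Real.logb 2 M ≤ c ∧ (∑ k, PK k = 1) ∧
    (∀ x k, ∑ j, E x k j = 1) ∧ (∀ j k, ∑ y, D j k y = 1) ∧
    ∀ x y, N x y = ∑ k, ∑ j, PK k * E x k j * D j k y

/-- `D_α(W, N) := max_x D_α(W(·|x) ‖ N(·|x))`. -/
def chD [Fintype X] [Fintype Y] (α : ℝ≥0∞) (W N : X → Y → ℝ≥0∞) : EReal :=
  ⨆ x, renyiD α (W x) (N x)

/-- `𝖣_α(W, c) := min_{N ∈ A(W,c)} D_α(W, N)`. -/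
def simD [Fintype X] [Fintype Y] (α : ℝ≥0∞) (W : X → Y → ℝ≥0∞) (c : ℝ) : EReal :=
  ⨅ N : {N : X → Y → ℝ≥0∞ // IsSimulation c N}, chD α W N.1

/-- The `n`-fold memoryless extension `W^{×n}` of a channel `W`. -/
def prodCh [Fintype X] [Fintype Y] (n : ℕ) (W : X → Y → ℝ≥0∞) :
    (Fin n → X) → (Fin n → Y) → ℝ≥0∞ :=
  fun xs ys => ∏ i, W (xs i) (ys i)

/-- A sequence of communication costs with rate at most `r`. -/
def RateOK (r : ℝ) (c : ℕ → ℝ) : Prop :=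
  (∀ n, 0 ≤ c n) ∧ Filter.limsup (fun n : ℕ => ((c n / n : ℝ) : EReal)) Filter.atTop ≤ (r : EReal)

/-- Reliability function `E_rf^{(α)}(W, r)`. -/
def Erf [Fintype X] [Fintype Y] (α : ℝ≥0∞) (W : X → Y → ℝ≥0∞) (r : ℝ) : EReal :=
  ⨆ c : {c : ℕ → ℝ // RateOK r c},
    Filter.liminf
      (fun n : ℕ => (((-1 : ℝ) / n : ℝ) : EReal) * eLog2 (simD α (prodCh n W) (c.1 n)))
      Filter.atTop

/-- Strong converse exponent `E_sc^{(α)}(W, r)`. -/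
def Esc [Fintype X] [Fintype Y] (α : ℝ≥0∞) (W : X → Y → ℝ≥0∞) (r : ℝ) : EReal :=
  ⨅ c : {c : ℕ → ℝ // RateOK r c},
    Filter.limsup
      (fun n : ℕ => (((1 : ℝ) / n : ℝ) : EReal) * simD α (prodCh n W) (c.1 n))
      Filter.atTop

/-- The `α`-Rényi simulation rate `R_RST^{(α)}(W)`. -/
def Rrst [Fintype X] [Fintype Y] (α : ℝ≥0∞) (W : X → Y → ℝ≥0∞) : EReal :=
  ⨅ c : {c : ℕ → ℝ // (∀ n, 0 ≤ c n) ∧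
      Filter.limsup (fun n : ℕ => simD α (prodCh n W) (c n)) Filter.atTop = 0},
    Filter.limsup (fun n : ℕ => ((c.1 n / n : ℝ) : EReal)) Filter.atTop

/-- n-fold product of a joint distribution on `X × Y`, as a distribution on pairs of
sequences. -/
def prodJoint [Fintype X] [Fintype Y] (n : ℕ) (P : X × Y → ℝ≥0∞) :
    (Fin n → X) × (Fin n → Y) → ℝ≥0∞ :=
  fun p => ∏ i, P (p.1 i, p.2 i)

/-- n-fold product distribution. -/
def prodDist [Fintype X] (n : ℕ) (P : X → ℝ≥0∞) : (Fin n → X) → ℝ≥0∞ :=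
  fun xs => ∏ i, P (xs i)

/-- The type (empirical count vector) of a sequence. -/
def seqType [Fintype Y] [DecidableEq Y] {n : ℕ} (ys : Fin n → Y) : Y → ℕ :=
  fun y => (Finset.univ.filter fun i => ys i = y).card

/-- The cardinality of the type class of a sequence. -/
def typeClassCard [Fintype Y] [DecidableEq Y] {n : ℕ} (ys : Fin n → Y) : ℕ :=
  (Finset.univ.filter fun zs : Fin n → Y => seqType zs = seqType ys).card

/-- The number of types of sequences in `Y^n`. -/
def numTypes (Y : Type*) [Fintype Y] [DecidableEq Y] (n : ℕ) : ℕ :=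
  (Finset.univ.image fun ys : Fin n → Y => seqType ys).card

/-- `Φ_{Y^n}`: the uniform mixture over type classes of `Y^n`. -/
def PhiY (Y : Type*) [Fintype Y] [DecidableEq Y] (n : ℕ) : (Fin n → Y) → ℝ≥0∞ :=
  fun ys => ((numTypes Y n : ℝ≥0∞) * (typeClassCard ys : ℝ≥0∞))⁻¹

end RST

namespace RST

/-! ### Part 1: logarithm bookkeeping and exponents -/

theorem eLog2_coe {t : ℝ} (ht : 0 < t) : eLog2 (t : EReal) = ((Real.logb 2 t : ℝ) : EReal) := by
  have h1 : ¬ ((t : EReal) ≤ 0) := by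
    rw [not_le]; exact_mod_cast ht
  rw [eLog2, if_neg (EReal.coe_ne_top t), if_neg h1, EReal.toReal_coe]

theorem eLog2_mono {x y : EReal} (h : x ≤ y) : eLog2 x ≤ eLog2 y := by
  unfold eLog2
  by_cases hy : y = ⊤
  · simp [hy]
  have hx : x ≠ ⊤ := fun hx => hy (top_le_iff.mp (hx ▸ h))
  rw [if_neg hy, if_neg hx]
  by_cases hx0 : x ≤ 0
  · simp [hx0]
  have hy0 : ¬ y ≤ 0 := fun hy0 => hx0 (h.trans hy0)
  rw [if_neg hx0, if_neg hy0]
  rw [not_le] at hx0 hy0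
  have hxb : x ≠ ⊥ := fun hb => by simp [hb] at hx0
  have hyb : y ≠ ⊥ := fun hb => by simp [hb] at hy0
  lift x to ℝ using ⟨hx, hxb⟩
  lift y to ℝ using ⟨hy, hyb⟩
  have hx0' : 0 < x := by exact_mod_cast hx0
  have h' : x ≤ y := by exact_mod_cast h
  simp only [EReal.toReal_coe]
  exact_mod_cast Real.logb_le_logb_of_le (by norm_num) hx0' h'

theorem neg_mul_antitone {n : ℕ} {x y : EReal} (h : x ≤ y) :
    (((-1 : ℝ) / n : ℝ) : EReal) * y ≤ (((-1 : ℝ) / n : ℝ) : EReal) * x := by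
  have e : ((-1 : ℝ) / n : ℝ) = -(1 / n) := by ring
  rw [e, EReal.coe_neg, EReal.neg_mul, EReal.neg_mul, EReal.neg_le_neg_iff]
  exact mul_le_mul_of_nonneg_left h (by exact_mod_cast (by positivity : (0:ℝ) ≤ 1 / n))

theorem term_le {n : ℕ} {t : ℝ} (ht : 0 < t) {x : EReal} (h : (t : EReal) ≤ x) :
    (((-1 : ℝ) / n : ℝ) : EReal) * eLog2 x ≤ (((-1 : ℝ) / n * Real.logb 2 t : ℝ) : EReal) := by
  refine (neg_mul_antitone (eLog2_mono h)).trans ?_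
  rw [eLog2_coe ht, ← EReal.coe_mul]

theorem term_ge {n : ℕ} {t : ℝ} (ht : 0 < t) {x : EReal} (h : x ≤ (t : EReal)) :
    (((-1 : ℝ) / n * Real.logb 2 t : ℝ) : EReal) ≤ (((-1 : ℝ) / n : ℝ) : EReal) * eLog2 x := by
  refine le_trans ?_ (neg_mul_antitone (eLog2_mono h))
  rw [eLog2_coe ht, ← EReal.coe_mul]

theorem exp_calc {n : ℕ} (hn : 0 < n) {C E : ℝ} (hC : 0 < C) :
    (-1 : ℝ) / n * Real.logb 2 (C * 2 ^ (-(n * E))) = E - Real.logb 2 C / n := by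
  have hn' : (n : ℝ) ≠ 0 := by positivity
  rw [Real.logb_mul hC.ne' (by positivity), Real.logb_rpow (by norm_num) (by norm_num)]
  field_simp
  ring

theorem tendsto_exp_calc (C E : ℝ) :
    Tendsto (fun n : ℕ => E - Real.logb 2 C / n) atTop (nhds E) := by
  have := (tendsto_const_div_atTop_nhds_zero_nat (Real.logb 2 C)).const_sub E
  simpa using this

theorem le_Erf_of {X Y : Type*} [Fintype X] [Fintype Y] {α : ℝ≥0∞} {W : X → Y → ℝ≥0∞} {r : ℝ}
    {c : ℕ → ℝ} (hc : RateOK r c) {C E : ℝ} (hC : 0 < C)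
    (h : ∀ᶠ n : ℕ in atTop, simD α (prodCh n W) (c n) ≤ ((C * 2 ^ (-(n * E)) : ℝ) : EReal)) :
    (E : EReal) ≤ Erf α W r := by
  refine le_trans ?_ (le_iSup (fun c : {c : ℕ → ℝ // RateOK r c} => Filter.liminf
      (fun n : ℕ => (((-1 : ℝ) / n : ℝ) : EReal) * eLog2 (simD α (prodCh n W) (c.1 n)))
      Filter.atTop) ⟨c, hc⟩)
  have h1 : Tendsto (fun n : ℕ => ((E - Real.logb 2 C / n : ℝ) : EReal)) atTop (nhds (E : EReal)) :=
    (continuous_coe_real_ereal.tendsto _).comp (tendsto_exp_calc C E)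
  rw [← h1.liminf_eq]
  refine Filter.liminf_le_liminf ?_
  filter_upwards [h, eventually_gt_atTop 0] with n hn hn0
  rw [← exp_calc hn0 hC]
  exact term_ge (by positivity) hn

theorem Erf_le_of {X Y : Type*} [Fintype X] [Fintype Y] {α : ℝ≥0∞} {W : X → Y → ℝ≥0∞} {r : ℝ}
    {E : ℝ}
    (h : ∀ c, RateOK r c → ∃ C : ℝ, 0 < C ∧
      ∀ᶠ n : ℕ in atTop, ((C * 2 ^ (-(n * E)) : ℝ) : EReal) ≤ simD α (prodCh n W) (c n)) :
    Erf α W r ≤ (E : EReal) := by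
  refine iSup_le ?_
  rintro ⟨c, hc⟩
  obtain ⟨C, hC, h⟩ := h c hc
  have h1 : Tendsto (fun n : ℕ => ((E - Real.logb 2 C / n : ℝ) : EReal)) atTop (nhds (E : EReal)) :=
    (continuous_coe_real_ereal.tendsto _).comp (tendsto_exp_calc C E)
  rw [← h1.liminf_eq]
  refine Filter.liminf_le_liminf ?_
  filter_upwards [h, eventually_gt_atTop 0] with n hn hn0
  rw [← exp_calc hn0 hC]
  exact term_le (by positivity) hn


/-! ### Part 2: simulations: converse bound and rejection sampling -/

theorem sim_sum {X Y : Type*} [Fintype X] [Fintype Y] {c : ℝ} {N : X → Y → ℝ≥0∞}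
    (h : IsSimulation c N) (x : X) : ∑ y, N x y = 1 := by
  obtain ⟨m, M, PK, E, D, hM, hc, hPK, hE, hD, hN⟩ := h
  simp_rw [hN]
  rw [Finset.sum_comm]
  calc ∑ k, ∑ y, ∑ j, PK k * E x k j * D j k y
      = ∑ k, PK k * ∑ j, E x k j * ∑ y, D j k y := by
        refine Finset.sum_congr rfl fun k _ => ?_
        rw [Finset.sum_comm, Finset.mul_sum]
        refine Finset.sum_congr rfl fun j _ => ?_
        rw [Finset.mul_sum, Finset.mul_sum]
        refine Finset.sum_congr rfl fun y _ => ?_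
        ring
    _ = 1 := by simp [hE, hD, hPK]

theorem sim_bound {X Y : Type*} [Fintype X] [Fintype Y] {c : ℝ} {N : X → Y → ℝ≥0∞}
    (h : IsSimulation c N) :
    ∃ Q : Y → ℝ≥0∞, IsDist Q ∧ ∀ x y, N x y ≤ ENNReal.ofReal (2 ^ c) * Q y := by
  obtain ⟨m, M, PK, E, D, hM, hc, hPK, hE, hD, hN⟩ := h
  have hM0 : (M : ℝ≥0∞) ≠ 0 := by exact_mod_cast hM.ne'
  have hMt : (M : ℝ≥0∞) ≠ ⊤ := ENNReal.natCast_ne_top M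
  have hMc : (M : ℝ≥0∞) ≤ ENNReal.ofReal (2 ^ c) := by
    rw [← ENNReal.ofReal_natCast]
    apply ENNReal.ofReal_le_ofReal
    have hM' : (0 : ℝ) < M := by exact_mod_cast hM
    exact (Real.logb_le_iff_le_rpow (by norm_num) hM').mp hc
  refine ⟨fun y => (M : ℝ≥0∞)⁻¹ * ∑ k, ∑ j, PK k * D j k y, ?_, ?_⟩
  · unfold IsDist
    rw [← Finset.mul_sum, Finset.sum_comm]
    have : ∑ k, ∑ y, ∑ j, PK k * D j k y = M := by
      calc ∑ k, ∑ y, ∑ j, PK k * D j k y = ∑ k, PK k * ∑ j, ∑ y, D j k y := by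
            refine Finset.sum_congr rfl fun k _ => ?_
            rw [Finset.sum_comm, Finset.mul_sum]
            refine Finset.sum_congr rfl fun j _ => ?_
            rw [Finset.mul_sum]
        _ = ∑ k, PK k * M := by simp [hD]
        _ = M := by rw [← Finset.sum_mul, hPK, one_mul]
    rw [this, ENNReal.inv_mul_cancel hM0 hMt]
  · intro x y
    refine le_trans ?_ (mul_le_mul_left hMc _)
    rw [← mul_assoc, ENNReal.mul_inv_cancel hM0 hMt, one_mul, hN]
    refine Finset.sum_le_sum fun k _ => Finset.sum_le_sum fun j _ => ?_
    have : E x k j ≤ 1 := by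
      rw [← hE x k]
      exact Finset.single_le_sum (f := fun j => E x k j) (fun _ _ => zero_le) (Finset.mem_univ j)
    calc PK k * E x k j * D j k y ≤ PK k * 1 * D j k y := by gcongr
      _ = _ := by rw [mul_one]

theorem isSim_of {X Y K : Type*} [Fintype X] [Fintype Y] [Fintype K] {c : ℝ} {M : ℕ} (hM : 0 < M)
    (hc : Real.logb 2 M ≤ c) (PK : K → ℝ≥0∞) (E : X → K → Fin M → ℝ≥0∞) (D : Fin M → K → Y → ℝ≥0∞)
    (hPK : ∑ k, PK k = 1) (hE : ∀ x k, ∑ j, E x k j = 1) (hD : ∀ j k, ∑ y, D j k y = 1) :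
    IsSimulation c (fun x y => ∑ k, ∑ j, PK k * E x k j * D j k y) := by
  let e := (Fintype.equivFin K).symm
  refine ⟨Fintype.card K, M, fun k => PK (e k), fun x k j => E x (e k) j,
    fun j k y => D j (e k) y, hM, hc, ?_, fun x k => hE x _, fun j k => hD j _, ?_⟩
  · rw [← hPK]; exact Equiv.sum_comp e PK
  · intro x y
    exact (Equiv.sum_comp e (fun k => ∑ j, PK k * E x k j * D j k y)).symm

theorem const_sim {X Y : Type*} [Fintype X] [Fintype Y] {Q : Y → ℝ≥0∞} (hQ : IsDist Q) :
    IsSimulation (X := X) 0 (fun _ y => Q y) := by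
  refine ⟨1, 1, fun _ => 1, fun _ _ _ => 1, fun _ _ y => Q y, one_pos, by simp, by simp, by simp,
    fun _ _ => hQ, by simp⟩

theorem geom_identity (m : ℕ) {l : ℝ≥0∞} (hl : 1 ≤ l) :
    1 - (1 - l⁻¹) ^ m ≤
      ∑ j : Fin m, l⁻¹ * ∏ i ∈ Finset.univ.filter (fun i : Fin m => j < i), (1 - l⁻¹) := by
  have h := Finset.prod_add_ordered (Finset.univ : Finset (Fin m)) (fun _ => 1 - l⁻¹)
    (fun _ => l⁻¹)
  have h1 : 1 - l⁻¹ + l⁻¹ = 1 := tsub_add_cancel_of_le (ENNReal.inv_le_one.mpr hl)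
  simp only [h1, Finset.prod_const_one, mul_one] at h
  rw [Finset.prod_const, Finset.card_univ, Fintype.card_fin] at h
  rw [tsub_le_iff_left]
  exact h.le

theorem reject {X Y : Type*} [Fintype X] [Fintype Y] {Q : Y → ℝ≥0∞} (hQ : IsDist Q)
    {l : ℝ≥0∞} (hl : 1 ≤ l) (hlt : l ≠ ⊤) {V : X → Y → ℝ≥0∞} (hV : ∀ x y, V x y ≤ l * Q y)
    (hV1 : ∀ x, ∑ y, V x y ≤ 1) {m : ℕ} (hm : 0 < m) :
    ∃ N : X → Y → ℝ≥0∞, IsSimulation (Real.logb 2 m) N ∧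
      ∀ x y, (1 - (1 - l⁻¹) ^ m) * V x y ≤ N x y := by
  have hl0 : l ≠ 0 := (zero_lt_one.trans_le hl).ne'
  have hQ1 : ∀ y, Q y ≤ 1 := fun y => by
    rw [← hQ]; exact Finset.single_le_sum (fun _ _ => zero_le) (Finset.mem_univ y)
  have hQt : ∀ y, Q y ≠ ⊤ := fun y => ((hQ1 y).trans_lt ENNReal.one_lt_top).ne
  let a : X → Y → ℝ≥0∞ := fun x y => V x y / (l * Q y)
  have ha1 : ∀ x y, a x y ≤ 1 := fun x y => ENNReal.div_le_of_le_mul (by simpa using hV x y)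
  have hQa : ∀ x y, Q y * a x y = l⁻¹ * V x y := by
    intro x y
    by_cases h0 : Q y = 0
    · have : V x y = 0 := by simpa [h0] using hV x y
      simp [h0, this]
    · simp only [a, div_eq_mul_inv]
      rw [ENNReal.mul_inv (Or.inl hl0) (Or.inl hlt)]
      calc Q y * (V x y * (l⁻¹ * (Q y)⁻¹)) = (Q y * (Q y)⁻¹) * (l⁻¹ * V x y) := by ring
        _ = _ := by rw [ENNReal.mul_inv_cancel h0 (hQt y), one_mul]
  let b : X → Y → ℝ≥0∞ := fun x y => 1 - a x y
  have hba : ∀ x y, b x y + a x y = 1 := fun x y => tsub_add_cancel_of_le (ha1 x y)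
  have hQb : ∀ x, 1 - l⁻¹ ≤ ∑ y, Q y * b x y := by
    intro x
    rw [tsub_le_iff_right]
    have h1 : ∑ y, Q y * b x y + ∑ y, Q y * a x y = 1 := by
      rw [← Finset.sum_add_distrib]
      simp_rw [← mul_add, hba, mul_one]
      exact hQ
    rw [← h1]
    gcongr
    simp_rw [hQa, ← Finset.mul_sum]
    calc l⁻¹ * ∑ y, V x y ≤ l⁻¹ * 1 := by gcongr; exact hV1 x
      _ = _ := mul_one _
  let j0 : Fin m := ⟨0, hm⟩
  let E0 : X → (Fin m → Y) → Fin m → ℝ≥0∞ := fun x k j =>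
    a x (k j) * ∏ i ∈ Finset.univ.filter (fun i : Fin m => j < i), b x (k i)
  let E : X → (Fin m → Y) → Fin m → ℝ≥0∞ := fun x k j =>
    E0 x k j + if j = j0 then ∏ i, b x (k i) else 0
  let D : Fin m → (Fin m → Y) → Y → ℝ≥0∞ := fun j k y => if k j = y then 1 else 0
  refine ⟨_, isSim_of hm le_rfl (fun k : Fin m → Y => ∏ i, Q (k i)) E D ?_ ?_ ?_, ?_⟩
  · rw [← Fintype.sum_pow, hQ, one_pow]
  · intro x k
    have h := Finset.prod_add_ordered (Finset.univ : Finset (Fin m)) (fun i => b x (k i))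
      (fun i => a x (k i))
    simp only [hba, Finset.prod_const_one, mul_one] at h
    simp only [E, Finset.sum_add_distrib, Finset.sum_ite_eq', Finset.mem_univ, if_true]
    rw [h, add_comm]
  · intro j k
    simp [D]
  · intro x y
    have step : ∀ j : Fin m, ∑ k : Fin m → Y, (∏ i, Q (k i)) * E0 x k j * D j k y
        = ∏ i, ∑ z, Q z * (if i = j then (a x z * if z = y then 1 else 0)
            else if j < i then b x z else 1) := by
      intro j
      rw [Fintype.prod_sum]
      refine Finset.sum_congr rfl fun k _ => ?_
      rw [Finset.prod_mul_distrib, mul_assoc]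
      congr 1
      rw [← Finset.mul_prod_erase Finset.univ _ (Finset.mem_univ j)]
      simp only [if_true, E0, D]
      rw [mul_right_comm]
      congr 1
      rw [Finset.prod_filter]
      rw [← Finset.mul_prod_erase Finset.univ _ (Finset.mem_univ j)]
      simp only [lt_irrefl, if_false, one_mul]
      refine Finset.prod_congr rfl fun i hi => ?_
      rw [if_neg (Finset.ne_of_mem_erase hi)]
    have step2 : ∀ j : Fin m,
        (l⁻¹ * ∏ i ∈ Finset.univ.filter (fun i : Fin m => j < i), (1 - l⁻¹)) * V x y ≤
        ∑ k : Fin m → Y, (∏ i, Q (k i)) * E0 x k j * D j k y := by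
      intro j
      rw [step j, ← Finset.mul_prod_erase Finset.univ _ (Finset.mem_univ j), Finset.prod_filter,
        ← Finset.mul_prod_erase Finset.univ _ (Finset.mem_univ j)]
      simp only [lt_irrefl, if_false, one_mul, if_true]
      have e1 : ∑ z, Q z * (a x z * if z = y then 1 else 0) = l⁻¹ * V x y := by
        rw [← hQa]; simp
      rw [e1, mul_right_comm]
      refine mul_le_mul_right ?_ _
      refine Finset.prod_le_prod' fun i hi => ?_
      simp only [if_neg (Finset.ne_of_mem_erase hi)]
      by_cases hji : j < i
      · simp only [hji, if_true]; exact hQb x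
      · simp only [hji, if_false, mul_one]; exact hQ.ge
    calc (1 - (1 - l⁻¹) ^ m) * V x y
        ≤ (∑ j : Fin m, l⁻¹ * ∏ i ∈ Finset.univ.filter (fun i : Fin m => j < i), (1 - l⁻¹))
            * V x y := by gcongr; exact geom_identity m hl
      _ = ∑ j : Fin m, (l⁻¹ * ∏ i ∈ Finset.univ.filter (fun i : Fin m => j < i), (1 - l⁻¹))
            * V x y := by rw [Finset.sum_mul]
      _ ≤ ∑ j : Fin m, ∑ k : Fin m → Y, (∏ i, Q (k i)) * E0 x k j * D j k y :=
          Finset.sum_le_sum fun j _ => step2 j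
      _ = ∑ k : Fin m → Y, ∑ j : Fin m, (∏ i, Q (k i)) * E0 x k j * D j k y := Finset.sum_comm
      _ ≤ _ := by
          refine Finset.sum_le_sum fun k _ => Finset.sum_le_sum fun j _ => ?_
          gcongr
          exact le_self_add


/-! ### Part 3: real-number formulas for the Rényi divergence -/

theorem elog2_ofReal {t : ℝ} (ht : 0 < t) :
    elog2 (ENNReal.ofReal t) = ((Real.logb 2 t : ℝ) : EReal) := by
  rw [elog2, if_neg (by simpa using ht), if_neg ENNReal.ofReal_ne_top,
    ENNReal.toReal_ofReal ht.le]

theorem elog2_mono {s t : ℝ≥0∞} (h : s ≤ t) : elog2 s ≤ elog2 t := by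
  unfold elog2
  by_cases hs : s = 0
  · simp [hs]
  have ht0 : t ≠ 0 := fun h0 => hs (by simpa [h0] using h)
  by_cases ht : t = ⊤
  · simp [ht]
  have hst : s ≠ ⊤ := fun h0 => ht (by simpa [h0] using h)
  rw [if_neg hs, if_neg ht0, if_neg ht, if_neg hst]
  have := ENNReal.toReal_mono ht h
  exact_mod_cast Real.logb_le_logb_of_le (by norm_num) (ENNReal.toReal_pos hs hst) this

theorem dist_ne_top {Y : Type*} [Fintype Y] {P : Y → ℝ≥0∞} (hP : ∑ y, P y = 1) (y : Y) :
    P y ≠ ⊤ := by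
  have : P y ≤ 1 := by
    rw [← hP]; exact Finset.single_le_sum (fun _ _ => zero_le) (Finset.mem_univ y)
  exact (this.trans_lt ENNReal.one_lt_top).ne

theorem dist_toReal {Y : Type*} [Fintype Y] {P : Y → ℝ≥0∞} (hP : ∑ y, P y = 1) :
    ∑ y, (P y).toReal = 1 := by
  rw [← ENNReal.toReal_sum (fun y _ => dist_ne_top hP y), hP, ENNReal.toReal_one]

theorem term_real {α : ℝ} (h0 : 0 < α) {P Q : ℝ≥0∞} (hP : P ≠ ⊤) (hQ : Q ≠ ⊤)
    (h : α < 1 ∨ (Q = 0 → P = 0)) :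
    P ^ α * Q ^ (1 - α) = ENNReal.ofReal (P.toReal ^ α * Q.toReal ^ (1 - α)) := by
  by_cases hP0 : P = 0
  · simp [hP0, h0, Real.zero_rpow h0.ne']
  by_cases hQ0 : Q = 0
  · have h1 : α < 1 := h.resolve_right (fun h => hP0 (h hQ0))
    have : 0 < 1 - α := by linarith
    simp [hQ0, this, Real.zero_rpow this.ne']
  have hp := ENNReal.toReal_pos hP0 hP
  have hq := ENNReal.toReal_pos hQ0 hQ
  rw [ENNReal.ofReal_mul (by positivity), ← ENNReal.ofReal_rpow_of_pos hp,
    ← ENNReal.ofReal_rpow_of_pos hq, ENNReal.ofReal_toReal hP, ENNReal.ofReal_toReal hQ]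

theorem sum_real {Y : Type*} [Fintype Y] {α : ℝ} (h0 : 0 < α) {P Q : Y → ℝ≥0∞}
    (hP : ∀ y, P y ≠ ⊤) (hQ : ∀ y, Q y ≠ ⊤)
    (h : α < 1 ∨ (∀ y, Q y = 0 → P y = 0)) :
    ∑ y, P y ^ α * Q y ^ (1 - α)
      = ENNReal.ofReal (∑ y, (P y).toReal ^ α * (Q y).toReal ^ (1 - α)) := by
  rw [ENNReal.ofReal_sum_of_nonneg (fun y _ => by positivity)]
  exact Finset.sum_congr rfl fun y _ => term_real h0 (hP y) (hQ y) (h.imp_right (fun h => h y))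

theorem renyiD_def {Y : Type*} [Fintype Y] {α : ℝ≥0∞} (h0 : 0 < α) (h1 : α ≠ 1) (ht : α ≠ ⊤)
    (P Q : Y → ℝ≥0∞) : renyiD α P Q = (((α.toReal - 1)⁻¹ : ℝ) : EReal) *
    elog2 (∑ x, P x ^ α.toReal * Q x ^ (1 - α.toReal)) := by
  rw [renyiD, if_neg h0.ne', if_neg h1, if_neg ht]

theorem renyiD_real {Y : Type*} [Fintype Y] {α : ℝ≥0∞} (h0 : 0 < α) (h1 : α ≠ 1) (ht : α ≠ ⊤)
    {P Q : Y → ℝ≥0∞} (hP : ∀ y, P y ≠ ⊤) (hQ : ∀ y, Q y ≠ ⊤)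
    (h : α.toReal < 1 ∨ (∀ y, Q y = 0 → P y = 0))
    (hs : 0 < ∑ y, (P y).toReal ^ α.toReal * (Q y).toReal ^ (1 - α.toReal)) :
    renyiD α P Q = (((α.toReal - 1)⁻¹ *
      Real.logb 2 (∑ y, (P y).toReal ^ α.toReal * (Q y).toReal ^ (1 - α.toReal)) : ℝ) : EReal) := by
  rw [renyiD_def h0 h1 ht, sum_real (ENNReal.toReal_pos h0.ne' ht) hP hQ h, elog2_ofReal hs,
    EReal.coe_mul]

theorem ereal_coe_sum {ι : Type*} (s : Finset ι) (f : ι → ℝ) :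
    ((∑ i ∈ s, f i : ℝ) : EReal) = ∑ i ∈ s, (f i : EReal) := by
  induction s using Finset.induction_on with
  | empty => simp
  | insert a s ha ih => rw [Finset.sum_insert ha, Finset.sum_insert ha, EReal.coe_add, ih]

theorem renyiD_one_real {Y : Type*} [Fintype Y]
    {P Q : Y → ℝ≥0∞} (hP : ∀ y, P y ≠ ⊤) (hQ : ∀ y, Q y ≠ ⊤) (h : ∀ y, Q y = 0 → P y = 0) :
    renyiD 1 P Q = ((∑ y, (P y).toReal * Real.logb 2 ((P y).toReal / (Q y).toReal) : ℝ) : EReal) := by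
  rw [renyiD, if_neg one_ne_zero, if_pos rfl, ereal_coe_sum]
  refine Finset.sum_congr rfl fun y _ => ?_
  by_cases hP0 : P y = 0
  · simp [hP0]
  have hQ0 : Q y ≠ 0 := fun h0 => hP0 (h y h0)
  rw [elog2, if_neg (by simp [hP0, hQ y]), if_neg (by simp [ENNReal.div_eq_top, hP y, hQ0]),
    ENNReal.toReal_div, EReal.coe_mul]

theorem renyiD_top_of_not_ac {Y : Type*} [Fintype Y] {α : ℝ≥0∞} (h1 : 1 ≤ α) (ht : α ≠ ⊤)
    {P Q : Y → ℝ≥0∞} (hP : ∀ y, P y ≠ ⊤) (hQ : ∀ y, Q y ≠ ⊤) (h : ¬ ∀ y, Q y = 0 → P y = 0) :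
    renyiD α P Q = ⊤ := by
  push Not at h
  obtain ⟨y, hy, hy'⟩ := h
  rcases h1.eq_or_lt with h1 | h1
  · subst h1
    rw [renyiD, if_neg one_ne_zero, if_pos rfl]
    have key : ∀ z, ((P z).toReal : EReal) * elog2 (P z / Q z) ≠ ⊥ := by
      intro z
      by_cases hz : P z = 0
      · simp [hz]
      have hp := ENNReal.toReal_pos hz (hP z)
      have hp' : (0 : EReal) < ((P z).toReal : EReal) := by exact_mod_cast hp
      by_cases hz' : Q z = 0
      · simp [hz', ENNReal.div_zero hz, elog2, EReal.coe_mul_top_of_pos hp]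
      · rw [elog2, if_neg (by simp [hz, hQ z]), if_neg (by simp [ENNReal.div_eq_top, hP z, hz']),
          ← EReal.coe_mul]
        exact EReal.coe_ne_bot _
    have hyt : ((P y).toReal : EReal) * elog2 (P y / Q y) = ⊤ := by
      have hp := ENNReal.toReal_pos hy' (hP y)
      simp [hy, ENNReal.div_zero hy', elog2, EReal.coe_mul_top_of_pos hp]
    rw [← Finset.add_sum_erase _ _ (Finset.mem_univ y), hyt]
    apply EReal.top_add_of_ne_bot
    generalize Finset.univ.erase y = s
    induction s using Finset.induction_on with
    | empty => simp
    | insert a s ha ih =>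
      rw [Finset.sum_insert ha]
      simp [EReal.add_eq_bot_iff, ih, key a]
  · have h0 : 0 < α := zero_lt_one.trans h1
    rw [renyiD_def h0 h1.ne' ht]
    have ha : 1 < α.toReal := by
      rw [← ENNReal.toReal_one]; exact ENNReal.toReal_strict_mono ht h1
    have hs : ∑ x, P x ^ α.toReal * Q x ^ (1 - α.toReal) = ⊤ := by
      rw [ENNReal.sum_eq_top]
      refine ⟨y, Finset.mem_univ y, ?_⟩
      rw [hy, ENNReal.zero_rpow_of_neg (by linarith)]
      apply ENNReal.mul_top
      simp [ENNReal.rpow_eq_zero_iff, hy', hP y]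
    rw [hs]
    have : 0 < (α.toReal - 1)⁻¹ := inv_pos.mpr (by linarith)
    simp only [elog2, ENNReal.top_ne_zero, if_false, if_true]
    exact EReal.coe_mul_top_of_pos this


/-! ### Part 4: one-shot lower bounds on the Rényi divergence -/

theorem pq_eq {α p q : ℝ} (h1 : 1 < α) (hp : 0 ≤ p) (hq : 0 < q) :
    p ^ α * q ^ (1 - α) = p * (p / q) ^ (α - 1) := by
  rcases hp.eq_or_lt with hp | hp
  · subst hp
    rw [Real.zero_rpow (by linarith)]; simp
  rw [Real.div_rpow hp.le hq.le, show 1 - α = -(α - 1) by ring, Real.rpow_neg hq.le]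
  have : p ^ α = p * p ^ (α - 1) := by
    rw [← Real.rpow_one_add' hp.le (by linarith)]; congr 1; ring
  rw [this]; ring

theorem pq_eq' {α p q : ℝ} (hp : 0 < p) (hq : 0 ≤ q) :
    p ^ α * q ^ (1 - α) = p * (q / p) ^ (1 - α) := by
  rw [Real.div_rpow hq hp.le, show 1 - α = -(α - 1) by ring, Real.rpow_neg hp.le, div_inv_eq_mul]
  have : p ^ α = p * p ^ (α - 1) := by
    rw [Real.rpow_sub hp, Real.rpow_one]; field_simp
  rw [this]; ring

theorem lower_lt {Y : Type*} [Fintype Y] {α K : ℝ} (h0 : 0 < α) (h1 : α < 1) (hK : 0 < K)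
    (hK' : K ^ (α - 1) ≤ α / 2) {p q : Y → ℝ} (hp : ∀ y, 0 ≤ p y) (hq : ∀ y, 0 ≤ q y)
    (hp1 : ∑ y, p y = 1) (hq1 : ∑ y, q y = 1) (A : Finset Y) (hA : ∀ y ∈ A, K * q y ≤ p y) :
    ∑ y, p y ^ α * q y ^ (1 - α) ≤ 1 - α / 2 * ∑ y ∈ A, p y := by
  have hon : ∀ y ∈ A, p y ^ α * q y ^ (1 - α) ≤ α / 2 * p y := by
    intro y hy
    have hq' : q y ≤ p y / K := by rw [le_div_iff₀ hK, mul_comm]; exact hA y hy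
    rcases (hp y).eq_or_lt with h | h
    · rw [← h, Real.zero_rpow h0.ne']; simp
    calc p y ^ α * q y ^ (1 - α) ≤ p y ^ α * (p y / K) ^ (1 - α) := by
          gcongr
          exact hq y
      _ = p y ^ α * p y ^ (1 - α) * K ^ (α - 1) := by
          rw [Real.div_rpow (hp y) hK.le, show α - 1 = -(1 - α) by ring, Real.rpow_neg hK.le]; ring
      _ = p y * K ^ (α - 1) := by rw [← Real.rpow_add h]; simp
      _ ≤ p y * (α / 2) := by gcongr
      _ = _ := by ring
  have hoff : ∀ y, p y ^ α * q y ^ (1 - α) ≤ α * p y + (1 - α) * q y := fun y =>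
    Real.geom_mean_le_arith_mean2_weighted h0.le (by linarith) (hp y) (hq y) (by ring)
  calc ∑ y, p y ^ α * q y ^ (1 - α)
      = ∑ y ∈ A, p y ^ α * q y ^ (1 - α) + ∑ y ∈ Aᶜ, p y ^ α * q y ^ (1 - α) :=
        (Finset.sum_add_sum_compl A _).symm
    _ ≤ ∑ y ∈ A, α / 2 * p y + ∑ y ∈ Aᶜ, (α * p y + (1 - α) * q y) :=
        add_le_add (Finset.sum_le_sum hon) (Finset.sum_le_sum fun y _ => hoff y)
    _ = α / 2 * ∑ y ∈ A, p y + (α * ∑ y ∈ Aᶜ, p y + (1 - α) * ∑ y ∈ Aᶜ, q y) := by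
        rw [Finset.sum_add_distrib, Finset.mul_sum, Finset.mul_sum, Finset.mul_sum]
    _ ≤ _ := by
        have e1 := Finset.sum_add_sum_compl A p
        have e2 := Finset.sum_add_sum_compl A q
        have e3 : 0 ≤ ∑ y ∈ A, q y := Finset.sum_nonneg fun y _ => hq y
        rw [hp1] at e1
        rw [hq1] at e2
        have e4 : ∑ y ∈ Aᶜ, p y = 1 - ∑ y ∈ A, p y := by linarith
        have e5 : (1 - α) * ∑ y ∈ Aᶜ, q y ≤ (1 - α) * 1 := by
          apply mul_le_mul_of_nonneg_left <;> linarith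
        rw [e4]; nlinarith

theorem lower_gt {Y : Type*} [Fintype Y] {α K : ℝ} (h1 : 1 < α) (hK : 0 < K)
    (hK' : 2 * α ≤ K ^ (α - 1)) {p q : Y → ℝ} (hp : ∀ y, 0 ≤ p y) (hq : ∀ y, 0 ≤ q y)
    (hac : ∀ y, q y = 0 → p y = 0)
    (hp1 : ∑ y, p y = 1) (hq1 : ∑ y, q y = 1) (A : Finset Y) (hA : ∀ y ∈ A, K * q y ≤ p y) :
    1 + 1 / 2 * ((∑ y ∈ A, p y) * K ^ (α - 1)) ≤ ∑ y, p y ^ α * q y ^ (1 - α) := by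
  have hon : ∀ y ∈ A, K ^ (α - 1) * p y ≤ p y ^ α * q y ^ (1 - α) := by
    intro y hy
    rcases (hq y).eq_or_lt with h | h
    · rw [hac y h.symm]; simp; positivity
    rw [pq_eq h1 (hp y) h, mul_comm]
    have : K ≤ p y / q y := by rw [le_div_iff₀ h]; exact hA y hy
    gcongr
    exact hp y
  have hoff : ∀ y, α * p y - (α - 1) * q y ≤ p y ^ α * q y ^ (1 - α) := by
    intro y
    rcases (hq y).eq_or_lt with h | h
    · rw [← h, hac y h.symm]; simp; positivity
    have hb := one_add_mul_self_le_rpow_one_add (s := p y / q y - 1) (by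
      have : 0 ≤ p y / q y := div_nonneg (hp y) h.le
      linarith) h1.le
    have e : p y ^ α * q y ^ (1 - α) = q y * (p y / q y) ^ α := by
      rw [Real.div_rpow (hp y) h.le, Real.rpow_sub h, Real.rpow_one]; ring
    rw [e]
    have e2 : 1 + (p y / q y - 1) = p y / q y := by ring
    rw [e2] at hb
    calc α * p y - (α - 1) * q y = q y * (1 + α * (p y / q y - 1)) := by field_simp; ring
      _ ≤ _ := by gcongr
  calc _ ≤ K ^ (α - 1) * ∑ y ∈ A, p y + (α * ∑ y ∈ Aᶜ, p y - (α - 1) * ∑ y ∈ Aᶜ, q y) := by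
        have e1 := Finset.sum_add_sum_compl A p
        have e2 := Finset.sum_add_sum_compl A q
        have e3 : 0 ≤ ∑ y ∈ A, q y := Finset.sum_nonneg fun y _ => hq y
        have e6 : 0 ≤ ∑ y ∈ A, p y := Finset.sum_nonneg fun y _ => hp y
        rw [hp1] at e1
        rw [hq1] at e2
        have e4 : ∑ y ∈ Aᶜ, p y = 1 - ∑ y ∈ A, p y := by linarith
        have e5 : (α - 1) * ∑ y ∈ Aᶜ, q y ≤ (α - 1) * 1 := by
          apply mul_le_mul_of_nonneg_left <;> linarith
        rw [e4]; nlinarith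
    _ = ∑ y ∈ A, K ^ (α - 1) * p y + ∑ y ∈ Aᶜ, (α * p y - (α - 1) * q y) := by
        rw [Finset.sum_sub_distrib, Finset.mul_sum, Finset.mul_sum, Finset.mul_sum]
    _ ≤ ∑ y ∈ A, p y ^ α * q y ^ (1 - α) + ∑ y ∈ Aᶜ, p y ^ α * q y ^ (1 - α) :=
        add_le_add (Finset.sum_le_sum hon) (Finset.sum_le_sum fun y _ => hoff y)
    _ = _ := Finset.sum_add_sum_compl A _

theorem lower_one {Y : Type*} [Fintype Y] {K : ℝ} (hK : Real.exp 2 ≤ K)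
    {p q : Y → ℝ} (hp : ∀ y, 0 ≤ p y) (hq : ∀ y, 0 ≤ q y)
    (hac : ∀ y, q y = 0 → p y = 0)
    (hp1 : ∑ y, p y = 1) (hq1 : ∑ y, q y = 1) (A : Finset Y) (hA : ∀ y ∈ A, K * q y ≤ p y) :
    ∑ y ∈ A, p y ≤ ∑ y, p y * Real.log (p y / q y) := by
  have hK0 : 0 < K := (Real.exp_pos 2).trans_le hK
  have hon : ∀ y ∈ A, 2 * p y ≤ p y * Real.log (p y / q y) := by
    intro y hy
    rcases (hp y).eq_or_lt with h | h
    · rw [← h]; simp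
    have hq0 : 0 < q y := (hq y).lt_of_ne' fun h0 => h.ne' (hac y h0)
    have : K ≤ p y / q y := by rw [le_div_iff₀ hq0]; exact hA y hy
    have : 2 ≤ Real.log (p y / q y) := by
      rw [Real.le_log_iff_exp_le (by positivity)]; exact hK.trans this
    nlinarith
  have hoff : ∀ y, p y - q y ≤ p y * Real.log (p y / q y) := by
    intro y
    rcases (hp y).eq_or_lt with h | h
    · rw [← h]; simp; exact hq y
    have hq0 : 0 < q y := (hq y).lt_of_ne' fun h0 => h.ne' (hac y h0)
    have := Real.one_sub_inv_le_log_of_pos (show 0 < p y / q y by positivity)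
    calc p y - q y = p y * (1 - (p y / q y)⁻¹) := by field_simp
      _ ≤ _ := by gcongr
  calc _ ≤ 2 * ∑ y ∈ A, p y + (∑ y ∈ Aᶜ, p y - ∑ y ∈ Aᶜ, q y) := by
        have e1 := Finset.sum_add_sum_compl A p
        have e2 := Finset.sum_add_sum_compl A q
        have e3 : 0 ≤ ∑ y ∈ A, q y := Finset.sum_nonneg fun y _ => hq y
        linarith
    _ = ∑ y ∈ A, 2 * p y + ∑ y ∈ Aᶜ, (p y - q y) := by
        rw [Finset.sum_sub_distrib, Finset.mul_sum]
    _ ≤ ∑ y ∈ A, p y * Real.log (p y / q y) + ∑ y ∈ Aᶜ, p y * Real.log (p y / q y) :=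
        add_le_add (Finset.sum_le_sum hon) (Finset.sum_le_sum fun y _ => hoff y)
    _ = _ := Finset.sum_add_sum_compl A _

theorem log_two_pos_lt : 0 < Real.log 2 ∧ Real.log 2 < 1 :=
  ⟨Real.log_pos (by norm_num), by have := Real.log_two_lt_d9; linarith⟩

theorem le_logb_of_nonneg {x : ℝ} (h : 0 ≤ Real.log x) : Real.log x ≤ Real.logb 2 x := by
  rw [Real.logb, le_div_iff₀ log_two_pos_lt.1]
  nlinarith [log_two_pos_lt.2]

theorem renyi_lower.{u} {α : ℝ≥0∞} (h0 : 0 < α) (ht : α ≠ ⊤) :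
    ∃ C > (0 : ℝ), ∃ K0 ≥ (1 : ℝ), ∀ (Y : Type u) [Fintype Y] (P Q : Y → ℝ≥0∞) (A : Finset Y)
      (K : ℝ), K0 ≤ K → ∑ y, P y = 1 → ∑ y, Q y = 1 →
      (∀ y ∈ A, K * (Q y).toReal ≤ (P y).toReal) →
      ((C * min 1 ((∑ y ∈ A, (P y).toReal) * K ^ max (α.toReal - 1) 0) : ℝ) : EReal)
        ≤ renyiD α P Q := by
  have ha0 : 0 < α.toReal := ENNReal.toReal_pos h0.ne' ht
  rcases lt_trichotomy α 1 with h1 | h1 | h1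
  · have ha1 : α.toReal < 1 := by
      rw [← ENNReal.toReal_one]; exact ENNReal.toReal_strict_mono ENNReal.one_ne_top h1
    set a := α.toReal with ha
    refine ⟨(1 - a)⁻¹ * (a / 2), mul_pos (inv_pos.mpr (by linarith)) (by linarith),
      (2 / a) ^ (1 - a)⁻¹, Real.one_le_rpow (by rw [le_div_iff₀ ha0]; linarith)
        (inv_nonneg.mpr (by linarith)), ?_⟩
    intro Y _ P Q A K hK hP hQ hA
    have hKpos : 0 < K := lt_of_lt_of_le (by positivity) hK
    have hK' : K ^ (a - 1) ≤ a / 2 := by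
      have h2 : 2 / a ≤ K ^ (1 - a) := by
        calc 2 / a = ((2 / a) ^ (1 - a)⁻¹) ^ (1 - a) := by
              rw [← Real.rpow_mul (by positivity), inv_mul_cancel₀ (by linarith), Real.rpow_one]
          _ ≤ _ := by gcongr
      rw [show a - 1 = -(1 - a) by ring, Real.rpow_neg hKpos.le]
      calc (K ^ (1 - a))⁻¹ ≤ (2 / a)⁻¹ := by gcongr
        _ = _ := by rw [inv_div]
    have hl := lower_lt ha0 ha1 hKpos hK' (fun y => ENNReal.toReal_nonneg)
      (fun y => ENNReal.toReal_nonneg) (dist_toReal hP) (dist_toReal hQ) A hA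
    set S := ∑ y, (P y).toReal ^ a * (Q y).toReal ^ (1 - a) with hS
    have hSn : 0 ≤ S := Finset.sum_nonneg fun y _ => by positivity
    have hpA : 0 ≤ ∑ y ∈ A, (P y).toReal := Finset.sum_nonneg fun y _ => ENNReal.toReal_nonneg
    rcases hSn.eq_or_lt with hS0 | hS0
    · rw [renyiD_def h0 h1.ne ht, sum_real ha0 (dist_ne_top hP) (dist_ne_top hQ) (Or.inl ha1),
        ← ha, ← hS, ← hS0]
      have : (a - 1)⁻¹ < 0 := inv_lt_zero.mpr (by linarith)
      simp only [elog2, ENNReal.ofReal_zero, if_true]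
      rw [EReal.coe_mul_bot_of_neg this]
      exact le_top
    · rw [renyiD_real h0 h1.ne ht (dist_ne_top hP) (dist_ne_top hQ) (Or.inl ha1) hS0]
      rw [EReal.coe_le_coe_iff, max_eq_right (by linarith), Real.rpow_zero, mul_one]
      have e : (a - 1)⁻¹ * Real.logb 2 S = (1 - a)⁻¹ * Real.logb 2 S⁻¹ := by
        rw [Real.logb_inv, show a - 1 = -(1 - a) by ring, inv_neg]; ring
      rw [e, mul_assoc]
      have hpos : 0 ≤ (1 - a)⁻¹ := inv_nonneg.mpr (by linarith)
      refine mul_le_mul_of_nonneg_left ?_ hpos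
      have h3 : 1 - S ≤ Real.log S⁻¹ := by
        have := Real.log_le_sub_one_of_pos hS0
        rw [Real.log_inv]; linarith
      have h4 : a / 2 * ∑ y ∈ A, (P y).toReal ≤ Real.log S⁻¹ := by linarith
      calc a / 2 * min 1 (∑ y ∈ A, (P y).toReal) ≤ a / 2 * ∑ y ∈ A, (P y).toReal := by
            gcongr; exact min_le_right _ _
        _ ≤ _ := h4
        _ ≤ _ := le_logb_of_nonneg (le_trans (by positivity) h4)
  · subst h1
    refine ⟨1, one_pos, Real.exp 2, Real.one_le_exp (by norm_num), ?_⟩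
    intro Y _ P Q A K hK hP hQ hA
    by_cases hac : ∀ y, Q y = 0 → P y = 0
    · rw [renyiD_one_real (dist_ne_top hP) (dist_ne_top hQ) hac, EReal.coe_le_coe_iff]
      have hl := lower_one hK (fun y => ENNReal.toReal_nonneg (a := P y))
        (fun y => ENNReal.toReal_nonneg (a := Q y)) (fun y hy => by
          have : Q y = 0 := by
            rcases (ENNReal.toReal_eq_zero_iff _).mp hy with h | h
            · exact h
            · exact absurd h (dist_ne_top hQ y)
          rw [hac y this]; rfl) (dist_toReal hP) (dist_toReal hQ) A hA
      have hpA : 0 ≤ ∑ y ∈ A, (P y).toReal := Finset.sum_nonneg fun y _ => ENNReal.toReal_nonneg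
      simp only [ENNReal.toReal_one, sub_self, max_self, Real.rpow_zero, mul_one, one_mul]
      refine (min_le_right _ _).trans (hl.trans ?_)
      have e : ∑ y, (P y).toReal * Real.logb 2 ((P y).toReal / (Q y).toReal)
          = (∑ y, (P y).toReal * Real.log ((P y).toReal / (Q y).toReal)) / Real.log 2 := by
        rw [Finset.sum_div]
        exact Finset.sum_congr rfl fun y _ => by rw [Real.logb]; ring
      rw [e, le_div_iff₀ log_two_pos_lt.1]
      nlinarith [log_two_pos_lt.2]
    · rw [renyiD_top_of_not_ac le_rfl ht (dist_ne_top hP) (dist_ne_top hQ) hac]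
      exact le_top
  · have ha1 : 1 < α.toReal := by
      rw [← ENNReal.toReal_one]; exact ENNReal.toReal_strict_mono ht h1
    set a := α.toReal with ha
    refine ⟨(a - 1)⁻¹ * (1 / 4), mul_pos (inv_pos.mpr (by linarith)) (by norm_num),
      (2 * a) ^ (a - 1)⁻¹, Real.one_le_rpow (by linarith) (inv_nonneg.mpr (by linarith)), ?_⟩
    intro Y _ P Q A K hK hP hQ hA
    by_cases hac : ∀ y, Q y = 0 → P y = 0
    · have hKpos : 0 < K := lt_of_lt_of_le (by positivity) hK
      have hK' : 2 * a ≤ K ^ (a - 1) := by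
        calc 2 * a = ((2 * a) ^ (a - 1)⁻¹) ^ (a - 1) := by
              rw [← Real.rpow_mul (by positivity), inv_mul_cancel₀ (by linarith), Real.rpow_one]
          _ ≤ _ := by gcongr
      have hl := lower_gt ha1 hKpos hK' (fun y => ENNReal.toReal_nonneg (a := P y))
        (fun y => ENNReal.toReal_nonneg (a := Q y)) (fun y hy => by
          have : Q y = 0 := by
            rcases (ENNReal.toReal_eq_zero_iff _).mp hy with h | h
            · exact h
            · exact absurd h (dist_ne_top hQ y)
          rw [hac y this]; rfl) (dist_toReal hP) (dist_toReal hQ) A hA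
      have hpA : 0 ≤ ∑ y ∈ A, (P y).toReal := Finset.sum_nonneg fun y _ => ENNReal.toReal_nonneg
      set S := ∑ y, (P y).toReal ^ a * (Q y).toReal ^ (1 - a) with hS
      have hu : 0 ≤ (∑ y ∈ A, (P y).toReal) * K ^ (a - 1) := by positivity
      have hS0 : 0 < S := by linarith
      rw [renyiD_real h0 h1.ne' ht (dist_ne_top hP) (dist_ne_top hQ) (Or.inr hac) hS0,
        EReal.coe_le_coe_iff, max_eq_left (by linarith)]
      set u := (∑ y ∈ A, (P y).toReal) * K ^ (a - 1) with hu'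
      rw [mul_assoc]
      refine mul_le_mul_of_nonneg_left ?_ (inv_nonneg.mpr (by linarith))
      have h3 : 1 - S⁻¹ ≤ Real.log S := Real.one_sub_inv_le_log_of_pos hS0
      have h4 : 1 / 4 * min 1 u ≤ 1 - S⁻¹ := by
        have hm : min 1 u ≤ 1 := min_le_left _ _
        have hm2 : min 1 u ≤ u := min_le_right _ _
        have hm0 : 0 ≤ min 1 u := le_min zero_le_one hu
        have h5 : S⁻¹ ≤ (1 + 1 / 2 * min 1 u)⁻¹ := by
          gcongr; linarith
        have h6 : (1 + 1 / 2 * min 1 u)⁻¹ ≤ 1 - 1 / 4 * min 1 u := by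
          rw [inv_le_iff_one_le_mul₀ (by linarith)]
          nlinarith
        linarith
      have h5 : 1 / 4 * min 1 u ≤ Real.log S := h4.trans h3
      refine h5.trans (le_logb_of_nonneg (le_trans ?_ h5))
      have : 0 ≤ min 1 u := le_min zero_le_one hu
      linarith
    · rw [renyiD_top_of_not_ac h1.le ht (dist_ne_top hP) (dist_ne_top hQ) hac]
      exact le_top

theorem renyi_lower_top {Y : Type*} [Fintype Y] {P Q : Y → ℝ≥0∞} {K : ℝ} (hK : 0 < K)
    {y : Y} (hP : ∑ y, P y = 1) (hQ : ∑ y, Q y = 1) (hy : 0 < (P y).toReal)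
    (h : K * (Q y).toReal ≤ (P y).toReal) :
    ((Real.logb 2 K : ℝ) : EReal) ≤ renyiD ⊤ P Q := by
  rw [renyiD, if_neg ENNReal.top_ne_zero, if_neg ENNReal.top_ne_one, if_pos rfl, ← elog2_ofReal hK]
  refine elog2_mono (le_trans ?_ (le_iSup _ y))
  have hP0 : P y ≠ 0 := fun h0 => by simp [h0] at hy
  by_cases hQ0 : Q y = 0
  · rw [hQ0, ENNReal.div_zero hP0]; exact le_top
  rw [ENNReal.le_div_iff_mul_le (Or.inl hQ0) (Or.inl (dist_ne_top hQ y)),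
    ← ENNReal.ofReal_toReal (dist_ne_top hQ y), ← ENNReal.ofReal_mul hK.le,
    ← ENNReal.ofReal_toReal (dist_ne_top hP y)]
  exact ENNReal.ofReal_le_ofReal h


/-! ### Part 5: one-shot upper bounds on the Rényi divergence -/

theorem neg_log_le_two {κ : ℝ} (h : 1 / 2 ≤ κ) (h1 : κ ≤ 1) : -Real.log κ ≤ 2 * (1 - κ) := by
  have hk : 0 < κ := by linarith
  have := Real.one_sub_inv_le_log_of_pos hk
  have h2 : κ⁻¹ - 1 ≤ 2 * (1 - κ) := by
    rw [sub_le_iff_le_add, inv_le_iff_one_le_mul₀ hk]; nlinarith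
  linarith

theorem logb_le_of_log_le {x u : ℝ} (hu : 0 ≤ u) (h : Real.log x ≤ u) : Real.logb 2 x ≤ 2 * u := by
  rw [Real.logb, div_le_iff₀ log_two_pos_lt.1]
  have := Real.log_two_gt_d9
  nlinarith

theorem ratio_bound {p q n l κ : ℝ} (hp : 0 < p) (hq : 0 < q) (hl : 0 < l) (hκ : 0 < κ)
    (h : κ * min p (l * q) ≤ n) : 0 < n ∧ p / n ≤ κ⁻¹ * max 1 (p / (l * q)) := by
  have hlq : 0 < l * q := by positivity
  have hn : 0 < n := lt_of_lt_of_le (by have := lt_min hp hlq; positivity) h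
  refine ⟨hn, ?_⟩
  rw [div_le_iff₀ hn]
  calc p = κ⁻¹ * max 1 (p / (l * q)) * (κ * min p (l * q)) := by
        rcases le_total p (l * q) with h1 | h1
        · rw [min_eq_left h1, max_eq_left (by rw [div_le_one hlq]; exact h1)]
          field_simp
        · rw [min_eq_right h1, max_eq_right (by rw [one_le_div hlq]; exact h1)]
          field_simp
    _ ≤ _ := by gcongr

theorem renyi_upper.{u} {α : ℝ≥0∞} (h0 : 0 < α) (ht : α ≠ ⊤) {β : ℝ} (hβ : 1 < β)
    (hαβ : α.toReal ≤ β) :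
    ∃ C > (0 : ℝ), ∀ (Y : Type u) [Fintype Y] (P N : Y → ℝ≥0∞) (q : Y → ℝ) (l κ ε : ℝ),
      0 < l → 1 / 2 ≤ κ → κ ≤ 1 → 0 ≤ ε → ε ≤ 1 / 2 → ∑ y, P y = 1 → (∀ y, N y ≠ ⊤) →
      (∀ y, 0 < (P y).toReal → 0 < q y) →
      ∑ y, (P y).toReal * ((P y).toReal / (l * q y)) ^ (β - 1) ≤ ε →
      (∀ y, κ * min (P y).toReal (l * q y) ≤ (N y).toReal) →
      renyiD α P N ≤ ((C * ((1 - κ) + ε) : ℝ) : EReal) := by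
  have ha0 : 0 < α.toReal := ENNReal.toReal_pos h0.ne' ht
  have hb : 0 < β - 1 := by linarith
  have hac : ∀ (Y : Type u) [Fintype Y] (P N : Y → ℝ≥0∞) (q : Y → ℝ) (l κ : ℝ), 0 < l → 1 / 2 ≤ κ →
      ∑ y, P y = 1 → (∀ y, 0 < (P y).toReal → 0 < q y) →
      (∀ y, κ * min (P y).toReal (l * q y) ≤ (N y).toReal) → ∀ y, N y = 0 → P y = 0 := by
    intro Y _ P N q l κ hl hκ hP hpq hN y hy
    by_contra hPy
    have hp := ENNReal.toReal_pos hPy (dist_ne_top hP y)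
    have := (ratio_bound hp (hpq y hp) hl (by linarith) (hN y)).1
    simp [hy] at this
  rcases lt_trichotomy α 1 with h1 | h1 | h1
  · have ha1 : α.toReal < 1 := by
      rw [← ENNReal.toReal_one]; exact ENNReal.toReal_strict_mono ENNReal.one_ne_top h1
    set a := α.toReal with ha
    have hpos : 0 < (1 - a)⁻¹ := inv_pos.mpr (by linarith)
    refine ⟨(1 - a)⁻¹ * 8, by positivity, ?_⟩
    intro Y _ P N q l κ ε hl hκ hκ1 hε0 hε hP hNt hpq hsum hN
    set S := ∑ y, (P y).toReal ^ a * (N y).toReal ^ (1 - a) with hS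
    have hpt : ∀ y, κ * ((P y).toReal - (P y).toReal * ((P y).toReal / (l * q y)) ^ (β - 1)) ≤
        (P y).toReal ^ a * (N y).toReal ^ (1 - a) := by
      intro y
      have hp0 : 0 ≤ (P y).toReal := ENNReal.toReal_nonneg
      have hr : 0 ≤ (P y).toReal ^ a * (N y).toReal ^ (1 - a) := by positivity
      rcases hp0.eq_or_lt with hp | hp
      · rw [← hp] at hr ⊢; simpa using hr
      have hq := hpq y hp
      have hlq : 0 < l * q y := by positivity
      rcases le_or_gt (P y).toReal (l * q y) with hle | hlt
      · have hn := hN y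
        rw [min_eq_left hle] at hn
        have hn' : κ ≤ (N y).toReal / (P y).toReal := by rw [le_div_iff₀ hp]; exact hn
        rw [pq_eq' hp ENNReal.toReal_nonneg]
        have h3 : κ ≤ κ ^ (1 - a) := by
          calc κ = κ ^ (1 : ℝ) := (Real.rpow_one κ).symm
            _ ≤ κ ^ (1 - a) := Real.rpow_le_rpow_of_exponent_ge (by linarith) hκ1 (by linarith)
        have h4 : κ ^ (1 - a) ≤ ((N y).toReal / (P y).toReal) ^ (1 - a) :=
          Real.rpow_le_rpow (by linarith) hn' (by linarith)
        have h5 : 0 ≤ (P y).toReal * ((P y).toReal / (l * q y)) ^ (β - 1) := by positivity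
        have h6 : κ ≤ ((N y).toReal / (P y).toReal) ^ (1 - a) := h3.trans h4
        have h7 := mul_le_mul_of_nonneg_left h6 hp.le
        nlinarith
      · have h5 : 1 ≤ ((P y).toReal / (l * q y)) ^ (β - 1) :=
          Real.one_le_rpow (by rw [one_le_div hlq]; exact hlt.le) hb.le
        refine le_trans ?_ hr
        have : (P y).toReal - (P y).toReal * ((P y).toReal / (l * q y)) ^ (β - 1) ≤ 0 := by nlinarith
        nlinarith
    have hSge : κ * (1 - ε) ≤ S := by
      calc κ * (1 - ε) ≤ κ * (∑ y, (P y).toReal -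
            ∑ y, (P y).toReal * ((P y).toReal / (l * q y)) ^ (β - 1)) := by
            rw [dist_toReal hP]; gcongr
        _ = ∑ y, κ * ((P y).toReal - (P y).toReal * ((P y).toReal / (l * q y)) ^ (β - 1)) := by
            rw [← Finset.sum_sub_distrib, Finset.mul_sum]
        _ ≤ _ := Finset.sum_le_sum fun y _ => hpt y
    have hs0 : 1 / 4 ≤ κ * (1 - ε) := by nlinarith
    have hSpos : 0 < S := by linarith
    rw [renyiD_real h0 h1.ne ht (dist_ne_top hP) hNt (Or.inl ha1) hSpos, EReal.coe_le_coe_iff]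
    have e : (a - 1)⁻¹ * Real.logb 2 S = (1 - a)⁻¹ * Real.logb 2 S⁻¹ := by
      rw [Real.logb_inv, show a - 1 = -(1 - a) by ring, inv_neg]; ring
    rw [e, mul_assoc]
    refine mul_le_mul_of_nonneg_left ?_ hpos.le
    have h3 : Real.log S⁻¹ ≤ 4 * ((1 - κ) + ε) := by
      have h4 : S⁻¹ ≤ (κ * (1 - ε))⁻¹ := by gcongr
      have h5 : Real.log S⁻¹ ≤ S⁻¹ - 1 := Real.log_le_sub_one_of_pos (by positivity)
      have h6 : (κ * (1 - ε))⁻¹ ≤ 4 * (1 - κ * (1 - ε)) + 1 := by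
        rw [inv_le_iff_one_le_mul₀ (by linarith)]
        have : κ * (1 - ε) ≤ 1 := by nlinarith
        nlinarith
      nlinarith
    have := logb_le_of_log_le (by linarith) h3
    linarith
  · subst h1
    refine ⟨4 + 2 * (β - 1)⁻¹, by positivity, ?_⟩
    intro Y _ P N q l κ ε hl hκ hκ1 hε0 hε hP hNt hpq hsum hN
    rw [renyiD_one_real (dist_ne_top hP) hNt (hac Y P N q l κ hl hκ hP hpq hN),
      EReal.coe_le_coe_iff]
    have hpt : ∀ y, (P y).toReal * Real.logb 2 ((P y).toReal / (N y).toReal) ≤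
        2 * (2 * (1 - κ) * (P y).toReal + (β - 1)⁻¹ *
          ((P y).toReal * ((P y).toReal / (l * q y)) ^ (β - 1))) := by
      intro y
      have hp0 : 0 ≤ (P y).toReal := ENNReal.toReal_nonneg
      rcases hp0.eq_or_lt with hp | hp
      · rw [← hp]; simp
      have hq := hpq y hp
      have hlq : 0 < l * q y := by positivity
      obtain ⟨hn, hr⟩ := ratio_bound hp hq hl (by linarith) (hN y)
      have ht0 : 0 < (P y).toReal / (l * q y) := by positivity
      set t := (P y).toReal / (l * q y) with htd
      have hlog : Real.log ((P y).toReal / (N y).toReal) ≤ 2 * (1 - κ) + (β - 1)⁻¹ * t ^ (β - 1) := by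
        calc Real.log ((P y).toReal / (N y).toReal) ≤ Real.log (κ⁻¹ * max 1 t) :=
              Real.log_le_log (by positivity) hr
          _ = -Real.log κ + Real.log (max 1 t) := by
              rw [Real.log_mul (by positivity) (by positivity), Real.log_inv]
          _ ≤ _ := by
              refine add_le_add (neg_log_le_two hκ hκ1) ?_
              have h5 : Real.log t ≤ t ^ (β - 1) / (β - 1) := Real.log_le_rpow_div ht0.le hb
              rcases le_total 1 t with h6 | h6
              · rw [max_eq_right h6]; rw [div_eq_inv_mul] at h5; exact h5
              · rw [max_eq_left h6, Real.log_one]; positivity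
      have h7 : 0 ≤ 2 * (1 - κ) + (β - 1)⁻¹ * t ^ (β - 1) := by
        have : 0 ≤ (β - 1)⁻¹ * t ^ (β - 1) := by positivity
        linarith
      have := mul_le_mul_of_nonneg_left (logb_le_of_log_le h7 hlog) hp.le
      linarith
    calc _ ≤ ∑ y, 2 * (2 * (1 - κ) * (P y).toReal + (β - 1)⁻¹ *
          ((P y).toReal * ((P y).toReal / (l * q y)) ^ (β - 1))) := Finset.sum_le_sum fun y _ => hpt y
      _ = 2 * (2 * (1 - κ) * ∑ y, (P y).toReal + (β - 1)⁻¹ *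
          ∑ y, ((P y).toReal * ((P y).toReal / (l * q y)) ^ (β - 1))) := by
          rw [← Finset.mul_sum, Finset.sum_add_distrib, ← Finset.mul_sum, ← Finset.mul_sum]
      _ ≤ 2 * (2 * (1 - κ) * 1 + (β - 1)⁻¹ * ε) := by
          rw [dist_toReal hP]; gcongr
      _ ≤ _ := by
          have h8 : 0 ≤ (β - 1)⁻¹ * (1 - κ) := mul_nonneg (by positivity) (by linarith)
          nlinarith
  · have ha1 : 1 < α.toReal := by
      rw [← ENNReal.toReal_one]; exact ENNReal.toReal_strict_mono ht h1
    set a := α.toReal with ha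
    have ha' : 0 < a - 1 := by linarith
    refine ⟨4 + 2 * (a - 1)⁻¹, by positivity, ?_⟩
    intro Y _ P N q l κ ε hl hκ hκ1 hε0 hε hP hNt hpq hsum hN
    have hκ0 : 0 < κ := by linarith
    have hac' := hac Y P N q l κ hl hκ hP hpq hN
    set S := ∑ y, (P y).toReal ^ a * (N y).toReal ^ (1 - a) with hS
    have hpt : ∀ y, (P y).toReal ^ a * (N y).toReal ^ (1 - a) ≤ (κ⁻¹) ^ (a - 1) *
        ((P y).toReal + (P y).toReal * ((P y).toReal / (l * q y)) ^ (β - 1)) := by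
      intro y
      have hp0 : 0 ≤ (P y).toReal := ENNReal.toReal_nonneg
      rcases hp0.eq_or_lt with hp | hp
      · rw [← hp, Real.zero_rpow (by linarith)]; simp
      have hq := hpq y hp
      have hlq : 0 < l * q y := by positivity
      obtain ⟨hn, hr⟩ := ratio_bound hp hq hl (by linarith) (hN y)
      have ht0 : 0 < (P y).toReal / (l * q y) := by positivity
      set t := (P y).toReal / (l * q y) with htd
      rw [pq_eq ha1 hp.le hn]
      have hm : (max 1 t) ^ (a - 1) ≤ 1 + t ^ (β - 1) := by
        have : 0 ≤ t ^ (β - 1) := by positivity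
        rcases le_total 1 t with h6 | h6
        · rw [max_eq_right h6]
          have := Real.rpow_le_rpow_of_exponent_le h6 (show a - 1 ≤ β - 1 by linarith)
          linarith
        · rw [max_eq_left h6, Real.one_rpow]; linarith
      calc (P y).toReal * ((P y).toReal / (N y).toReal) ^ (a - 1)
          ≤ (P y).toReal * (κ⁻¹ * max 1 t) ^ (a - 1) := by gcongr
        _ = (P y).toReal * ((κ⁻¹) ^ (a - 1) * (max 1 t) ^ (a - 1)) := by
            rw [Real.mul_rpow (by positivity) (by positivity)]
        _ ≤ (P y).toReal * ((κ⁻¹) ^ (a - 1) * (1 + t ^ (β - 1))) := by gcongr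
        _ = _ := by ring
    have hSle : S ≤ (κ⁻¹) ^ (a - 1) * (1 + ε) := by
      calc S ≤ ∑ y, (κ⁻¹) ^ (a - 1) *
          ((P y).toReal + (P y).toReal * ((P y).toReal / (l * q y)) ^ (β - 1)) :=
            Finset.sum_le_sum fun y _ => hpt y
        _ = (κ⁻¹) ^ (a - 1) * (∑ y, (P y).toReal +
            ∑ y, (P y).toReal * ((P y).toReal / (l * q y)) ^ (β - 1)) := by
            rw [← Finset.mul_sum, Finset.sum_add_distrib]
        _ ≤ _ := by rw [dist_toReal hP]; gcongr
    have hSpos : 0 < S := by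
      obtain ⟨y, hy⟩ : ∃ y, (P y).toReal ≠ 0 := by
        by_contra hcon
        push Not at hcon
        have := dist_toReal hP
        simp [hcon] at this
      have hp : 0 < (P y).toReal := lt_of_le_of_ne ENNReal.toReal_nonneg hy.symm
      have hn := (ratio_bound hp (hpq y hp) hl hκ0 (hN y)).1
      refine Finset.sum_pos' (fun y _ => by positivity) ⟨y, Finset.mem_univ y, by positivity⟩
    rw [renyiD_real h0 h1.ne' ht (dist_ne_top hP) hNt (Or.inr hac') hSpos, EReal.coe_le_coe_iff]
    have hlog : Real.log S ≤ (a - 1) * (2 * (1 - κ)) + ε := by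
      calc Real.log S ≤ Real.log ((κ⁻¹) ^ (a - 1) * (1 + ε)) := Real.log_le_log hSpos hSle
        _ = (a - 1) * (-Real.log κ) + Real.log (1 + ε) := by
            rw [Real.log_mul (by positivity) (by positivity), Real.log_rpow (by positivity),
              Real.log_inv]
        _ ≤ _ := by
            have h5 := neg_log_le_two hκ hκ1
            have h6 := Real.log_le_sub_one_of_pos (show 0 < 1 + ε by linarith)
            refine add_le_add (mul_le_mul_of_nonneg_left h5 ha'.le) (by linarith)
    have h7 : 0 ≤ (a - 1) * (2 * (1 - κ)) := mul_nonneg ha'.le (by linarith)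
    have h8 := mul_le_mul_of_nonneg_left (logb_le_of_log_le (by linarith) hlog)
      (inv_nonneg.mpr ha'.le)
    refine h8.trans ?_
    have h9 : (a - 1)⁻¹ * (2 * ((a - 1) * (2 * (1 - κ)) + ε)) = 4 * (1 - κ) + 2 * (a - 1)⁻¹ * ε := by
      field_simp; ring
    rw [h9]
    have h10 : 0 ≤ (a - 1)⁻¹ * (1 - κ) := mul_nonneg (by positivity) (by linarith)
    nlinarith

theorem renyi_upper_scale {Y : Type*} [Fintype Y] {α : ℝ≥0∞} (h0 : 0 < α) {P N : Y → ℝ≥0∞}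
    (hP : ∑ y, P y = 1) (hNt : ∀ y, N y ≠ ⊤) {κ : ℝ} (hκ : 0 < κ)
    (h : ∀ y, κ * (P y).toReal ≤ (N y).toReal) :
    renyiD α P N ≤ ((-Real.logb 2 κ : ℝ) : EReal) := by
  have hac : ∀ y, N y = 0 → P y = 0 := by
    intro y hy
    have h1 := h y
    rw [hy, ENNReal.toReal_zero] at h1
    have h2 : (P y).toReal = 0 := le_antisymm (by nlinarith) ENNReal.toReal_nonneg
    exact ((ENNReal.toReal_eq_zero_iff _).mp h2).resolve_right (dist_ne_top hP y)
  have hnpos : ∀ y, 0 < (P y).toReal → 0 < (N y).toReal := fun y hp =>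
    lt_of_lt_of_le (by positivity) (h y)
  have hrat : ∀ y, 0 < (P y).toReal → (P y).toReal / (N y).toReal ≤ κ⁻¹ := fun y hp => by
    rw [div_le_iff₀ (hnpos y hp), inv_mul_eq_div, le_div_iff₀ hκ, mul_comm]; exact h y
  have hex : ∃ y, 0 < (P y).toReal := by
    by_contra hcon
    push Not at hcon
    have h1 := dist_toReal hP
    have h2 : ∑ y, (P y).toReal ≤ 0 := Finset.sum_nonpos fun y _ => hcon y
    linarith
  by_cases ht : α = ⊤
  · subst ht
    rw [renyiD, if_neg ENNReal.top_ne_zero, if_neg ENNReal.top_ne_one, if_pos rfl,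
      ← Real.logb_inv, ← elog2_ofReal (inv_pos.mpr hκ)]
    refine elog2_mono (iSup_le fun y => ?_)
    by_cases hP0 : P y = 0
    · simp [hP0]
    have hN0 : N y ≠ 0 := fun h0 => hP0 (hac y h0)
    have hp := ENNReal.toReal_pos hP0 (dist_ne_top hP y)
    rw [← ENNReal.ofReal_toReal (dist_ne_top hP y), ← ENNReal.ofReal_toReal (hNt y),
      ← ENNReal.ofReal_div_of_pos (hnpos y hp)]
    exact ENNReal.ofReal_le_ofReal (hrat y hp)
  have ha0 : 0 < α.toReal := ENNReal.toReal_pos h0.ne' ht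
  by_cases h1 : α = 1
  · subst h1
    rw [renyiD_one_real (dist_ne_top hP) hNt hac, EReal.coe_le_coe_iff]
    calc _ ≤ ∑ y, (P y).toReal * (-Real.logb 2 κ) := by
          refine Finset.sum_le_sum fun y _ => ?_
          rcases (ENNReal.toReal_nonneg (a := P y)).eq_or_lt with hp | hp
          · rw [← hp]; simp
          rw [← Real.logb_inv]
          have := hnpos y hp
          have := Real.logb_le_logb_of_le (b := 2) (by norm_num) (by positivity) (hrat y hp)
          gcongr
      _ = _ := by rw [← Finset.sum_mul, dist_toReal hP, one_mul]
  have ha1 : α.toReal ≠ 1 := fun h => h1 ((ENNReal.toReal_eq_one_iff α).mp h)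
  set a := α.toReal with ha
  set S := ∑ y, (P y).toReal ^ a * (N y).toReal ^ (1 - a) with hS
  have hSpos : 0 < S := by
    obtain ⟨y, hp⟩ := hex
    have hn := hnpos y hp
    exact Finset.sum_pos' (fun y _ => by positivity) ⟨y, Finset.mem_univ y, by positivity⟩
  rw [renyiD_real h0 h1 ht (dist_ne_top hP) hNt (Or.inr hac) hSpos, EReal.coe_le_coe_iff, ← ha]
  have hterm : ∀ y, (P y).toReal ^ a * (N y).toReal ^ (1 - a)
      = (P y).toReal * ((P y).toReal / (N y).toReal) ^ (a - 1) := by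
    intro y
    rcases (ENNReal.toReal_nonneg (a := P y)).eq_or_lt with hp | hp
    · rw [← hp, Real.zero_rpow ha0.ne']; simp
    have hn := hnpos y hp
    rw [pq_eq' hp hn.le, show 1 - a = -(a - 1) by ring, Real.rpow_neg (by positivity),
      ← Real.inv_rpow (by positivity), inv_div]
  rcases lt_or_gt_of_ne ha1 with hlt | hgt
  · have hSge : (κ⁻¹) ^ (a - 1) ≤ S := by
      calc (κ⁻¹) ^ (a - 1) = ∑ y, (P y).toReal * (κ⁻¹) ^ (a - 1) := by
            rw [← Finset.sum_mul, dist_toReal hP, one_mul]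
        _ ≤ S := by
            refine Finset.sum_le_sum fun y _ => ?_
            rw [hterm y]
            rcases (ENNReal.toReal_nonneg (a := P y)).eq_or_lt with hp | hp
            · rw [← hp]; simp
            have hn := hnpos y hp
            refine mul_le_mul_of_nonneg_left ?_ hp.le
            exact Real.rpow_le_rpow_of_nonpos (by positivity) (hrat y hp) (by linarith)
    have h2 := Real.logb_le_logb_of_le (b := 2) (by norm_num) (by positivity) hSge
    rw [Real.logb_rpow_eq_mul_logb_of_pos (by positivity), Real.logb_inv] at h2
    have h3 : (a - 1)⁻¹ < 0 := inv_lt_zero.mpr (by linarith)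
    have h4 := mul_le_mul_of_nonpos_left h2 h3.le
    rwa [← mul_assoc, inv_mul_cancel₀ (by linarith), one_mul] at h4
  · have hSle : S ≤ (κ⁻¹) ^ (a - 1) := by
      calc S ≤ ∑ y, (P y).toReal * (κ⁻¹) ^ (a - 1) := by
            refine Finset.sum_le_sum fun y _ => ?_
            rw [hterm y]
            rcases (ENNReal.toReal_nonneg (a := P y)).eq_or_lt with hp | hp
            · rw [← hp]; simp
            have hn := hnpos y hp
            refine mul_le_mul_of_nonneg_left ?_ hp.le
            exact Real.rpow_le_rpow (by positivity) (hrat y hp) (by linarith)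
        _ = (κ⁻¹) ^ (a - 1) := by
            rw [← Finset.sum_mul, dist_toReal hP, one_mul]
    have h2 := Real.logb_le_logb_of_le (b := 2) (by norm_num) hSpos hSle
    rw [Real.logb_rpow_eq_mul_logb_of_pos (by positivity), Real.logb_inv] at h2
    have h3 : 0 < (a - 1)⁻¹ := inv_pos.mpr (by linarith)
    have h4 := mul_le_mul_of_nonneg_left h2 h3.le
    rwa [← mul_assoc, inv_mul_cancel₀ (by linarith), one_mul] at h4


lemma rpow_tangent {p A u : ℝ} (hp : 0 < p) (hp1 : p < 1) (hA : 0 ≤ A) (hu : 0 < u) :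
    A ^ p ≤ u ^ p + p * (u ^ (p - 1) * (A - u)) := by
  have h := rpow_one_add_le_one_add_mul_self (s := A / u - 1)
    (by have := div_nonneg hA hu.le; linarith) hp.le hp1.le
  have e : (1 + (A / u - 1)) = A / u := by ring
  rw [e, Real.div_rpow hA hu.le, div_le_iff₀ (by positivity)] at h
  rw [Real.rpow_sub_one hu.ne']
  have : (1 + p * (A / u - 1)) * u ^ p = u ^ p + p * (u ^ p / u * (A - u)) := by
    field_simp
  linarith

lemma minimax_var {X Y : Type*} [Fintype X] [Fintype Y] [Nonempty X]
    (v : X → Y → ℝ) (hv : ∀ x y, 0 ≤ v x y) {p : ℝ} (hp : 0 < p) (hp1 : p < 1) :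
    ∃ P : X → ℝ, (∀ x, 0 ≤ P x) ∧ ∑ x, P x = 1 ∧
      ∀ x, ∀ t : ℝ, 0 < t → t < 1 →
        ∑ y, ((1 - t) * (∑ x', P x' * v x' y) + t * v x y) ^ (p - 1) * v x y ≤
          (1 - t) ^ (p - 1) * ∑ y, (∑ x', P x' * v x' y) ^ p := by
  have hc : Continuous fun P : X → ℝ => ∑ y, (∑ x', P x' * v x' y) ^ p := by
    refine continuous_finsetSum _ fun y _ => ?_
    refine Continuous.rpow_const ?_ (fun _ => Or.inr hp.le)
    fun_prop
  obtain ⟨P, hP, hmax⟩ := (isCompact_stdSimplex ℝ X).exists_isMaxOn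
    (Set.Nonempty.of_subtype) hc.continuousOn
  refine ⟨P, hP.1, hP.2, fun x t ht ht1 => ?_⟩
  set A : Y → ℝ := fun y => ∑ x', P x' * v x' y with hAdef
  have hA : ∀ y, 0 ≤ A y := fun y => Finset.sum_nonneg fun x' _ => mul_nonneg (hP.1 x') (hv _ _)
  set P' : X → ℝ := fun x' => (1 - t) * P x' + t * (if x' = x then 1 else 0) with hP'
  have hP'm : P' ∈ stdSimplex ℝ X := by
    refine ⟨fun x' => ?_, ?_⟩
    · have := hP.1 x'
      simp only [hP']
      split_ifs <;> nlinarith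
    · simp only [hP', Finset.sum_add_distrib, ← Finset.mul_sum, hP.2]
      simp
  have hle := hmax hP'm
  simp only [Set.mem_ofPred_eq] at hle
  set u : Y → ℝ := fun y => (1 - t) * A y + t * v x y with hu
  have hA' : ∀ y, ∑ x', P' x' * v x' y = u y := by
    intro y
    simp only [hP', hu, hAdef, add_mul, Finset.sum_add_distrib, Finset.mul_sum]
    congr 1
    · exact Finset.sum_congr rfl fun _ _ => by ring
    · simp
  simp only [hA'] at hle
  have hu0 : ∀ y, 0 ≤ u y := fun y => by
    have := hA y; have := hv x y
    simp only [hu]; nlinarith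
  have htan : ∀ y, A y ^ p ≤ u y ^ p + p * (u y ^ (p - 1) * (t * (A y - v x y))) := by
    intro y
    rcases (hu0 y).eq_or_lt with h | h
    · have h1 : A y = 0 := by
        have := hA y; have := hv x y
        simp only [hu] at h
        nlinarith [mul_nonneg ht.le this]
      have h2 : v x y = 0 := by
        simp only [hu, h1] at h
        have : t * v x y = 0 := by linarith
        exact (mul_eq_zero.1 this).resolve_left ht.ne'
      rw [← h, h1, h2]; simp
    · have := rpow_tangent hp hp1 (hA y) h
      have e : A y - u y = t * (A y - v x y) := by simp only [hu]; ring
      rwa [e] at this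
  have hsum := Finset.sum_le_sum fun y (_ : y ∈ Finset.univ) => htan y
  rw [Finset.sum_add_distrib] at hsum
  have h0 : 0 ≤ ∑ y, p * (u y ^ (p - 1) * (t * (A y - v x y))) := by linarith
  have h1 : ∑ y, p * (u y ^ (p - 1) * (t * (A y - v x y)))
      = p * t * (∑ y, u y ^ (p - 1) * A y - ∑ y, u y ^ (p - 1) * v x y) := by
    rw [← Finset.sum_sub_distrib, Finset.mul_sum]
    exact Finset.sum_congr rfl fun _ _ => by ring
  rw [h1] at h0
  have h2 : ∑ y, u y ^ (p - 1) * v x y ≤ ∑ y, u y ^ (p - 1) * A y := by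
    have := nonneg_of_mul_nonneg_right h0 (mul_pos hp ht)
    linarith
  refine h2.trans ?_
  rw [Finset.mul_sum]
  refine Finset.sum_le_sum fun y _ => ?_
  rcases (hA y).eq_or_lt with h | h
  · have h' : ∑ x', P x' * v x' y = 0 := h.symm
    rw [← h, h', Real.zero_rpow hp.ne']; simp
  · have h3 : u y ^ (p - 1) ≤ ((1 - t) * A y) ^ (p - 1) := by
      apply Real.rpow_le_rpow_of_nonpos (by nlinarith) _ (by linarith)
      simp only [hu]
      have := mul_nonneg ht.le (hv x y)
      linarith
    calc u y ^ (p - 1) * A y ≤ ((1 - t) * A y) ^ (p - 1) * A y := by gcongr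
      _ = (1 - t) ^ (p - 1) * A y ^ p := by
        rw [Real.mul_rpow (by linarith) h.le, Real.rpow_sub_one h.ne', mul_assoc,
          div_mul_cancel₀ _ h.ne']

lemma minimax_real {X Y : Type*} [Fintype X] [Fintype Y] [Nonempty X]
    (v : X → Y → ℝ) (hv : ∀ x y, 0 ≤ v x y) {p : ℝ} (hp : 0 < p) (hp1 : p < 1) :
    ∃ P : X → ℝ, (∀ x, 0 ≤ P x) ∧ ∑ x, P x = 1 ∧
      (∀ x y, ∑ x', P x' * v x' y = 0 → v x y = 0) ∧
      ∀ x, ∑ y, (∑ x', P x' * v x' y) ^ (p - 1) * v x y ≤ ∑ y, (∑ x', P x' * v x' y) ^ p := by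
  obtain ⟨P, hP0, hP1, h⟩ := minimax_var v hv hp hp1
  have hA : ∀ y, 0 ≤ ∑ x', P x' * v x' y :=
    fun y => Finset.sum_nonneg fun x' _ => mul_nonneg (hP0 x') (hv _ _)
  have hsupp : ∀ x y, ∑ x', P x' * v x' y = 0 → v x y = 0 := by
    intro x y hy
    by_contra hne
    have hpos : 0 < v x y := lt_of_le_of_ne (hv x y) (Ne.symm hne)
    have hT : Tendsto (fun t : ℝ => t ^ (p - 1) * (v x y ^ (p - 1) * v x y)) (nhdsWithin 0 (Set.Ioi 0)) atTop := by
      apply Tendsto.atTop_mul_const (by positivity)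
      exact tendsto_rpow_neg_nhdsGT_zero (by linarith)
    set C : ℝ := (1 / 2 : ℝ) ^ (p - 1) * ∑ y, (∑ x', P x' * v x' y) ^ p with hC
    have e1 := hT.eventually (eventually_gt_atTop C)
    have e2 : ∀ᶠ t : ℝ in nhdsWithin 0 (Set.Ioi 0), t ∈ Set.Ioo (0:ℝ) (1/2) :=
      Ioo_mem_nhdsGT (by norm_num)
    obtain ⟨t, h1, ht0, ht1⟩ := (e1.and e2).exists
    have h2 := h x t ht0 (by linarith)
    have h3 : ((1 - t) * (∑ x', P x' * v x' y) + t * v x y) ^ (p - 1) * v x y ≤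
        ∑ y, ((1 - t) * (∑ x', P x' * v x' y) + t * v x y) ^ (p - 1) * v x y := by
      refine Finset.single_le_sum (f := fun y => ((1 - t) * (∑ x', P x' * v x' y) + t * v x y) ^ (p - 1) * v x y) (fun y _ => ?_) (Finset.mem_univ y)
      have := hA y
      have := hv x y
      have h4 : 0 ≤ (1 - t) * (∑ x', P x' * v x' y) + t * v x y := by
        have := mul_nonneg ht0.le (hv x y)
        have := mul_nonneg (show 0 ≤ 1 - t by linarith) (hA y)
        linarith
      positivity
    rw [hy, mul_zero, zero_add, Real.mul_rpow ht0.le hpos.le] at h3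
    have h5 : (1 - t) ^ (p - 1) * ∑ y, (∑ x', P x' * v x' y) ^ p ≤ C := by
      rw [hC]
      apply mul_le_mul_of_nonneg_right
      · exact Real.rpow_le_rpow_of_nonpos (by norm_num) (by linarith) (by linarith)
      · exact Finset.sum_nonneg fun y _ => Real.rpow_nonneg (hA y) _
    have := h3.trans (h2.trans h5)
    rw [mul_assoc] at this
    linarith
  refine ⟨P, hP0, hP1, hsupp, fun x => ?_⟩
  have hL : Tendsto (fun t : ℝ => ∑ y, ((1 - t) * (∑ x', P x' * v x' y) + t * v x y) ^ (p - 1) * v x y)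
      (nhdsWithin 0 (Set.Ioi 0)) (nhds (∑ y, (∑ x', P x' * v x' y) ^ (p - 1) * v x y)) := by
    refine tendsto_finsetSum _ fun y _ => ?_
    by_cases hy : ∑ x', P x' * v x' y = 0
    · simp [hsupp x y hy]
    · refine Tendsto.mul_const _ ?_
      have : ContinuousAt (fun t : ℝ => ((1 - t) * (∑ x', P x' * v x' y) + t * v x y) ^ (p - 1)) 0 := by
        apply ContinuousAt.rpow_const
        · fun_prop
        · left; simpa using hy
      have h2 := this.tendsto
      simp only [sub_zero, one_mul, zero_mul, add_zero] at h2
      exact h2.mono_left nhdsWithin_le_nhds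
  have hR : Tendsto (fun t : ℝ => (1 - t) ^ (p - 1) * ∑ y, (∑ x', P x' * v x' y) ^ p)
      (nhdsWithin 0 (Set.Ioi 0)) (nhds (∑ y, (∑ x', P x' * v x' y) ^ p)) := by
    have : ContinuousAt (fun t : ℝ => (1 - t) ^ (p - 1) * ∑ y, (∑ x', P x' * v x' y) ^ p) 0 := by
      apply ContinuousAt.mul_const
      apply ContinuousAt.rpow_const
      · fun_prop
      · left; simp
    have h2 := this.tendsto
    simp only [sub_zero, Real.one_rpow, one_mul] at h2
    exact h2.mono_left nhdsWithin_le_nhds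
  have e2 : ∀ᶠ t : ℝ in nhdsWithin 0 (Set.Ioi 0), t ∈ Set.Ioo (0:ℝ) 1 :=
      Ioo_mem_nhdsGT (by norm_num)
  exact le_of_tendsto_of_tendsto hL hR (e2.mono fun t ht => h x t ht.1 ht.2)

/-! ### Part 7: the Rényi mutual information and capacity, real formulas -/

lemma margX_joint {X Y : Type*} [Fintype X] [Fintype Y] {W : X → Y → ℝ≥0∞} (hW : IsChannel W)
    (P : X → ℝ≥0∞) (x : X) : margX (joint P W) x = P x := by
  simp only [margX, joint]
  rw [← Finset.mul_sum, hW x, mul_one]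

lemma ofReal_dist {X : Type*} [Fintype X] {P : X → ℝ} (h0 : ∀ x, 0 ≤ P x) (h1 : ∑ x, P x = 1) :
    IsDist fun x => ENNReal.ofReal (P x) := by
  rw [IsDist, ← ENNReal.ofReal_sum_of_nonneg (fun x _ => h0 x), h1, ENNReal.ofReal_one]

lemma renyiD_joint {X Y : Type*} [Fintype X] [Fintype Y] {W : X → Y → ℝ≥0∞} (hW : IsChannel W)
    {P : X → ℝ} (h0 : ∀ x, 0 ≤ P x) {β : ℝ} (hβ : 1 < β)
    {Q : Y → ℝ≥0∞} (hQ : IsDist Q)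
    (hac : ∀ y, Q y = 0 → ∑ x, P x * (W x y).toReal ^ β = 0)
    (hS : 0 < ∑ y, (∑ x, P x * (W x y).toReal ^ β) * (Q y).toReal ^ (1 - β)) :
    renyiD (ENNReal.ofReal β) (joint (fun x => ENNReal.ofReal (P x)) W)
      (fun p => margX (joint (fun x => ENNReal.ofReal (P x)) W) p.1 * Q p.2) =
      (((β - 1)⁻¹ * Real.logb 2
        (∑ y, (∑ x, P x * (W x y).toReal ^ β) * (Q y).toReal ^ (1 - β)) : ℝ) : EReal) := by
  have hβ0 : 0 < β := by linarith
  have hr : (ENNReal.ofReal β).toReal = β := ENNReal.toReal_ofReal hβ0.le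
  simp only [margX_joint hW]
  have hsum : ∑ y : X × Y, (joint (fun x => ENNReal.ofReal (P x)) W y).toReal ^ β *
      (ENNReal.ofReal (P y.1) * Q y.2).toReal ^ (1 - β)
      = ∑ y, (∑ x, P x * (W x y).toReal ^ β) * (Q y).toReal ^ (1 - β) := by
    rw [Fintype.sum_prod_type_right]
    refine Finset.sum_congr rfl fun y _ => ?_
    rw [Finset.sum_mul]
    refine Finset.sum_congr rfl fun x _ => ?_
    simp only [joint, ENNReal.toReal_mul, ENNReal.toReal_ofReal (h0 x)]
    rcases (h0 x).eq_or_lt with h | h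
    · rw [← h]; simp [Real.zero_rpow hβ0.ne']
    · rw [Real.mul_rpow h.le (by positivity), Real.mul_rpow h.le (by positivity)]
      have : P x ^ β * P x ^ (1 - β) = P x := by
        rw [← Real.rpow_add h]; simp
      linear_combination ((W x y).toReal ^ β * (Q y).toReal ^ (1 - β)) * this
  rw [renyiD_real, hr, hsum]
  · simpa using hβ0
  · intro h
    have := congrArg ENNReal.toReal h
    rw [hr] at this; simp at this; linarith
  · exact ENNReal.ofReal_ne_top
  · exact fun p => ENNReal.mul_ne_top ENNReal.ofReal_ne_top (dist_ne_top (hW _) _)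
  · exact fun p => ENNReal.mul_ne_top ENNReal.ofReal_ne_top (dist_ne_top hQ _)
  · right
    rintro ⟨x, y⟩ h
    rcases mul_eq_zero.1 h with h | h
    · simp [joint, h]
    · have h1 := hac y h
      rw [Finset.sum_eq_zero_iff_of_nonneg (fun x _ => mul_nonneg (h0 x) (by positivity))] at h1
      have h2 := h1 x (Finset.mem_univ x)
      rcases mul_eq_zero.1 h2 with h3 | h3
      · simp [joint, h3]
      · rw [Real.rpow_eq_zero_iff_of_nonneg (by positivity)] at h3
        have : W x y = 0 := by
          rcases (ENNReal.toReal_eq_zero_iff _).1 h3.1 with h | h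
          · exact h
          · exact absurd h (dist_ne_top (hW x) y)
        simp [joint, this]
  · rw [hr, hsum]; exact hS

lemma sumA_pos {X Y : Type*} [Fintype X] [Fintype Y] {W : X → Y → ℝ≥0∞} (hW : IsChannel W)
    {P : X → ℝ} (h0 : ∀ x, 0 ≤ P x) (h1 : ∑ x, P x = 1) {β : ℝ} :
    ∃ y, 0 < ∑ x, P x * (W x y).toReal ^ β := by
  by_contra hcon
  push Not at hcon
  have hz : ∀ x y, P x * (W x y).toReal ^ β = 0 := by
    intro x y
    have hn : ∀ x ∈ Finset.univ, 0 ≤ P x * (W x y).toReal ^ β :=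
      fun x _ => mul_nonneg (h0 x) (by positivity)
    have := (Finset.sum_eq_zero_iff_of_nonneg hn).1
      (le_antisymm (hcon y) (Finset.sum_nonneg hn))
    exact this x (Finset.mem_univ x)
  have hx : ∃ x, P x ≠ 0 := by
    by_contra h
    push Not at h
    simp [h] at h1
  obtain ⟨x, hx⟩ := hx
  have hw : ∀ y, (W x y).toReal = 0 := fun y => by
    have := (mul_eq_zero.1 (hz x y)).resolve_left hx
    by_contra hne
    have hp : 0 < (W x y).toReal := lt_of_le_of_ne (by positivity) (Ne.symm hne)
    have := Real.rpow_pos_of_pos hp β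
    linarith
  have := dist_toReal (hW x)
  simp [hw] at this

/-- value of the Rényi mutual information (Sibson's identity) -/
lemma sibson {X Y : Type*} [Fintype X] [Fintype Y] {W : X → Y → ℝ≥0∞} (hW : IsChannel W)
    {P : X → ℝ} (h0 : ∀ x, 0 ≤ P x) (h1 : ∑ x, P x = 1) {β : ℝ} (hβ : 1 < β) :
    renyiMI (ENNReal.ofReal β) (joint (fun x => ENNReal.ofReal (P x)) W) =
      ((β / (β - 1) * Real.logb 2 (∑ y, (∑ x, P x * (W x y).toReal ^ β) ^ (1 / β)) : ℝ) : EReal) := by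
  have hβ0 : 0 < β := by linarith
  set A : Y → ℝ := fun y => ∑ x, P x * (W x y).toReal ^ β with hA
  have hA0 : ∀ y, 0 ≤ A y := fun y =>
    Finset.sum_nonneg fun x _ => mul_nonneg (h0 x) (by positivity)
  obtain ⟨y0, hy0⟩ : ∃ y, 0 < A y := sumA_pos hW h0 h1
  set F : ℝ := ∑ y, A y ^ (1 / β) with hF
  have hFpos : 0 < F := Finset.sum_pos' (fun y _ => Real.rpow_nonneg (hA0 y) _)
    ⟨y0, Finset.mem_univ _, Real.rpow_pos_of_pos hy0 _⟩
  have hβ1 : 0 < β - 1 := by linarith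
  have hlogF : β / (β - 1) * Real.logb 2 F = (β - 1)⁻¹ * Real.logb 2 (F ^ β) := by
    rw [Real.logb_rpow_eq_mul_logb_of_pos hFpos]; ring
  rw [hlogF]
  apply le_antisymm
  · have hq0 : ∀ y, 0 ≤ A y ^ (1 / β) / F := fun y => div_nonneg (Real.rpow_nonneg (hA0 y) _) hFpos.le
    have hq1 : ∑ y, A y ^ (1 / β) / F = 1 := by
      rw [← Finset.sum_div, ← hF, div_self hFpos.ne']
    refine (iInf_le _ ⟨_, ofReal_dist hq0 hq1⟩).trans ?_
    have hS : ∑ y, A y * (ENNReal.ofReal (A y ^ (1 / β) / F)).toReal ^ (1 - β) = F ^ β := by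
      have : ∀ y, A y * (ENNReal.ofReal (A y ^ (1 / β) / F)).toReal ^ (1 - β)
          = A y ^ (1 / β) * F ^ (β - 1) := by
        intro y
        rw [ENNReal.toReal_ofReal (hq0 y)]
        rcases (hA0 y).eq_or_lt with h | h
        · rw [← h, Real.zero_rpow (by positivity)]; simp
        · rw [Real.div_rpow (by positivity) hFpos.le, ← Real.rpow_mul h.le,
            show F ^ (1 - β) = (F ^ (β - 1))⁻¹ by rw [← Real.rpow_neg hFpos.le]; congr 1; ring,
            div_inv_eq_mul, ← mul_assoc]
          congr 1
          conv_lhs => rw [← Real.rpow_one (A y)]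
          rw [Real.rpow_one, ← Real.rpow_one_add' h.le]
          · congr 1; field_simp; ring
          · have : (1:ℝ) + 1 / β * (1 - β) = 1 / β := by field_simp; ring
            rw [this]; positivity
      simp only [this]
      rw [← Finset.sum_mul, ← hF, Real.rpow_sub_one hFpos.ne']
      field_simp
    have hd := renyiD_joint hW h0 hβ (ofReal_dist hq0 hq1) (fun y hy => ?_) ?_
    · rw [hd]
      have hS' : ∑ y, (∑ x, P x * (W x y).toReal ^ β) * (ENNReal.ofReal (A y ^ (1 / β) / F)).toReal ^ (1 - β) = F ^ β := hS
      rw [hS']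
    · have h2 : A y ^ (1 / β) / F ≤ 0 := by simpa using hy
      by_contra hne
      have hp : 0 < A y := lt_of_le_of_ne (hA0 y) (Ne.symm hne)
      have : 0 < A y ^ (1 / β) / F := by positivity
      linarith
    · have hS' : ∑ y, (∑ x, P x * (W x y).toReal ^ β) * (ENNReal.ofReal (A y ^ (1 / β) / F)).toReal ^ (1 - β) = F ^ β := hS
      rw [hS']; positivity
  · refine le_iInf fun Q => ?_
    obtain ⟨Q, hQ⟩ := Q
    simp only
    by_cases hac : ∀ y, Q y = 0 → A y = 0
    · have hq : ∑ y, (Q y).toReal = 1 := dist_toReal hQ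
      have hH : F ^ β ≤ ∑ y, A y * (Q y).toReal ^ (1 - β) := by
        have hJ := Real.rpow_arith_mean_le_arith_mean_rpow Finset.univ (fun y => (Q y).toReal)
          (fun y => A y ^ (1 / β) / (Q y).toReal) (fun y _ => by positivity) hq
          (fun y _ => div_nonneg (Real.rpow_nonneg (hA0 y) _) (by positivity)) hβ.le
        have hz : ∀ y, (Q y).toReal = 0 → A y = 0 := fun y hy => by
          rcases (ENNReal.toReal_eq_zero_iff _).1 hy with h | h
          · exact hac y h
          · exact absurd h (dist_ne_top hQ y)
        have e1 : ∑ y, (Q y).toReal * (A y ^ (1 / β) / (Q y).toReal) = F := by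
          refine Finset.sum_congr rfl fun y _ => ?_
          by_cases hy : (Q y).toReal = 0
          · rw [hy, hz y hy, Real.zero_rpow (by positivity)]; simp
          · field_simp
        rw [e1] at hJ
        refine hJ.trans (le_of_eq (Finset.sum_congr rfl fun y _ => ?_))
        by_cases hy : (Q y).toReal = 0
        · rw [hy, hz y hy]; simp
        · have hq' : 0 < (Q y).toReal := lt_of_le_of_ne (by positivity) (Ne.symm hy)
          rw [Real.div_rpow (Real.rpow_nonneg (hA0 y) _) hq'.le, ← Real.rpow_mul (hA0 y),
            one_div_mul_cancel hβ0.ne', Real.rpow_one, Real.rpow_sub hq', Real.rpow_one]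
          ring
      have hpos : 0 < F ^ β := by positivity
      rw [renyiD_joint hW h0 hβ hQ hac (lt_of_lt_of_le hpos hH)]
      norm_cast
      apply mul_le_mul_of_nonneg_left _ (by positivity)
      exact Real.logb_le_logb_of_le (by norm_num) hpos hH
    · rw [renyiD_top_of_not_ac]
      · exact le_top
      · simpa using hβ.le
      · exact ENNReal.ofReal_ne_top
      · exact fun p => ENNReal.mul_ne_top ENNReal.ofReal_ne_top (dist_ne_top (hW _) _)
      · intro p
        rw [margX_joint hW]
        exact ENNReal.mul_ne_top ENNReal.ofReal_ne_top (dist_ne_top hQ _)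
      · intro hcon
        apply hac
        intro y hy
        refine Finset.sum_eq_zero fun x _ => ?_
        have := hcon (x, y) (by simp [hy])
        simp only [joint] at this
        have h2 := congrArg ENNReal.toReal this
        rw [ENNReal.toReal_mul, ENNReal.toReal_ofReal (h0 x), ENNReal.toReal_zero] at h2
        rcases mul_eq_zero.1 h2 with h | h
        · rw [h, zero_mul]
        · rw [h, Real.zero_rpow hβ0.ne', mul_zero]

/-- optimal output distribution for the Rényi capacity -/
lemma cap_lower {X Y : Type*} [Fintype X] [Fintype Y] [Nonempty X] {W : X → Y → ℝ≥0∞}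
    (hW : IsChannel W) {β : ℝ} (hβ : 1 < β) :
    ∃ (q : Y → ℝ) (F : ℝ), 0 < F ∧ (∀ y, 0 ≤ q y) ∧ ∑ y, q y = 1 ∧
      (∀ x y, 0 < (W x y).toReal → 0 < q y) ∧
      (∀ x, ∑ y, (W x y).toReal ^ β * q y ^ (1 - β) ≤ F ^ β) ∧
      ((β / (β - 1) * Real.logb 2 F : ℝ) : EReal) ≤ renyiCap (ENNReal.ofReal β) W := by
  have hβ0 : 0 < β := by linarith
  obtain ⟨P, h0, h1, hsupp, hopt⟩ := minimax_real (fun x y => (W x y).toReal ^ β)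
    (fun x y => by positivity) (p := 1 / β) (by positivity) (by rw [div_lt_one hβ0]; exact hβ)
  set A : Y → ℝ := fun y => ∑ x, P x * (W x y).toReal ^ β with hA
  have hA0 : ∀ y, 0 ≤ A y := fun y =>
    Finset.sum_nonneg fun x _ => mul_nonneg (h0 x) (by positivity)
  obtain ⟨y0, hy0⟩ : ∃ y, 0 < A y := sumA_pos hW h0 h1
  set F : ℝ := ∑ y, A y ^ (1 / β) with hF
  have hFpos : 0 < F := Finset.sum_pos' (fun y _ => Real.rpow_nonneg (hA0 y) _)
    ⟨y0, Finset.mem_univ _, Real.rpow_pos_of_pos hy0 _⟩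
  refine ⟨fun y => A y ^ (1 / β) / F, F, hFpos,
    fun y => div_nonneg (Real.rpow_nonneg (hA0 y) _) hFpos.le, ?_, ?_, ?_, ?_⟩
  · rw [← Finset.sum_div, ← hF, div_self hFpos.ne']
  · intro x y hxy
    have : A y ≠ 0 := fun h => by
      have := hsupp x y h
      have := Real.rpow_pos_of_pos hxy β
      linarith
    have hp : 0 < A y := lt_of_le_of_ne (hA0 y) (Ne.symm this)
    positivity
  · intro x
    have e : ∀ y, (W x y).toReal ^ β * (A y ^ (1 / β) / F) ^ (1 - β)
        = F ^ (β - 1) * (A y ^ (1 / β - 1) * (W x y).toReal ^ β) := by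
      intro y
      rw [Real.div_rpow (Real.rpow_nonneg (hA0 y) _) hFpos.le, ← Real.rpow_mul (hA0 y),
            show F ^ (1 - β) = (F ^ (β - 1))⁻¹ by rw [← Real.rpow_neg hFpos.le]; congr 1; ring,
            div_inv_eq_mul, show 1 / β * (1 - β) = 1 / β - 1 by field_simp]
      ring
    simp only [e]
    rw [← Finset.mul_sum]
    calc _ ≤ F ^ (β - 1) * F := by
          apply mul_le_mul_of_nonneg_left (hopt x) (by positivity)
      _ = F ^ β := by rw [Real.rpow_sub_one hFpos.ne']; field_simp
  · have := sibson hW h0 h1 hβ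
    rw [← this]
    exact le_iSup (fun P : {P : X → ℝ≥0∞ // IsDist P} => renyiMI (ENNReal.ofReal β) (joint P.1 W))
      ⟨_, ofReal_dist h0 h1⟩

/-! `I_∞` -/

/-- Normalizer for the maximal output vector. -/
def Zmax {X Y : Type*} [Fintype X] [Fintype Y] (W : X → Y → ℝ≥0∞) : ℝ≥0∞ := ∑ y, ⨆ x, W x y

lemma W_le_one {X Y : Type*} [Fintype X] [Fintype Y] {W : X → Y → ℝ≥0∞}
    (hW : IsChannel W) (x : X) (y : Y) : W x y ≤ 1 := by
  rw [← hW x]; exact Finset.single_le_sum (fun _ _ => zero_le) (Finset.mem_univ y)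

lemma one_le_Zmax {X Y : Type*} [Fintype X] [Fintype Y] [Nonempty X] {W : X → Y → ℝ≥0∞}
    (hW : IsChannel W) : 1 ≤ Zmax W := by
  obtain ⟨x⟩ := ‹Nonempty X›
  rw [← hW x]
  exact Finset.sum_le_sum fun y _ => le_iSup (fun x => W x y) x

lemma Zmax_ne_top {X Y : Type*} [Fintype X] [Fintype Y] {W : X → Y → ℝ≥0∞}
    (hW : IsChannel W) : Zmax W ≠ ⊤ := by
  rw [Zmax, ENNReal.sum_ne_top]
  intro y _
  exact ((iSup_le fun x => W_le_one hW x y).trans_lt ENNReal.one_lt_top).ne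

lemma renyiD_top_eq {Y : Type*} [Fintype Y] (P Q : Y → ℝ≥0∞) :
    renyiD ⊤ P Q = elog2 (⨆ x, P x / Q x) := by
  rw [renyiD, if_neg (by simp), if_neg (by simp), if_pos rfl]

lemma cap_top {X Y : Type*} [Fintype X] [Fintype Y] [Nonempty X] {W : X → Y → ℝ≥0∞}
    (hW : IsChannel W) : renyiCap ⊤ W = elog2 (Zmax W) := by
  have hZ0 : Zmax W ≠ 0 := (lt_of_lt_of_le one_pos (one_le_Zmax hW)).ne'
  have hZt := Zmax_ne_top hW
  apply le_antisymm
  · refine iSup_le fun P => ?_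
    obtain ⟨P, hP⟩ := P
    have hd : IsDist fun y => (⨆ x, W x y) / Zmax W := by
      rw [IsDist]
      simp only [div_eq_mul_inv]
      rw [← Finset.sum_mul]
      exact ENNReal.mul_inv_cancel hZ0 hZt
    refine (iInf_le _ ⟨_, hd⟩).trans ?_
    rw [renyiD_top_eq]
    apply elog2_mono
    refine iSup_le fun p => ?_
    simp only [margX_joint hW, joint]
    apply ENNReal.div_le_of_le_mul
    have h1 : W p.1 p.2 ≤ ⨆ x, W x p.2 := le_iSup (fun x => W x p.2) p.1
    calc P p.1 * W p.1 p.2 ≤ P p.1 * ⨆ x, W x p.2 := by gcongr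
      _ = Zmax W * (P p.1 * ((⨆ x, W x p.2) / Zmax W)) := by
        rw [mul_left_comm, ENNReal.mul_div_cancel hZ0 hZt]
  · have hX : (Fintype.card X : ℝ≥0∞) ≠ 0 := by simp
    have hXt : (Fintype.card X : ℝ≥0∞) ≠ ⊤ := by simp
    have hu : IsDist fun _ : X => (Fintype.card X : ℝ≥0∞)⁻¹ := by
      simp [IsDist, ENNReal.mul_inv_cancel hX hXt]
    refine le_trans ?_ (le_iSup (fun P : {P : X → ℝ≥0∞ // IsDist P} => renyiMI ⊤ (joint P.1 W)) ⟨_, hu⟩)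
    refine le_iInf fun Q => ?_
    obtain ⟨Q, hQ⟩ := Q
    rw [renyiD_top_eq]
    apply elog2_mono
    simp only [margX_joint hW, joint]
    set S := ⨆ x : X × Y, (Fintype.card X : ℝ≥0∞)⁻¹ * W x.1 x.2 / ((Fintype.card X : ℝ≥0∞)⁻¹ * Q x.2) with hS
    by_cases hSt : S = ⊤
    · rw [hSt]; exact le_top
    have key : ∀ x y, W x y ≤ S * Q y := by
      intro x y
      have h1 : (Fintype.card X : ℝ≥0∞)⁻¹ * W x y / ((Fintype.card X : ℝ≥0∞)⁻¹ * Q y) ≤ S :=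
        le_iSup (fun x : X × Y => (Fintype.card X : ℝ≥0∞)⁻¹ * W x.1 x.2 / ((Fintype.card X : ℝ≥0∞)⁻¹ * Q x.2)) (x, y)
      rw [ENNReal.mul_div_mul_left _ _ (by simpa using hXt) (by simpa using hX)] at h1
      by_cases hq : Q y = 0
      · by_cases hw : W x y = 0
        · simp [hw]
        · rw [hq, ENNReal.div_zero hw] at h1
          exact absurd (top_le_iff.1 h1) hSt
      · rwa [ENNReal.div_le_iff hq (dist_ne_top hQ y)] at h1
    calc Zmax W ≤ ∑ y, S * Q y := Finset.sum_le_sum fun y _ => iSup_le fun x => key x y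
      _ = S := by rw [← Finset.mul_sum, hQ, mul_one]

lemma cap_top_real {X Y : Type*} [Fintype X] [Fintype Y] [Nonempty X] {W : X → Y → ℝ≥0∞}
    (hW : IsChannel W) : renyiCap ⊤ W = ((Real.logb 2 (Zmax W).toReal : ℝ) : EReal) := by
  have hZ0 : Zmax W ≠ 0 := (lt_of_lt_of_le one_pos (one_le_Zmax hW)).ne'
  rw [cap_top hW, elog2, if_neg hZ0, if_neg (Zmax_ne_top hW)]

/-! ### Part 8: achievability -/

lemma prodCh_channel {X Y : Type*} [Fintype X] [Fintype Y] {W : X → Y → ℝ≥0∞} (hW : IsChannel W)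
    (n : ℕ) : IsChannel (prodCh n W) := by
  intro x
  simp only [prodCh]
  rw [← Fintype.prod_sum (fun i y => W (x i) y)]
  simp [hW _]

lemma prodCh_toReal {X Y : Type*} [Fintype X] [Fintype Y] (W : X → Y → ℝ≥0∞) (n : ℕ)
    (x : Fin n → X) (y : Fin n → Y) :
    (prodCh n W x y).toReal = ∏ i, (W (x i) (y i)).toReal := by
  simp only [prodCh, ENNReal.toReal_prod]

/-- message number -/
def mseq (r : ℝ) (n : ℕ) : ℕ := ⌈(n : ℝ) ^ 2 * 2 ^ (n * r)⌉₊ + 1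

lemma mseq_rate {r : ℝ} (hr : 0 ≤ r) : RateOK r fun n => Real.logb 2 (mseq r n) := by
  have hm1 : ∀ n, (1 : ℝ) ≤ mseq r n := fun n => by simp [mseq]
  refine ⟨fun n => Real.logb_nonneg (by norm_num) (hm1 n), ?_⟩
  have hT : Tendsto (fun n : ℕ => r + 2 / Real.log 2 * (Real.log (n + 2) / n)) atTop (nhds r) := by
    have h1 := Real.tendsto_pow_log_div_mul_add_atTop 1 (-2) 1 one_ne_zero
    have h2 : Tendsto (fun n : ℕ => (n : ℝ) + 2) atTop atTop :=
      tendsto_atTop_add_const_right _ _ tendsto_natCast_atTop_atTop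
    have h3 := h1.comp h2
    have h4 := (h3.const_mul (2 / Real.log 2)).const_add r
    rw [mul_zero, add_zero] at h4
    refine h4.congr fun n => ?_
    simp only [Function.comp, pow_one]
    congr 4; ring
  have hT' : Tendsto (fun n : ℕ => ((r + 2 / Real.log 2 * (Real.log (n + 2) / n) : ℝ) : EReal)) atTop
      (nhds (r : EReal)) := (continuous_coe_real_ereal.tendsto r).comp hT
  rw [← hT'.limsup_eq]
  refine limsup_le_limsup ?_
  filter_upwards [eventually_ge_atTop 1] with n hn
  have hn0 : (0 : ℝ) < n := by exact_mod_cast hn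
  norm_cast
  rw [div_le_iff₀ hn0]
  have hl : (1 : ℝ) ≤ 2 ^ (n * r) := Real.one_le_rpow (by norm_num) (by positivity)
  have hm : (mseq r n : ℝ) ≤ (n + 2) ^ 2 * 2 ^ (n * r) := by
    have := Nat.ceil_lt_add_one (show 0 ≤ (n : ℝ) ^ 2 * 2 ^ (n * r) by positivity)
    have e : (mseq r n : ℝ) = (⌈(n : ℝ) ^ 2 * 2 ^ (n * r)⌉₊ : ℝ) + 1 := by simp [mseq]
    rw [e]
    nlinarith
  have h5 := Real.logb_le_logb_of_le (b := 2) (by norm_num) (by linarith [hm1 n]) hm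
  have h6 : Real.logb 2 (((n : ℝ) + 2) ^ 2 * 2 ^ (n * r)) = 2 * Real.log (n + 2) / Real.log 2 + n * r := by
    rw [Real.logb_mul (by positivity) (by positivity), Real.logb_rpow (by norm_num) (by norm_num),
      Real.logb, Real.log_pow]
    push_cast; ring
  rw [h6] at h5
  have h7 : (r + 2 / Real.log 2 * (Real.log (n + 2) / n)) * n
      = 2 * Real.log (n + 2) / Real.log 2 + n * r := by
    field_simp; ring
  push_cast at h7 ⊢
  rw [h7]; exact h5

lemma ach_sim {X Y : Type*} [Fintype X] [Fintype Y] {W : X → Y → ℝ≥0∞} (hW : IsChannel W)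
    {q : Y → ℝ} (hq0 : ∀ y, 0 ≤ q y) (hq1 : ∑ y, q y = 1) {r : ℝ} (hr : 0 ≤ r) (n : ℕ) :
    ∃ N : (Fin n → X) → (Fin n → Y) → ℝ≥0∞, IsSimulation (Real.logb 2 (mseq r n)) N ∧
      ∀ x y, (1 - Real.exp (-(n : ℝ) ^ 2)) *
        min (prodCh n W x y).toReal (2 ^ (n * r) * ∏ i, q (y i)) ≤ (N x y).toReal := by
  have hl : (1 : ℝ) ≤ 2 ^ (n * r) := Real.one_le_rpow (by norm_num) (by positivity)
  set L : ℝ := 2 ^ (n * r) with hL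
  have hL0 : 0 < L := by linarith
  have hQ : IsDist fun y : Fin n → Y => ENNReal.ofReal (∏ i, q (y i)) := by
    apply ofReal_dist
    · exact fun y => Finset.prod_nonneg fun i _ => hq0 _
    · rw [← Fintype.prod_sum (fun (_ : Fin n) y => q y)]; simp [hq1]
  have hV1 : ∀ x, ∑ y, min (prodCh n W x y) (ENNReal.ofReal L * ENNReal.ofReal (∏ i, q (y i))) ≤ 1 := by
    intro x
    rw [← prodCh_channel hW n x]
    exact Finset.sum_le_sum fun y _ => min_le_left _ _
  obtain ⟨N, hN, hN'⟩ := reject hQ (l := ENNReal.ofReal L) (by simpa using hl) ENNReal.ofReal_ne_top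
    (V := fun x y => min (prodCh n W x y) (ENNReal.ofReal L * ENNReal.ofReal (∏ i, q (y i))))
    (fun x y => min_le_right _ _) hV1 (m := mseq r n) (by simp [mseq])
  refine ⟨N, hN, fun x y => ?_⟩
  have h1 : ENNReal.ofReal (1 - Real.exp (-(n : ℝ) ^ 2)) ≤ 1 - (1 - (ENNReal.ofReal L)⁻¹) ^ mseq r n := by
    have e1 : (1 - (ENNReal.ofReal L)⁻¹) ^ mseq r n = ENNReal.ofReal ((1 - L⁻¹) ^ mseq r n) := by
      rw [← ENNReal.ofReal_inv_of_pos hL0, ← ENNReal.ofReal_one,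
        ← ENNReal.ofReal_sub _ (by positivity), ENNReal.ofReal_pow]
      have := inv_le_one_of_one_le₀ hl
      linarith
    have hinv := inv_le_one_of_one_le₀ hl
    rw [e1, ← ENNReal.ofReal_one, ← ENNReal.ofReal_sub _ (pow_nonneg (by linarith) _)]
    apply ENNReal.ofReal_le_ofReal
    have h2 : (1 - L⁻¹) ^ mseq r n ≤ Real.exp (-(n : ℝ) ^ 2) := by
      calc (1 - L⁻¹) ^ mseq r n ≤ (Real.exp (-L⁻¹)) ^ mseq r n := by
            apply pow_le_pow_left₀ (by linarith)
            exact Real.one_sub_le_exp_neg _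
        _ = Real.exp (-(L⁻¹ * mseq r n)) := by rw [← Real.exp_nat_mul]; congr 1; ring
        _ ≤ _ := by
            apply Real.exp_le_exp.2
            have h3 : (n : ℝ) ^ 2 * L ≤ mseq r n := by
              simp only [mseq]; push_cast
              have := Nat.le_ceil ((n : ℝ) ^ 2 * 2 ^ (n * r))
              linarith
            have : (n : ℝ) ^ 2 ≤ L⁻¹ * mseq r n := by
              rw [inv_mul_eq_div, le_div_iff₀ hL0]; exact h3
            linarith
    linarith
  have h2 : ENNReal.ofReal (1 - Real.exp (-(n : ℝ) ^ 2)) * min (prodCh n W x y) (ENNReal.ofReal L * ENNReal.ofReal (∏ i, q (y i))) ≤ N x y :=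
    (mul_le_mul_left h1 _).trans (hN' x y)
  have h3 := ENNReal.toReal_mono (dist_ne_top (sim_sum hN x) y) h2
  have hpq : 0 ≤ ∏ i, q (y i) := Finset.prod_nonneg fun i _ => hq0 _
  rw [ENNReal.toReal_mul, ENNReal.toReal_ofReal (by
      have : Real.exp (-(n : ℝ) ^ 2) ≤ 1 := Real.exp_le_one_iff.2 (by nlinarith [sq_nonneg (n : ℝ)])
      linarith), ENNReal.toReal_min (dist_ne_top (prodCh_channel hW n x) y)
      (ENNReal.mul_ne_top ENNReal.ofReal_ne_top ENNReal.ofReal_ne_top), ENNReal.toReal_mul,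
      ENNReal.toReal_ofReal hL0.le, ENNReal.toReal_ofReal hpq] at h3
  exact h3

lemma simD_le {X Y : Type*} [Fintype X] [Fintype Y] {α : ℝ≥0∞} {W N : X → Y → ℝ≥0∞} {c : ℝ} {B : EReal}
    (hN : IsSimulation c N) (h : ∀ x, renyiD α (W x) (N x) ≤ B) : simD α W c ≤ B :=
  (iInf_le (fun N : {N : X → Y → ℝ≥0∞ // IsSimulation c N} => chD α W N.1) ⟨N, hN⟩).trans
    (iSup_le h)

lemma exp_neg_sq_le {n : ℕ} {E : ℝ} (hn : 1 ≤ n) (hE : E ≤ n) :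
    Real.exp (-(n : ℝ) ^ 2) ≤ 2 ^ (-(n * E)) := by
  rw [Real.rpow_def_of_pos (by norm_num)]
  apply Real.exp_le_exp.2
  have h1 : (1 : ℝ) ≤ n := by exact_mod_cast hn
  have h2 : Real.log 2 ≤ 1 := by have := Real.log_two_lt_d9; linarith
  have h3 : 0 < Real.log 2 := Real.log_pos (by norm_num)
  have h4 : Real.log 2 * E ≤ n := by
    rcases le_or_gt E 0 with h | h
    · nlinarith
    · nlinarith
  nlinarith

lemma exp_neg_sq_half {n : ℕ} (hn : 1 ≤ n) : Real.exp (-(n : ℝ) ^ 2) ≤ 1 / 2 := by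
  have := exp_neg_sq_le (E := 1) hn (by exact_mod_cast hn)
  refine this.trans ?_
  calc (2 : ℝ) ^ (-((n : ℝ) * 1)) ≤ 2 ^ (-1 : ℝ) := by
        apply Real.rpow_le_rpow_of_exponent_le (by norm_num)
        have : (1 : ℝ) ≤ n := by exact_mod_cast hn
        linarith
    _ = 1 / 2 := by rw [Real.rpow_neg_one]; norm_num

lemma ach_beta {X Y : Type*} [Fintype X] [Fintype Y] [Nonempty X] {W : X → Y → ℝ≥0∞}
    (hW : IsChannel W) {α : ℝ≥0∞} (h0 : 0 < α) (ht : α ≠ ⊤) {β : ℝ} (hβ : 1 < β)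
    (hαβ : α.toReal ≤ β) {r : ℝ} (hr : 0 ≤ r) {q : Y → ℝ} {F : ℝ} (hF : 0 < F)
    (hq0 : ∀ y, 0 ≤ q y) (hq1 : ∑ y, q y = 1) (hsupp : ∀ x y, 0 < (W x y).toReal → 0 < q y)
    (hbd : ∀ x, ∑ y, (W x y).toReal ^ β * q y ^ (1 - β) ≤ F ^ β)
    (hE : 0 < (β - 1) * r - β * Real.logb 2 F) :
    (((β - 1) * r - β * Real.logb 2 F : ℝ) : EReal) ≤ Erf α W r := by
  set E := (β - 1) * r - β * Real.logb 2 F with hEdef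
  obtain ⟨C, hC, hup⟩ := renyi_upper (α := α) h0 ht hβ hαβ
  refine le_Erf_of (mseq_rate hr) (C := 2 * C) (by positivity) ?_
  have hev : ∀ᶠ n : ℕ in atTop, 1 / E ≤ n := by
    exact tendsto_natCast_atTop_atTop.eventually (eventually_ge_atTop (1 / E))
  have hev2 : ∀ᶠ n : ℕ in atTop, E ≤ n := by
    exact tendsto_natCast_atTop_atTop.eventually (eventually_ge_atTop E)
  filter_upwards [eventually_ge_atTop 1, hev, hev2] with n hn hnE hnE2
  obtain ⟨N, hN, hNb⟩ := ach_sim hW hq0 hq1 hr n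
  refine simD_le hN fun x => ?_
  have hexp := exp_neg_sq_half hn
  have hexp2 := exp_neg_sq_le hn hnE2
  have hε : (2 : ℝ) ^ (-(n * E)) ≤ 1 / 2 := by
    calc (2 : ℝ) ^ (-((n : ℝ) * E)) ≤ 2 ^ (-1 : ℝ) := by
          apply Real.rpow_le_rpow_of_exponent_le (by norm_num)
          rw [div_le_iff₀ hE] at hnE
          linarith
      _ = 1 / 2 := by rw [Real.rpow_neg_one]; norm_num
  have hres := hup (Fin n → Y) (prodCh n W x) (N x) (fun y => ∏ i, q (y i)) (2 ^ (n * r))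
    (1 - Real.exp (-(n : ℝ) ^ 2)) (2 ^ (-(n * E))) (by positivity) (by linarith)
    (by linarith [Real.exp_pos (-(n : ℝ) ^ 2)]) (by positivity) hε (prodCh_channel hW n x)
    (fun y => dist_ne_top (sim_sum hN x) y) ?_ ?_ (hNb x)
  · refine hres.trans ?_
    norm_cast
    push_cast
    have : 1 - (1 - Real.exp (-(n : ℝ) ^ 2)) + 2 ^ (-(n * E)) ≤ 2 * 2 ^ (-(n * E)) := by linarith
    calc _ ≤ C * (2 * 2 ^ (-(n * E))) := by gcongr
      _ = _ := by ring
  · intro y hy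
    rw [prodCh_toReal] at hy
    apply Finset.prod_pos
    intro i hi
    apply hsupp (x i)
    refine lt_of_le_of_ne ENNReal.toReal_nonneg fun h => ?_
    rw [Finset.prod_eq_zero hi h.symm] at hy
    exact lt_irrefl _ hy
  · have hterm : ∀ y : Fin n → Y, (prodCh n W x y).toReal *
        ((prodCh n W x y).toReal / (2 ^ (n * r) * ∏ i, q (y i))) ^ (β - 1)
        = 2 ^ (-(n * r * (β - 1))) * ∏ i, ((W (x i) (y i)).toReal ^ β * q (y i) ^ (1 - β)) := by
      intro y
      rw [prodCh_toReal, Finset.prod_mul_distrib]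
      have hp : 0 ≤ ∏ i, (W (x i) (y i)).toReal := Finset.prod_nonneg fun _ _ => ENNReal.toReal_nonneg
      have hqp : 0 ≤ ∏ i, q (y i) := Finset.prod_nonneg fun _ _ => hq0 _
      rw [Real.finsetProd_rpow _ _ (fun _ _ => ENNReal.toReal_nonneg),
        Real.finsetProd_rpow _ _ (fun _ _ => hq0 _), Real.div_rpow hp (by positivity),
        Real.mul_rpow (by positivity) hqp, ← Real.rpow_mul (by norm_num)]
      rw [Real.rpow_neg (by norm_num), show 1 - β = -(β - 1) by ring, Real.rpow_neg hqp]
      rcases hp.eq_or_lt with h | h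
      · rw [← h, Real.zero_rpow (by linarith : β ≠ 0)]; simp
      · rw [Real.rpow_sub_one h.ne' β]
        field_simp
    simp only [hterm]
    rw [← Finset.mul_sum, ← Fintype.prod_sum (fun i y => (W (x i) y).toReal ^ β * q y ^ (1 - β))]
    have hle : ∏ i, ∑ y, (W (x i) y).toReal ^ β * q y ^ (1 - β) ≤ ∏ _i : Fin n, F ^ β := by
      apply Finset.prod_le_prod
      · intro i _
        exact Finset.sum_nonneg fun y _ => mul_nonneg (by positivity) (Real.rpow_nonneg (hq0 y) _)
      · exact fun i _ => hbd _
    refine (mul_le_mul_of_nonneg_left hle (by positivity)).trans (le_of_eq ?_)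
    rw [Finset.prod_const, Finset.card_univ, Fintype.card_fin]
    have hF2 : F = 2 ^ (Real.logb 2 F) := (Real.rpow_logb (by norm_num) (by norm_num) hF).symm
    have : (F ^ β) ^ n = 2 ^ (Real.logb 2 F * β * n) := by
      rw [Real.rpow_mul (by norm_num), Real.rpow_mul (by norm_num), ← hF2, Real.rpow_natCast]
    rw [this, ← Real.rpow_add (by norm_num)]
    congr 1
    rw [hEdef]; ring

lemma ereal_nonneg_of {x : EReal} (h : ∀ E : ℝ, E < 0 → (E : EReal) ≤ x) : 0 ≤ x := by
  by_contra hlt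
  push Not at hlt
  obtain ⟨e, h1, h2⟩ := EReal.lt_iff_exists_real_btwn.1 hlt
  have := h e (by exact_mod_cast h2)
  exact absurd h1 (not_lt.2 this)

lemma Erf_nonneg {X Y : Type*} [Fintype X] [Fintype Y] [Nonempty Y] {W : X → Y → ℝ≥0∞}
    (hW : IsChannel W) {α : ℝ≥0∞} (h0 : 0 < α) {r : ℝ} (hr : 0 ≤ r) : 0 ≤ Erf α W r := by
  apply ereal_nonneg_of
  intro E hE
  have hrate : RateOK r fun _ => 0 := by
    refine ⟨fun _ => le_rfl, ?_⟩
    simp only [zero_div, EReal.coe_zero, limsup_const]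
    exact_mod_cast hr
  refine le_Erf_of hrate (C := 1) one_pos ?_
  set L := Real.logb 2 (Fintype.card Y) with hL
  have hT := tendsto_pow_const_div_const_pow_of_one_lt 1 (r := (2:ℝ) ^ (-E))
    (Real.one_lt_rpow (by norm_num) (by linarith))
  have hT2 := hT.mul_const L
  rw [zero_mul] at hT2
  have hcY : (0 : ℝ) < Fintype.card Y := by exact_mod_cast Fintype.card_pos
  filter_upwards [hT2.eventually (eventually_le_nhds one_pos)] with n hn
  have hq0 : ∀ y : Fin n → Y, (0:ℝ) ≤ ((Fintype.card Y : ℝ) ^ n)⁻¹ := fun _ => by positivity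
  have hq1 : ∑ y : Fin n → Y, ((Fintype.card Y : ℝ) ^ n)⁻¹ = 1 := by
    simp
  refine simD_le (const_sim (ofReal_dist hq0 hq1)) fun x => ?_
  refine (renyi_upper_scale h0 (prodCh_channel hW n x) (fun _ => ENNReal.ofReal_ne_top)
    (κ := ((Fintype.card Y : ℝ) ^ n)⁻¹) (by positivity) (fun y => ?_)).trans ?_
  · rw [ENNReal.toReal_ofReal (by positivity)]
    have h1 : (prodCh n W x y).toReal ≤ 1 := by
      have := ENNReal.toReal_mono ENNReal.one_ne_top (W_le_one (prodCh_channel hW n) x y)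
      simpa using this
    have : 0 ≤ ((Fintype.card Y : ℝ) ^ n)⁻¹ := by positivity
    nlinarith
  · norm_cast
    rw [Real.logb_inv, neg_neg, Nat.cast_pow, Real.logb_pow, ← hL]
    have h2 : (2 : ℝ) ^ (-((n : ℝ) * E)) = ((2:ℝ) ^ (-E)) ^ n := by
      rw [← Real.rpow_natCast, ← Real.rpow_mul (by norm_num)]; congr 1; ring
    rw [h2, one_mul]
    have hp : 0 < ((2:ℝ) ^ (-E)) ^ n := by positivity
    rw [pow_one, div_mul_eq_mul_div, div_le_one hp] at hn
    exact hn

lemma Erf_top {X Y : Type*} [Fintype X] [Fintype Y] [Nonempty X] {W : X → Y → ℝ≥0∞}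
    (hW : IsChannel W) {α : ℝ≥0∞} (h0 : 0 < α) {r : ℝ} (hr : renyiCap ⊤ W ≤ (r : EReal)) :
    Erf α W r = ⊤ := by
  have hZ1 : (1 : ℝ) ≤ (Zmax W).toReal := by
    have := ENNReal.toReal_mono (Zmax_ne_top hW) (one_le_Zmax hW)
    simpa using this
  have hZ0 : 0 < (Zmax W).toReal := by linarith
  rw [cap_top_real hW] at hr
  have hr' : Real.logb 2 (Zmax W).toReal ≤ r := by exact_mod_cast hr
  have hr0 : 0 ≤ r := (Real.logb_nonneg (by norm_num) hZ1).trans hr'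
  have hZr : (Zmax W).toReal ≤ 2 ^ r := by
    rwa [Real.logb_le_iff_le_rpow (by norm_num) hZ0] at hr'
  have hst : ∀ y, (⨆ x, W x y) ≠ ⊤ := fun y =>
    ((iSup_le fun x => W_le_one hW x y).trans_lt ENNReal.one_lt_top).ne
  set q : Y → ℝ := fun y => (⨆ x, W x y).toReal / (Zmax W).toReal with hq
  have hq0 : ∀ y, 0 ≤ q y := fun y => by positivity
  have hq1 : ∑ y, q y = 1 := by
    simp only [hq]
    rw [← Finset.sum_div, ← ENNReal.toReal_sum (fun y _ => hst y)]
    exact div_self hZ0.ne'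
  have hWq : ∀ x y, (W x y).toReal ≤ 2 ^ r * q y := by
    intro x y
    have h1 : (W x y).toReal ≤ (⨆ x, W x y).toReal :=
      ENNReal.toReal_mono (hst y) (le_iSup (fun x => W x y) x)
    calc _ ≤ (⨆ x, W x y).toReal := h1
      _ = (Zmax W).toReal * q y := by simp only [hq]; field_simp
      _ ≤ _ := by have := hq0 y; gcongr
  rw [eq_top_iff, ← EReal.ge_of_forall_gt_iff_ge]
  intro E _
  refine le_Erf_of (mseq_rate hr0) (C := 4) (by norm_num) ?_
  have hev2 : ∀ᶠ n : ℕ in atTop, E ≤ n := by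
    exact tendsto_natCast_atTop_atTop.eventually (eventually_ge_atTop E)
  filter_upwards [eventually_ge_atTop 1, hev2] with n hn hnE2
  obtain ⟨N, hN, hNb⟩ := ach_sim hW hq0 hq1 hr0 n
  have hexp := exp_neg_sq_half hn
  have hexp2 := exp_neg_sq_le hn hnE2
  refine simD_le hN fun x => ?_
  refine (renyi_upper_scale h0 (prodCh_channel hW n x) (fun y => dist_ne_top (sim_sum hN x) y)
    (κ := 1 - Real.exp (-(n : ℝ) ^ 2)) (by linarith) (fun y => ?_)).trans ?_
  · refine le_trans (le_of_eq ?_) (hNb x y)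
    rw [min_eq_left]
    rw [prodCh_toReal]
    calc ∏ i, (W (x i) (y i)).toReal ≤ ∏ i, (2 ^ r * q (y i)) :=
          Finset.prod_le_prod (fun _ _ => ENNReal.toReal_nonneg) (fun i _ => hWq _ _)
      _ = _ := by
        rw [Finset.prod_mul_distrib, Finset.prod_const, Finset.card_univ, Fintype.card_fin,
          ← Real.rpow_natCast, ← Real.rpow_mul (by norm_num), mul_comm r]
  · norm_cast
    have h1 := neg_log_le_two (κ := 1 - Real.exp (-(n : ℝ) ^ 2)) (by linarith)
      (by linarith [Real.exp_pos (-(n : ℝ) ^ 2)])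
    have h2 := logb_le_of_log_le (x := (1 - Real.exp (-(n : ℝ) ^ 2))⁻¹)
      (u := 2 * Real.exp (-(n : ℝ) ^ 2)) (by positivity) (by rw [Real.log_inv]; linarith)
    rw [Real.logb_inv] at h2
    push_cast
    linarith

/-! ### Part 9: Chernoff bound and the core converse estimate -/

lemma prod_sum2 {X Y : Type*} [Fintype X] [Fintype Y] (n : ℕ) (f : X → Y → ℝ) :
    ∑ xs : Fin n → X, ∑ ys : Fin n → Y, ∏ i, f (xs i) (ys i) = (∑ x, ∑ y, f x y) ^ n := by
  have h1 : ∀ xs : Fin n → X, ∑ ys : Fin n → Y, ∏ i, f (xs i) (ys i) = ∏ i, ∑ y, f (xs i) y :=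
    fun xs => (Fintype.prod_sum (fun i y => f (xs i) y)).symm
  simp only [h1]
  rw [← Fintype.prod_sum (fun (_ : Fin n) x => ∑ y, f x y)]
  simp

lemma chernoff {X Y : Type*} [Fintype X] [Fintype Y] {J g : X → Y → ℝ} (hJ0 : ∀ x y, 0 ≤ J x y)
    (hJ1 : ∑ x, ∑ y, J x y = 1) {ε : ℝ} (hε : 0 < ε) :
    Tendsto (fun n : ℕ => ∑ xs : Fin n → X, ∑ ys : Fin n → Y,
      if ∑ i, g (xs i) (ys i) ≤ n * (∑ x, ∑ y, J x y * g x y - ε)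
        then ∏ i, J (xs i) (ys i) else 0) atTop (nhds 0) := by
  set μ := ∑ x, ∑ y, J x y * g x y with hμ
  set h : X → Y → ℝ := fun x y => g x y - μ + ε with hh
  set M : ℝ := 1 + ε + ∑ x, ∑ y, |h x y| with hM
  have hMh : ∀ x y, |h x y| ≤ M := by
    intro x y
    have h1 : |h x y| ≤ ∑ y, |h x y| :=
      Finset.single_le_sum (f := fun y => |h x y|) (fun _ _ => abs_nonneg _) (Finset.mem_univ y)
    have h2 : ∑ y, |h x y| ≤ ∑ x, ∑ y, |h x y| :=
      Finset.single_le_sum (f := fun x => ∑ y, |h x y|)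
        (fun _ _ => Finset.sum_nonneg fun _ _ => abs_nonneg _) (Finset.mem_univ x)
    linarith
  have hM1 : 1 + ε ≤ M := by
    have : 0 ≤ ∑ x, ∑ y, |h x y| :=
      Finset.sum_nonneg fun _ _ => Finset.sum_nonneg fun _ _ => abs_nonneg _
    linarith
  have hM0 : 0 < M := by linarith
  set s : ℝ := ε / (2 * M ^ 2) with hs
  have hs0 : 0 < s := by positivity
  have hsM : s * M ≤ 1 := by
    have : s * M = ε / (2 * M) := by rw [hs]; field_simp
    rw [this, div_le_one (by positivity)]; linarith
  set ρ : ℝ := ∑ x, ∑ y, J x y * Real.exp (-(s * h x y)) with hρ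
  have hρ0 : 0 ≤ ρ := Finset.sum_nonneg fun x _ => Finset.sum_nonneg fun y _ =>
    mul_nonneg (hJ0 x y) (Real.exp_pos _).le
  have hJh : ∑ x, ∑ y, J x y * h x y = ε := by
    have : ∀ x y, J x y * h x y = J x y * g x y + J x y * (ε - μ) := fun x y => by
      simp only [hh]; ring
    simp only [this, Finset.sum_add_distrib, ← Finset.sum_mul, hJ1, ← hμ]
    ring
  have hρ1 : ρ < 1 := by
    have hb : ∀ x y, J x y * Real.exp (-(s * h x y)) ≤ J x y + (J x y * h x y) * (-s) + J x y * (s ^ 2 * M ^ 2) := by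
      intro x y
      have ha : |-(s * h x y)| ≤ 1 := by
        rw [abs_neg, abs_mul, abs_of_pos hs0]
        exact (mul_le_mul_of_nonneg_left (hMh x y) hs0.le).trans hsM
      have h1 := (abs_le.1 (Real.abs_exp_sub_one_sub_id_le ha)).2
      have h2 : (-(s * h x y)) ^ 2 ≤ s ^ 2 * M ^ 2 := by
        rw [neg_sq, mul_pow, ← sq_abs (h x y)]
        have := hMh x y
        gcongr
      have := mul_le_mul_of_nonneg_left (show Real.exp (-(s * h x y)) ≤ 1 - s * h x y + s ^ 2 * M ^ 2 by linarith) (hJ0 x y)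
      linarith
    have h3 : ρ ≤ 1 + ε * (-s) + s ^ 2 * M ^ 2 := by
      calc ρ ≤ ∑ x, ∑ y, (J x y + (J x y * h x y) * (-s) + J x y * (s ^ 2 * M ^ 2)) :=
            Finset.sum_le_sum fun x _ => Finset.sum_le_sum fun y _ => hb x y
        _ = _ := by
          simp only [Finset.sum_add_distrib, ← Finset.sum_mul, hJ1, hJh, one_mul]
    have h4 : s ^ 2 * M ^ 2 = s * ε / 2 := by
      rw [hs]; field_simp
    nlinarith [mul_pos hs0 hε]
  refine squeeze_zero (g := fun n => ρ ^ n) (fun n => ?_) (fun n => ?_) (tendsto_pow_atTop_nhds_zero_of_lt_one hρ0 hρ1)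
  · refine Finset.sum_nonneg fun xs _ => Finset.sum_nonneg fun ys _ => ?_
    split_ifs
    · exact Finset.prod_nonneg fun i _ => hJ0 _ _
    · exact le_rfl
  · rw [hρ, ← prod_sum2 n (fun x y => J x y * Real.exp (-(s * h x y)))]
    refine Finset.sum_le_sum fun xs _ => Finset.sum_le_sum fun ys _ => ?_
    have hp : 0 ≤ ∏ i, J (xs i) (ys i) := Finset.prod_nonneg fun i _ => hJ0 _ _
    rw [Finset.prod_mul_distrib, ← Real.exp_sum]
    split_ifs with hc
    · apply le_mul_of_one_le_right hp
      apply Real.one_le_exp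
      rw [Finset.sum_neg_distrib, ← Finset.mul_sum]
      have : ∑ i, h (xs i) (ys i) = ∑ i, g (xs i) (ys i) - n * (μ - ε) := by
        simp only [hh, Finset.sum_add_distrib, Finset.sum_sub_distrib, Finset.sum_const,
          Finset.card_univ, Fintype.card_fin, nsmul_eq_mul]
        ring
      rw [this]
      nlinarith
    · exact mul_nonneg hp (Real.exp_pos _).le

/-- X-marginal -/
def jX {X Y : Type*} [Fintype Y] (J : X → Y → ℝ) (x : X) : ℝ := ∑ y, J x y
/-- Y-marginal -/
def jY {X Y : Type*} [Fintype X] (J : X → Y → ℝ) (y : Y) : ℝ := ∑ x, J x y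
/-- conditional divergence -/
def jD {X Y : Type*} [Fintype X] [Fintype Y] (w J : X → Y → ℝ) : ℝ :=
  ∑ x, ∑ y, J x y * Real.logb 2 (J x y / (jX J x * w x y))
/-- information density expectation -/
def jT {X Y : Type*} [Fintype X] [Fintype Y] (w J : X → Y → ℝ) : ℝ :=
  ∑ x, ∑ y, J x y * Real.logb 2 (w x y / jY J y)

/-- admissible joint distributions -/
structure Jok {X Y : Type*} [Fintype X] [Fintype Y] (w J : X → Y → ℝ) : Prop where
  nonneg : ∀ x y, 0 ≤ J x y
  sum : ∑ x, ∑ y, J x y = 1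
  supp : ∀ x y, w x y = 0 → J x y = 0

lemma Jok.le_jX {X Y : Type*} [Fintype X] [Fintype Y] {w J : X → Y → ℝ} (h : Jok w J) (x : X) (y : Y) :
    J x y ≤ jX J x :=
  Finset.single_le_sum (f := fun y => J x y) (fun _ _ => h.nonneg _ _) (Finset.mem_univ y)

lemma Jok.le_jY {X Y : Type*} [Fintype X] [Fintype Y] {w J : X → Y → ℝ} (h : Jok w J) (x : X) (y : Y) :
    J x y ≤ jY J y :=
  Finset.single_le_sum (f := fun x => J x y) (fun _ _ => h.nonneg _ _) (Finset.mem_univ x)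

lemma prod_pos_iff_of_nonneg {n : ℕ} {f : Fin n → ℝ} (h0 : ∀ i, 0 ≤ f i) (h : 0 < ∏ i, f i) (i : Fin n) :
    0 < f i := by
  refine lt_of_le_of_ne (h0 i) fun hi => ?_
  rw [Finset.prod_eq_zero (Finset.mem_univ i) hi.symm] at h
  exact lt_irrefl _ h

lemma prod_eq_two_rpow {n : ℕ} {f : Fin n → ℝ} (h0 : ∀ i, 0 < f i) :
    ∏ i, f i = 2 ^ (∑ i, Real.logb 2 (f i)) := by
  rw [Real.rpow_sum_of_pos (by norm_num)]
  exact Finset.prod_congr rfl fun i _ => (Real.rpow_logb (by norm_num) (by norm_num) (h0 i)).symm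

lemma core {X Y : Type*} [Fintype X] [Fintype Y] {w J : X → Y → ℝ} (hw0 : ∀ x y, 0 ≤ w x y)
    (hJ : Jok w J) {ε : ℝ} (hε : 0 < ε) :
    ∀ᶠ n : ℕ in atTop, ∀ Q : (Fin n → Y) → ℝ, (∀ y, 0 ≤ Q y) → ∑ y, Q y ≤ 1 →
      ∃ (x : Fin n → X) (A : Finset (Fin n → Y)),
        (∀ y ∈ A, 0 < ∏ i, w (x i) (y i)) ∧
        (∀ y ∈ A, 2 ^ (n * (jT w J - 2 * ε)) * Q y ≤ ∏ i, w (x i) (y i)) ∧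
        1 / 2 * 2 ^ (-(n * (jD w J + ε))) ≤ ∑ y ∈ A, ∏ i, w (x i) (y i) := by
  set g1 : X → Y → ℝ := fun x y => Real.logb 2 (w x y / jY J y) with hg1
  set g2 : X → Y → ℝ := fun x y => -Real.logb 2 (J x y / (jX J x * w x y)) with hg2
  have hm1 : ∑ x, ∑ y, J x y * g1 x y = jT w J := rfl
  have hm2 : ∑ x, ∑ y, J x y * g2 x y = -jD w J := by
    simp only [hg2, jD, mul_neg, Finset.sum_neg_distrib]
  have c1 := chernoff (g := g1) hJ.nonneg hJ.sum hε
  have c2 := chernoff (g := g2) hJ.nonneg hJ.sum hε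
  rw [hm1] at c1
  rw [hm2] at c2
  have c3 : Tendsto (fun n : ℕ => ((2:ℝ) ^ (-ε)) ^ n) atTop (nhds 0) :=
    tendsto_pow_atTop_nhds_zero_of_lt_one (by positivity)
      (Real.rpow_lt_one_of_one_lt_of_neg (by norm_num) (by linarith))
  filter_upwards [c1.eventually (gt_mem_nhds (show (0:ℝ) < 1/6 by norm_num)),
    c2.eventually (gt_mem_nhds (show (0:ℝ) < 1/6 by norm_num)),
    c3.eventually (gt_mem_nhds (show (0:ℝ) < 1/6 by norm_num))] with n e1 e2 e3
  intro Q hQ0 hQ1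
  set Jn : (Fin n → X) → (Fin n → Y) → ℝ := fun xs ys => ∏ i, J (xs i) (ys i) with hJn
  set Wn : (Fin n → X) → (Fin n → Y) → ℝ := fun xs ys => ∏ i, w (xs i) (ys i) with hWn
  set Pn : (Fin n → X) → ℝ := fun xs => ∏ i, jX J (xs i) with hPn
  set Rn : (Fin n → Y) → ℝ := fun ys => ∏ i, jY J (ys i) with hRn
  have hX0 : ∀ x, 0 ≤ jX J x := fun x => Finset.sum_nonneg fun y _ => hJ.nonneg x y
  have hY0 : ∀ y, 0 ≤ jY J y := fun y => Finset.sum_nonneg fun x _ => hJ.nonneg x y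
  have hJn0 : ∀ x y, 0 ≤ Jn x y := fun x y => Finset.prod_nonneg fun i _ => hJ.nonneg _ _
  have hWn0 : ∀ x y, 0 ≤ Wn x y := fun x y => Finset.prod_nonneg fun i _ => hw0 _ _
  have hPn0 : ∀ x, 0 ≤ Pn x := fun x => Finset.prod_nonneg fun i _ => hX0 _
  have hRn0 : ∀ y, 0 ≤ Rn y := fun y => Finset.prod_nonneg fun i _ => hY0 _
  have hJn1 : ∑ x, ∑ y, Jn x y = 1 := by
    simp only [hJn]; rw [prod_sum2, hJ.sum, one_pow]
  have hPn1 : ∑ x, Pn x = 1 := by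
    simp only [hPn]
    rw [← Fintype.prod_sum (fun (_ : Fin n) x => jX J x)]
    simp [jX, hJ.sum]
  have hRnJ : ∀ y, ∑ x, Jn x y = Rn y := by
    intro y
    simp only [hJn, hRn, jY]
    rw [← Fintype.prod_sum (fun i x => J x (y i))]
  set b1 : (Fin n → X) → (Fin n → Y) → Prop := fun xs ys =>
    ∑ i, g1 (xs i) (ys i) ≤ n * (jT w J - ε) with hb1
  set b2 : (Fin n → X) → (Fin n → Y) → Prop := fun xs ys =>
    ∑ i, g2 (xs i) (ys i) ≤ n * (-jD w J - ε) with hb2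
  set b3 : (Fin n → Y) → Prop := fun ys => 2 ^ (n * ε) * Rn ys ≤ Q ys with hb3
  have e3' : ∑ x, ∑ y, (if b3 y then Jn x y else 0) < 1 / 6 := by
    rw [Finset.sum_comm]
    calc ∑ y, ∑ x, (if b3 y then Jn x y else 0) = ∑ y, (if b3 y then Rn y else 0) := by
          refine Finset.sum_congr rfl fun y _ => ?_
          split_ifs
          · exact hRnJ y
          · simp
      _ ≤ ∑ y, ((2:ℝ) ^ (-ε)) ^ n * Q y := by
          refine Finset.sum_le_sum fun y _ => ?_
          have h2 : ((2:ℝ) ^ (-ε)) ^ n * 2 ^ (n * ε) = 1 := by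
            rw [← Real.rpow_natCast, ← Real.rpow_mul (by norm_num), ← Real.rpow_add (by norm_num)]
            rw [show -ε * (n:ℝ) + n * ε = 0 by ring, Real.rpow_zero]
          split_ifs with hb
          · have := mul_le_mul_of_nonneg_left hb (show 0 ≤ ((2:ℝ) ^ (-ε)) ^ n by positivity)
            rw [← mul_assoc, h2, one_mul] at this
            exact this
          · exact mul_nonneg (by positivity) (hQ0 y)
      _ ≤ ((2:ℝ) ^ (-ε)) ^ n := by
          rw [← Finset.mul_sum]
          exact mul_le_of_le_one_right (by positivity) hQ1
      _ < 1 / 6 := e3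
  have hgood : 1 / 2 ≤ ∑ x, ∑ y, (if ¬ b1 x y ∧ ¬ b2 x y ∧ ¬ b3 y then Jn x y else 0) := by
    have hpt : ∀ x y, Jn x y ≤ (if ¬ b1 x y ∧ ¬ b2 x y ∧ ¬ b3 y then Jn x y else 0)
        + (if b1 x y then Jn x y else 0) + (if b2 x y then Jn x y else 0)
        + (if b3 y then Jn x y else 0) := by
      intro x y
      have := hJn0 x y
      by_cases h1 : b1 x y <;> by_cases h2 : b2 x y <;> by_cases h3 : b3 y <;> simp [h1, h2, h3, this]
    have hs := Finset.sum_le_sum fun x (_ : x ∈ Finset.univ) =>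
      Finset.sum_le_sum fun y (_ : y ∈ Finset.univ) => hpt x y
    rw [hJn1] at hs
    simp only [Finset.sum_add_distrib] at hs
    linarith
  set B : ℝ := 2 ^ (n * (jD w J + ε)) with hB
  have hBpos : 0 < B := by positivity
  have hfac : ∀ x y, 0 < Jn x y → ∀ i, 0 < J (x i) (y i) ∧ 0 < w (x i) (y i) ∧ 0 < jX J (x i) ∧ 0 < jY J (y i) := by
    intro x y hpos i
    have hi := prod_pos_iff_of_nonneg (fun i => hJ.nonneg (x i) (y i)) hpos i
    refine ⟨hi, lt_of_le_of_ne (hw0 _ _) fun h => ?_, hi.trans_le (hJ.le_jX _ _), hi.trans_le (hJ.le_jY _ _)⟩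
    rw [hJ.supp _ _ h.symm] at hi
    exact lt_irrefl _ hi
  have hJle : ∀ x y, 0 < Jn x y → ¬ b2 x y → Jn x y ≤ B * (Pn x * Wn x y) := by
    intro x y hpos hb
    have hf := hfac x y hpos
    have h1 : ∏ i, (J (x i) (y i) / (jX J (x i) * w (x i) (y i))) ≤ B := by
      rw [prod_eq_two_rpow (fun i => by obtain ⟨h1, h2, h3, h4⟩ := hf i; positivity)]
      apply Real.rpow_le_rpow_of_exponent_le (by norm_num)
      simp only [hb2, hg2, Finset.sum_neg_distrib] at hb
      push Not at hb
      linarith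
    rw [Finset.prod_div_distrib, Finset.prod_mul_distrib, div_le_iff₀] at h1
    · exact h1
    · exact mul_pos (Finset.prod_pos fun i _ => (hf i).2.2.1) (Finset.prod_pos fun i _ => (hf i).2.1)
  -- choose x
  set A : (Fin n → X) → Finset (Fin n → Y) := fun x => Finset.univ.filter fun y =>
    (¬ b1 x y ∧ ¬ b2 x y ∧ ¬ b3 y) ∧ 0 < Jn x y with hA
  have hsum : 1 / 2 ≤ ∑ x, Pn x * (B * ∑ y ∈ A x, Wn x y) := by
    refine hgood.trans (Finset.sum_le_sum fun x _ => ?_)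
    rw [Finset.mul_sum, Finset.mul_sum, hA, Finset.sum_filter]
    refine Finset.sum_le_sum fun y _ => ?_
    by_cases hg : ¬ b1 x y ∧ ¬ b2 x y ∧ ¬ b3 y
    · by_cases hp : 0 < Jn x y
      · rw [if_pos hg, if_pos ⟨hg, hp⟩]
        have := hJle x y hp hg.2.1
        linarith
      · rw [if_pos hg, if_neg (fun h => hp h.2)]
        exact not_lt.1 hp
    · rw [if_neg hg, if_neg (fun h => hg h.1)]
  have hex : ∃ x, 1 / 2 ≤ B * ∑ y ∈ A x, Wn x y := by
    by_contra hcon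
    push Not at hcon
    have hne : ∃ x, 0 < Pn x := by
      by_contra h
      push Not at h
      have : ∑ x, Pn x ≤ 0 := Finset.sum_nonpos fun x _ => h x
      linarith
    obtain ⟨x0, hx0⟩ := hne
    have : ∑ x, Pn x * (B * ∑ y ∈ A x, Wn x y) < ∑ x, Pn x * (1 / 2) := by
      apply Finset.sum_lt_sum
      · exact fun x _ => mul_le_mul_of_nonneg_left (hcon x).le (hPn0 x)
      · exact ⟨x0, Finset.mem_univ _, mul_lt_mul_of_pos_left (hcon x0) hx0⟩
    rw [← Finset.sum_mul, hPn1] at this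
    linarith
  obtain ⟨x, hx⟩ := hex
  refine ⟨x, A x, ?_, ?_, ?_⟩
  · intro y hy
    have hp : 0 < Jn x y := (Finset.mem_filter.1 hy).2.2
    exact Finset.prod_pos fun i _ => (hfac x y hp i).2.1
  · intro y hy
    obtain ⟨⟨h1, -, h3⟩, hp⟩ := (Finset.mem_filter.1 hy).2
    have hf := hfac x y hp
    have hR : 0 < Rn y := Finset.prod_pos fun i _ => (hf i).2.2.2
    have hW : 2 ^ (n * (jT w J - ε)) * Rn y ≤ Wn x y := by
      have h4 : 2 ^ (n * (jT w J - ε)) ≤ ∏ i, (w (x i) (y i) / jY J (y i)) := by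
        rw [prod_eq_two_rpow (fun i => by obtain ⟨h1, h2, h3, h4⟩ := hf i; positivity)]
        apply Real.rpow_le_rpow_of_exponent_le (by norm_num)
        simp only [hb1] at h1
        push Not at h1
        exact h1.le
      rw [Finset.prod_div_distrib, le_div_iff₀ hR] at h4
      exact h4
    simp only [hb3] at h3
    push Not at h3
    calc 2 ^ (n * (jT w J - 2 * ε)) * Q y ≤ 2 ^ (n * (jT w J - 2 * ε)) * (2 ^ (n * ε) * Rn y) := by
          gcongr
      _ = 2 ^ (n * (jT w J - ε)) * Rn y := by
          rw [← mul_assoc, ← Real.rpow_add (by norm_num)]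
          congr 2; ring
      _ ≤ _ := hW
  · rw [Real.rpow_neg (by norm_num), ← div_eq_mul_inv, div_le_iff₀ hBpos]
    linarith

/-! ### Part 10: converse bounds on the reliability function -/

lemma rate_ev {r : ℝ} {c : ℕ → ℝ} (hc : RateOK r c) {ε : ℝ} (hε : 0 < ε) :
    ∀ᶠ n : ℕ in atTop, c n ≤ n * (r + ε) := by
  have h1 : limsup (fun n : ℕ => ((c n / n : ℝ) : EReal)) atTop < ((r + ε : ℝ) : EReal) :=
    hc.2.trans_lt (by exact_mod_cast (by linarith : r < r + ε))
  filter_upwards [eventually_lt_of_limsup_lt h1, eventually_ge_atTop 1] with n hn hn1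
  have h2 : c n / n < r + ε := by exact_mod_cast hn
  have h3 : (0 : ℝ) < n := by exact_mod_cast hn1
  rw [div_lt_iff₀ h3] at h2
  linarith

lemma core_sim {X Y : Type*} [Fintype X] [Fintype Y] {W : X → Y → ℝ≥0∞} 
    {J : X → Y → ℝ} (hJ : Jok (fun x y => (W x y).toReal) J) {r : ℝ} {c : ℕ → ℝ}
    (hc : RateOK r c) {ε : ℝ} (hε : 0 < ε) :
    ∀ᶠ n : ℕ in atTop, ∀ N : (Fin n → X) → (Fin n → Y) → ℝ≥0∞, IsSimulation (c n) N →
      ∃ (x : Fin n → X) (A : Finset (Fin n → Y)),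
        (∀ y ∈ A, 0 < (prodCh n W x y).toReal) ∧
        (∀ y ∈ A, 2 ^ (n * (jT (fun x y => (W x y).toReal) J - r - 3 * ε)) * (N x y).toReal
          ≤ (prodCh n W x y).toReal) ∧
        1 / 2 * 2 ^ (-(n * (jD (fun x y => (W x y).toReal) J + ε)))
          ≤ ∑ y ∈ A, (prodCh n W x y).toReal := by
  filter_upwards [core (fun x y => ENNReal.toReal_nonneg) hJ hε, rate_ev hc hε] with n hn hcn
  intro N hN
  obtain ⟨Q, hQ, hNQ⟩ := sim_bound hN
  obtain ⟨x, A, h1, h2, h3⟩ := hn (fun y => (Q y).toReal) (fun _ => ENNReal.toReal_nonneg)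
    (dist_toReal hQ).le
  simp only [← prodCh_toReal] at h1 h2 h3
  refine ⟨x, A, h1, fun y hy => ?_, h3⟩
  refine le_trans ?_ (h2 y hy)
  have h4 : (N x y).toReal ≤ 2 ^ (n * (r + ε)) * (Q y).toReal := by
    have := ENNReal.toReal_mono (ENNReal.mul_ne_top ENNReal.ofReal_ne_top (dist_ne_top hQ y)) (hNQ x y)
    rw [ENNReal.toReal_mul, ENNReal.toReal_ofReal (by positivity)] at this
    refine this.trans ?_
    have := Real.rpow_le_rpow_of_exponent_le (show (1:ℝ) ≤ 2 by norm_num) hcn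
    gcongr
  calc _ ≤ 2 ^ (n * (jT (fun x y => (W x y).toReal) J - r - 3 * ε)) * (2 ^ (n * (r + ε)) * (Q y).toReal) := by
        gcongr
    _ = _ := by
      rw [← mul_assoc, ← Real.rpow_add (by norm_num)]
      congr 2; ring

lemma le_simD {X Y : Type*} [Fintype X] [Fintype Y] {α : ℝ≥0∞} {W : X → Y → ℝ≥0∞} {c : ℝ} {B : EReal}
    (h : ∀ N, IsSimulation c N → ∃ x, B ≤ renyiD α (W x) (N x)) : B ≤ simD α W c := by
  refine le_iInf fun N => ?_
  obtain ⟨x, hx⟩ := h N.1 N.2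
  exact hx.trans (le_iSup (fun x => renyiD α (W x) (N.1 x)) x)

lemma ereal_le_of {x : EReal} {a : ℝ} (h : ∀ δ : ℝ, 0 < δ → x ≤ ((a + δ : ℝ) : EReal)) : x ≤ a := by
  rw [← EReal.le_of_forall_lt_iff_le]
  intro z hz
  have hz' : a < z := by exact_mod_cast hz
  have := h (z - a) (by linarith)
  simpa using this

lemma conv_fin {X Y : Type*} [Fintype X] [Fintype Y] {W : X → Y → ℝ≥0∞} (hW : IsChannel W)
    {α : ℝ≥0∞} (h0 : 0 < α) (ht : α ≠ ⊤)
    {J : X → Y → ℝ} (hJ : Jok (fun x y => (W x y).toReal) J) {r : ℝ}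
    (hT : r < jT (fun x y => (W x y).toReal) J) :
    Erf α W r ≤ ((max 0 (jD (fun x y => (W x y).toReal) J -
      max (α.toReal - 1) 0 * (jT (fun x y => (W x y).toReal) J - r)) : ℝ) : EReal) := by
  set T := jT (fun x y => (W x y).toReal) J with hTd
  set D := jD (fun x y => (W x y).toReal) J with hDd
  set a := max (α.toReal - 1) 0 with ha
  have ha0 : 0 ≤ a := le_max_right _ _
  apply ereal_le_of
  intro δ hδ
  obtain ⟨C, hC, K0, hK0, hlow⟩ := renyi_lower (α := α) h0 ht
  set ε := min ((T - r) / 6) (δ / (1 + 3 * a)) with hε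
  have hε0 : 0 < ε := by
    apply lt_min
    · linarith
    · positivity
  have hε1 : 6 * ε ≤ T - r := by
    have := min_le_left ((T - r) / 6) (δ / (1 + 3 * a))
    rw [← hε] at this
    linarith
  have hε2 : ε * (1 + 3 * a) ≤ δ := by
    have := min_le_right ((T - r) / 6) (δ / (1 + 3 * a))
    rwa [← hε, le_div_iff₀ (by positivity)] at this
  apply Erf_le_of
  intro c hc
  refine ⟨C / 2, by positivity, ?_⟩
  have hpos : 0 < T - r - 3 * ε := by linarith
  have hK : ∀ᶠ n : ℕ in atTop, K0 ≤ 2 ^ (n * (T - r - 3 * ε)) := by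
    have h1 : Tendsto (fun n : ℕ => ((2:ℝ) ^ (T - r - 3 * ε)) ^ n) atTop atTop :=
      tendsto_pow_atTop_atTop_of_one_lt (Real.one_lt_rpow (by norm_num) hpos)
    filter_upwards [h1.eventually (eventually_ge_atTop K0)] with n hn
    rwa [← Real.rpow_natCast, ← Real.rpow_mul (by norm_num), mul_comm] at hn
  filter_upwards [core_sim hJ hc hε0, hK] with n hn hKn
  apply le_simD
  intro N hN
  obtain ⟨x, A, h1, h2, h3⟩ := hn N hN
  refine ⟨x, le_trans ?_ (hlow _ (prodCh n W x) (N x) A _ hKn (prodCh_channel hW n x) (sim_sum hN x) h2)⟩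
  norm_cast
  rw [← hTd] at h2
  rw [← hDd] at h3
  set E := max 0 (D - a * (T - r)) + δ with hE
  have hE0 : 0 ≤ E := by have := le_max_left 0 (D - a * (T - r)); linarith
  have hE1 : D - a * (T - r) + δ ≤ E := by have := le_max_right 0 (D - a * (T - r)); linarith
  have hn0 : (0:ℝ) ≤ n := Nat.cast_nonneg n
  rw [show C / 2 * 2 ^ (-(n * E)) = C * (1 / 2 * 2 ^ (-(n * E))) by ring]
  apply mul_le_mul_of_nonneg_left _ hC.le
  apply le_min
  · have : (2:ℝ) ^ (-(n * E)) ≤ 1 :=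
      Real.rpow_le_one_of_one_le_of_nonpos (by norm_num) (by have := mul_nonneg hn0 hE0; linarith)
    linarith
  · calc 1 / 2 * (2:ℝ) ^ (-(n * E)) ≤ 1 / 2 * (2 ^ (-(n * (D + ε))) * (2 ^ (n * (T - r - 3 * ε))) ^ a) := by
          apply mul_le_mul_of_nonneg_left _ (by norm_num)
          rw [← Real.rpow_mul (by norm_num), ← Real.rpow_add (by norm_num)]
          apply Real.rpow_le_rpow_of_exponent_le (by norm_num)
          have : n * (D + ε - a * (T - r - 3 * ε)) ≤ n * E := by
            apply mul_le_mul_of_nonneg_left _ hn0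
            nlinarith
          nlinarith
      _ = (1 / 2 * 2 ^ (-(n * (D + ε)))) * (2 ^ (n * (T - r - 3 * ε))) ^ a := by ring
      _ ≤ _ := by
          gcongr

lemma conv_top {X Y : Type*} [Fintype X] [Fintype Y] {W : X → Y → ℝ≥0∞} (hW : IsChannel W)
    {J : X → Y → ℝ} (hJ : Jok (fun x y => (W x y).toReal) J) {r : ℝ}
    (hT : r < jT (fun x y => (W x y).toReal) J) :
    Erf ⊤ W r ≤ ((0 : ℝ) : EReal) := by
  set T := jT (fun x y => (W x y).toReal) J with hTd
  apply ereal_le_of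
  intro δ hδ
  set ε := (T - r) / 6 with hε
  have hε0 : 0 < ε := by rw [hε]; linarith
  apply Erf_le_of
  intro c hc
  refine ⟨1, one_pos, ?_⟩
  have hpos : 0 < T - r - 3 * ε := by rw [hε]; linarith
  have hK : ∀ᶠ n : ℕ in atTop, 1 / (T - r - 3 * ε) ≤ n :=
    tendsto_natCast_atTop_atTop.eventually (eventually_ge_atTop _)
  filter_upwards [core_sim hJ hc hε0, hK] with n hn hKn
  apply le_simD
  intro N hN
  obtain ⟨x, A, h1, h2, h3⟩ := hn N hN
  rw [← hTd] at h2
  have hne : A.Nonempty := by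
    rw [Finset.nonempty_iff_ne_empty]
    rintro rfl
    rw [Finset.sum_empty] at h3
    have : (0:ℝ) < 1 / 2 * 2 ^ (-(n * (jD (fun x y => (W x y).toReal) J + ε))) := by positivity
    linarith
  obtain ⟨y, hy⟩ := hne
  refine ⟨x, le_trans ?_ (renyi_lower_top (K := 2 ^ (n * (T - r - 3 * ε))) (by positivity)
    (prodCh_channel hW n x) (sim_sum hN x) (h1 y hy) (h2 y hy))⟩
  rw [Real.logb_rpow (by norm_num) (by norm_num)]
  norm_cast
  rw [div_le_iff₀ hpos] at hKn
  have : (2:ℝ) ^ (-(n * (0 + δ))) ≤ 1 :=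
      Real.rpow_le_one_of_one_le_of_nonpos (by norm_num) (by
        have := mul_nonneg (Nat.cast_nonneg (α := ℝ) n) hδ.le; linarith)
  linarith

/-! ### Part 11: convexity, Lagrange duality, tilting -/

lemma xlog_lower {a b k : ℝ} (ha : 0 ≤ a) (hb : 0 ≤ b) (hab : b = 0 → a = 0) (hk : 0 < k) :
    a * Real.log k + a - k * b ≤ a * Real.log (a / b) := by
  rcases ha.eq_or_lt with h | h
  · rw [← h]
    have := mul_nonneg hk.le hb
    linarith
  · have hb' : 0 < b := lt_of_le_of_ne hb fun h0 => h.ne' (hab h0.symm)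
    have h1 := Real.one_sub_inv_le_log_of_pos (show 0 < a / b / k by positivity)
    rw [Real.log_div (by positivity) hk.ne'] at h1
    have h2 := mul_le_mul_of_nonneg_left h1 h.le
    have h3 : a * (1 - (a / b / k)⁻¹) = a - k * b := by field_simp
    linarith

lemma log_sum {a1 a2 b1 b2 : ℝ} (ha1 : 0 ≤ a1) (hb1 : 0 ≤ b1) (h1 : b1 = 0 → a1 = 0)
    (ha2 : 0 ≤ a2) (hb2 : 0 ≤ b2) (h2 : b2 = 0 → a2 = 0) :
    (a1 + a2) * Real.logb 2 ((a1 + a2) / (b1 + b2)) ≤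
      a1 * Real.logb 2 (a1 / b1) + a2 * Real.logb 2 (a2 / b2) := by
  have hl : 0 < Real.log 2 := Real.log_pos (by norm_num)
  have key : (a1 + a2) * Real.log ((a1 + a2) / (b1 + b2)) ≤
      a1 * Real.log (a1 / b1) + a2 * Real.log (a2 / b2) := by
    rcases (add_nonneg ha1 ha2).eq_or_lt with h | h
    · have e1 : a1 = 0 := by linarith
      have e2 : a2 = 0 := by linarith
      simp [e1, e2]
    · have hb : 0 < b1 + b2 := by
        refine lt_of_le_of_ne (add_nonneg hb1 hb2) fun h0 => ?_
        have := h1 (by linarith)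
        have := h2 (by linarith)
        linarith
      have hk : 0 < (a1 + a2) / (b1 + b2) := by positivity
      have k1 := xlog_lower ha1 hb1 h1 hk
      have k2 := xlog_lower ha2 hb2 h2 hk
      have : (a1 + a2) / (b1 + b2) * (b1 + b2) = a1 + a2 := by field_simp
      nlinarith
  simp only [Real.logb]
  have := div_le_div_of_nonneg_right key hl.le
  calc _ = (a1 + a2) * Real.log ((a1 + a2) / (b1 + b2)) / Real.log 2 := by ring
    _ ≤ _ := this
    _ = _ := by ring

section
variable {X Y : Type*} [Fintype X] [Fintype Y]

lemma Jok.mix {w J1 J2 : X → Y → ℝ} (h1 : Jok w J1) (h2 : Jok w J2) {t : ℝ} (ht0 : 0 < t)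
    (ht1 : t < 1) : Jok w fun x y => (1 - t) * J1 x y + t * J2 x y := by
  refine ⟨fun x y => ?_, ?_, fun x y h => ?_⟩
  · have := mul_nonneg (sub_nonneg.2 ht1.le) (h1.nonneg x y)
    have := mul_nonneg ht0.le (h2.nonneg x y)
    linarith
  · simp only [Finset.sum_add_distrib, ← Finset.mul_sum, h1.sum, h2.sum]; ring
  · rw [h1.supp x y h, h2.supp x y h]; simp

lemma jX_mix (J1 J2 : X → Y → ℝ) (t : ℝ) (x : X) :
    jX (fun x y => (1 - t) * J1 x y + t * J2 x y) x = (1 - t) * jX J1 x + t * jX J2 x := by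
  simp only [jX, Finset.sum_add_distrib, Finset.mul_sum]

lemma jY_mix (J1 J2 : X → Y → ℝ) (t : ℝ) (y : Y) :
    jY (fun x y => (1 - t) * J1 x y + t * J2 x y) y = (1 - t) * jY J1 y + t * jY J2 y := by
  simp only [jY, Finset.sum_add_distrib, Finset.mul_sum]

lemma Jok.jX_nonneg {w J : X → Y → ℝ} (h : Jok w J) (x : X) : 0 ≤ jX J x :=
  Finset.sum_nonneg fun y _ => h.nonneg x y

lemma Jok.jY_nonneg {w J : X → Y → ℝ} (h : Jok w J) (y : Y) : 0 ≤ jY J y :=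
  Finset.sum_nonneg fun x _ => h.nonneg x y

lemma Jok.denom {w J : X → Y → ℝ} (h : Jok w J) (x : X) (y : Y) (h0 : jX J x * w x y = 0) :
    J x y = 0 := by
  rcases mul_eq_zero.1 h0 with h1 | h1
  · have := h.le_jX x y
    rw [h1] at this
    exact le_antisymm this (h.nonneg x y)
  · exact h.supp x y h1

lemma jD_convex {w J1 J2 : X → Y → ℝ} (hw0 : ∀ x y, 0 ≤ w x y) (h1 : Jok w J1) (h2 : Jok w J2)
    {t : ℝ} (ht0 : 0 < t) (ht1 : t < 1) :
    jD w (fun x y => (1 - t) * J1 x y + t * J2 x y) ≤ (1 - t) * jD w J1 + t * jD w J2 := by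
  have h1t : 0 < 1 - t := by linarith
  simp only [jD, jX_mix, Finset.mul_sum]
  rw [← Finset.sum_add_distrib]
  refine Finset.sum_le_sum fun x _ => ?_
  rw [← Finset.sum_add_distrib]
  refine Finset.sum_le_sum fun y _ => ?_
  have := log_sum (a1 := (1 - t) * J1 x y) (b1 := (1 - t) * (jX J1 x * w x y))
    (a2 := t * J2 x y) (b2 := t * (jX J2 x * w x y))
    (mul_nonneg h1t.le (h1.nonneg x y))
    (mul_nonneg h1t.le (mul_nonneg (h1.jX_nonneg x) (hw0 x y)))
    (fun h => by rw [h1.denom x y ((mul_eq_zero.1 h).resolve_left h1t.ne'), mul_zero])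
    (mul_nonneg ht0.le (h2.nonneg x y))
    (mul_nonneg ht0.le (mul_nonneg (h2.jX_nonneg x) (hw0 x y)))
    (fun h => by rw [h2.denom x y ((mul_eq_zero.1 h).resolve_left ht0.ne'), mul_zero])
  rw [mul_div_mul_left _ _ h1t.ne', mul_div_mul_left _ _ ht0.ne'] at this
  rw [show ((1 - t) * jX J1 x + t * jX J2 x) * w x y
    = (1 - t) * (jX J1 x * w x y) + t * (jX J2 x * w x y) by ring]
  linarith

lemma jT_eq {w J : X → Y → ℝ} (h : Jok w J) :
    jT w J = ∑ x, ∑ y, J x y * Real.logb 2 (w x y)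
      + (∑ y, Real.negMulLog (jY J y)) / Real.log 2 := by
  have h1 : ∀ x y, J x y * Real.logb 2 (w x y / jY J y)
      = J x y * Real.logb 2 (w x y) - J x y * (Real.log (jY J y) / Real.log 2) := by
    intro x y
    by_cases hJ : J x y = 0
    · simp [hJ]
    · have hw : w x y ≠ 0 := fun h0 => hJ (h.supp x y h0)
      have hY : jY J y ≠ 0 := fun h0 => hJ (by
        have := h.le_jY x y; rw [h0] at this; exact le_antisymm this (h.nonneg x y))
      rw [Real.logb_div hw hY, Real.logb, Real.logb]; ring
  simp only [jT, h1, Finset.sum_sub_distrib]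
  rw [sub_eq_add_neg]
  congr 1
  rw [Finset.sum_comm]
  simp only [← Finset.sum_mul]
  rw [Finset.sum_div, ← Finset.sum_neg_distrib]
  refine Finset.sum_congr rfl fun y _ => ?_
  rw [Real.negMulLog]
  simp only [jY]; ring

lemma jT_concave {w J1 J2 : X → Y → ℝ} (h1 : Jok w J1) (h2 : Jok w J2)
    {t : ℝ} (ht0 : 0 < t) (ht1 : t < 1) :
    (1 - t) * jT w J1 + t * jT w J2 ≤ jT w (fun x y => (1 - t) * J1 x y + t * J2 x y) := by
  have hl : 0 < Real.log 2 := Real.log_pos (by norm_num)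
  rw [jT_eq h1, jT_eq h2, jT_eq (h1.mix h2 ht0 ht1)]
  have e1 : ∑ x, ∑ y, ((1 - t) * J1 x y + t * J2 x y) * Real.logb 2 (w x y)
      = (1 - t) * ∑ x, ∑ y, J1 x y * Real.logb 2 (w x y)
        + t * ∑ x, ∑ y, J2 x y * Real.logb 2 (w x y) := by
    simp only [Finset.mul_sum, ← Finset.sum_add_distrib]
    exact Finset.sum_congr rfl fun x _ => Finset.sum_congr rfl fun y _ => by ring
  have e2 : (1 - t) * ∑ y, Real.negMulLog (jY J1 y) + t * ∑ y, Real.negMulLog (jY J2 y)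
      ≤ ∑ y, Real.negMulLog (jY (fun x y => (1 - t) * J1 x y + t * J2 x y) y) := by
    rw [Finset.mul_sum, Finset.mul_sum, ← Finset.sum_add_distrib]
    refine Finset.sum_le_sum fun y _ => ?_
    rw [jY_mix]
    have := Real.concaveOn_negMulLog.2 (Set.mem_Ici.2 (h1.jY_nonneg y))
      (Set.mem_Ici.2 (h2.jY_nonneg y)) (show 0 ≤ 1 - t by linarith) ht0.le (by ring)
    simpa using this
  rw [e1]
  have e3 := div_le_div_of_nonneg_right e2 hl.le
  rw [add_div, mul_div_assoc, mul_div_assoc] at e3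
  linarith

end

/-- abstract Lagrange duality for one convex constraint -/
lemma lagrange {ι : Type*} (S : Set ι) (f τ : ι → ℝ)
    (hmix : ∀ i ∈ S, ∀ j ∈ S, ∀ t : ℝ, 0 < t → t < 1 → ∃ k ∈ S,
      f k ≤ (1 - t) * f i + t * f j ∧ (1 - t) * τ i + t * τ j ≤ τ k)
    (hslater : ∃ i ∈ S, 0 < τ i) (h : ∀ i ∈ S, 0 < τ i → 0 ≤ f i) :
    ∃ s : ℝ, 0 ≤ s ∧ ∀ i ∈ S, s * τ i ≤ f i := by
  have hcmp : ∀ i ∈ S, 0 < τ i → ∀ j ∈ S, τ j ≤ 0 → 0 ≤ τ i * f j - τ j * f i := by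
    intro i hi hτi j hj hτj
    by_contra hneg
    push Not at hneg
    have hfi := h i hi hτi
    set d := τ i - τ j with hd
    have hd0 : 0 < d := by linarith
    set η := -(τ i * f j - τ j * f i) with hη
    have hη0 : 0 < η := by linarith
    set δ := η / (2 * (η + d * f i)) with hδ
    have hden : 0 < η + d * f i := by positivity
    have hδ0 : 0 < δ := by positivity
    have hδ1 : δ ≤ 1 / 2 := by
      rw [hδ, div_le_iff₀ (by positivity)]
      have : 0 ≤ d * f i := by positivity
      linarith
    have hδe : δ * (η + d * f i) = η / 2 := by rw [hδ]; field_simp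
    set t := (1 - δ) * (τ i / d) with ht
    have ht0 : 0 < t := mul_pos (by linarith) (by positivity)
    have hr1 : τ i / d ≤ 1 := by rw [div_le_one hd0]; linarith
    have htl : t < 1 := by
      have : 0 < τ i / d := by positivity
      nlinarith
    have htd : t * d = (1 - δ) * τ i := by rw [ht]; field_simp
    obtain ⟨k, hk, hfk, hτk⟩ := hmix i hi j hj t ht0 htl
    have hpos : 0 < τ k := by
      refine lt_of_lt_of_le ?_ hτk
      have : (1 - t) * τ i + t * τ j = τ i - t * d := by rw [hd]; ring
      rw [this, htd]
      nlinarith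
    have h0 := (h k hk hpos).trans hfk
    have h1 : 0 ≤ d * ((1 - t) * f i + t * f j) := mul_nonneg hd0.le h0
    have h2 : d * ((1 - t) * f i + t * f j) = d * f i - (t * d) * f i + (t * d) * f j := by ring
    rw [h2, htd] at h1
    have h3 : d * f i - (1 - δ) * τ i * f i + (1 - δ) * τ i * f j
        = -η + δ * (η + d * f i) := by
      rw [hη, hd]; ring
    rw [h3, hδe] at h1
    linarith
  obtain ⟨i0, hi0, hτ0⟩ := hslater
  set V : Set ℝ := {v | ∃ i ∈ S, 0 < τ i ∧ v = f i / τ i} with hV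
  have hVne : V.Nonempty := ⟨_, i0, hi0, hτ0, rfl⟩
  have hVb : BddBelow V := ⟨0, by
    rintro v ⟨i, hi, hτ, rfl⟩
    exact div_nonneg (h i hi hτ) hτ.le⟩
  refine ⟨sInf V, le_csInf hVne ?_, ?_⟩
  · rintro v ⟨i, hi, hτ, rfl⟩
    exact div_nonneg (h i hi hτ) hτ.le
  · intro j hj
    rcases lt_trichotomy (τ j) 0 with hτ | hτ | hτ
    · have : f j / τ j ≤ sInf V := by
        apply le_csInf hVne
        rintro v ⟨i, hi, hτi, rfl⟩
        have := hcmp i hi hτi j hj hτ.le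
        rw [div_le_iff_of_neg hτ, div_mul_eq_mul_div, div_le_iff₀ hτi]
        linarith
      rwa [div_le_iff_of_neg hτ] at this
    · have := hcmp i0 hi0 hτ0 j hj hτ.le
      rw [hτ, zero_mul, sub_zero] at this
      rw [hτ, mul_zero]
      exact nonneg_of_mul_nonneg_right this hτ0
    · have : sInf V ≤ f j / τ j := csInf_le hVb ⟨j, hj, hτ, rfl⟩
      rwa [le_div_iff₀ hτ] at this

section
variable {X Y : Type*} [Fintype X] [Fintype Y]

/-- the Slater point -/
lemma slater [Nonempty X] {W : X → Y → ℝ≥0∞} (hW : IsChannel W) :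
    ∃ J, Jok (fun x y => (W x y).toReal) J ∧
      jT (fun x y => (W x y).toReal) J = Real.logb 2 (Zmax W).toReal := by
  have hsel : ∀ y, ∃ x, W x y = ⨆ x, W x y := fun y => by
    obtain ⟨x, hx⟩ := exists_eq_ciSup_of_finite (f := fun x => W x y)
    exact ⟨x, hx⟩
  choose sel hsel using hsel
  have hst : ∀ y, (⨆ x, W x y) ≠ ⊤ := fun y =>
    ((iSup_le fun x => W_le_one hW x y).trans_lt ENNReal.one_lt_top).ne
  have hZ0 : 0 < (Zmax W).toReal := by
    have := ENNReal.toReal_mono (Zmax_ne_top hW) (one_le_Zmax hW)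
    rw [ENNReal.toReal_one] at this
    linarith
  set Z := (Zmax W).toReal with hZ
  set R : Y → ℝ := fun y => (W (sel y) y).toReal / Z with hR
  have hR1 : ∑ y, R y = 1 := by
    simp only [hR, hsel]
    rw [← Finset.sum_div, ← ENNReal.toReal_sum (fun y _ => hst y)]
    exact div_self hZ0.ne'
  set J : X → Y → ℝ := fun x y => if x = sel y then R y else 0 with hJ
  have hjY : ∀ y, jY J y = R y := fun y => by simp [jY, hJ]
  refine ⟨J, ⟨fun x y => ?_, ?_, fun x y h => ?_⟩, ?_⟩
  · simp only [hJ]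
    split_ifs
    · simp only [hR]; positivity
    · exact le_rfl
  · rw [Finset.sum_comm]
    simpa [hJ] using hR1
  · simp only [hJ]
    split_ifs with hx
    · subst hx
      have h' : (W (sel y) y).toReal = 0 := h
      change (W (sel y) y).toReal / Z = 0
      rw [h', zero_div]
    · rfl
  · simp only [jT, hjY]
    rw [Finset.sum_comm]
    calc ∑ y, ∑ x, J x y * Real.logb 2 ((W x y).toReal / R y)
        = ∑ y, R y * Real.logb 2 Z := by
          refine Finset.sum_congr rfl fun y _ => ?_
          simp only [hJ, ite_mul, zero_mul, Finset.sum_ite_eq', Finset.mem_univ, if_true]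
          by_cases h : (W (sel y) y).toReal = 0
          · simp [hR, h]
          · have : (W (sel y) y).toReal / R y = Z := by simp only [hR]; field_simp
            rw [this]
      _ = _ := by rw [← Finset.sum_mul, hR1, one_mul]

/-- the product point has zero divergence -/
lemma prod_point [Nonempty X] {W : X → Y → ℝ≥0∞} (hW : IsChannel W) :
    ∃ J, Jok (fun x y => (W x y).toReal) J ∧ jD (fun x y => (W x y).toReal) J = 0 := by
  obtain ⟨x0⟩ := ‹Nonempty X›
  set J : X → Y → ℝ := fun x y => if x = x0 then (W x y).toReal else 0 with hJ
  have hX : ∀ x, jX J x = if x = x0 then 1 else 0 := fun x => by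
    simp only [jX, hJ]
    split_ifs
    · exact dist_toReal (hW x)
    · simp
  refine ⟨J, ⟨fun x y => ?_, ?_, fun x y h => ?_⟩, ?_⟩
  · simp only [hJ]; split_ifs <;> positivity
  · have : ∀ x, ∑ y, J x y = if x = x0 then 1 else 0 := hX
    simp [this]
  · simp only [hJ]; split_ifs
    · exact h
    · rfl
  · simp only [jD, hX]
    refine Finset.sum_eq_zero fun x _ => Finset.sum_eq_zero fun y _ => ?_
    simp only [hJ]
    split_ifs
    · rw [one_mul]
      by_cases h : (W x y).toReal = 0
      · simp [h]
      · rw [div_self h]; simp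
    · simp

/-- tilted distribution -/
lemma tilt {W : X → Y → ℝ≥0∞} (hW : IsChannel W) {P : X → ℝ} (h0 : ∀ x, 0 ≤ P x)
    (h1 : ∑ x, P x = 1) {β : ℝ} (hβ : 1 < β) :
    ∃ J, Jok (fun x y => (W x y).toReal) J ∧
      β * Real.logb 2 (∑ y, (∑ x, P x * (W x y).toReal ^ β) ^ (1 / β)) ≤
        (β - 1) * jT (fun x y => (W x y).toReal) J - jD (fun x y => (W x y).toReal) J := by
  have hβ0 : 0 < β := by linarith
  have hl : 0 < Real.log 2 := Real.log_pos (by norm_num)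
  obtain ⟨y0, hy0⟩ : ∃ y, 0 < ∑ x, P x * (W x y).toReal ^ β := sumA_pos hW h0 h1
  obtain ⟨w, hw⟩ : ∃ w : X → Y → ℝ, w = fun x y => (W x y).toReal := ⟨_, rfl⟩
  have hw0 : ∀ x y, 0 ≤ w x y := fun x y => by rw [hw]; exact ENNReal.toReal_nonneg
  have hww : ∀ x y, (W x y).toReal = w x y := fun x y => by rw [hw]
  simp only [hww] at hy0 ⊢
  clear hww hw hW
  obtain ⟨A, hA⟩ : ∃ A : Y → ℝ, ∀ y, ∑ x, P x * w x y ^ β = A y := ⟨_, fun _ => rfl⟩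
  have hA0 : ∀ y, 0 ≤ A y := fun y => by
    rw [← hA]
    exact Finset.sum_nonneg fun x _ => mul_nonneg (h0 x) (Real.rpow_nonneg (hw0 x y) _)
  rw [hA] at hy0
  simp only [hA]
  obtain ⟨F, hF⟩ : ∃ F : ℝ, ∑ y, A y ^ (1 / β) = F := ⟨_, rfl⟩
  have hFpos : 0 < F := by
    rw [← hF]
    exact Finset.sum_pos' (fun y _ => Real.rpow_nonneg (hA0 y) _)
      ⟨y0, Finset.mem_univ _, Real.rpow_pos_of_pos hy0 _⟩
  rw [hF]
  obtain ⟨q, hq⟩ : ∃ q : Y → ℝ, ∀ y, q y = A y ^ (1 / β) / F := ⟨_, fun _ => rfl⟩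
  have hq0 : ∀ y, 0 ≤ q y := fun y => by
    rw [hq]; exact div_nonneg (Real.rpow_nonneg (hA0 y) _) hFpos.le
  have hq1 : ∑ y, q y = 1 := by
    simp only [hq]; rw [← Finset.sum_div, hF, div_self hFpos.ne']
  obtain ⟨J, hJ⟩ : ∃ J : X → Y → ℝ, ∀ x y, J x y = P x * w x y ^ β * q y ^ (1 - β) / F ^ β :=
    ⟨_, fun _ _ => rfl⟩
  have hJ0 : ∀ x y, 0 ≤ J x y := fun x y => by
    have := h0 x; have := hw0 x y; have := hq0 y
    simp only [hJ]; positivity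
  have hjY : ∀ y, jY J y = q y := by
    intro y
    simp only [jY, hJ]
    rw [← Finset.sum_div, ← Finset.sum_mul]
    rw [hA]
    rcases (hA0 y).eq_or_lt with h | h
    · rw [hq, ← h, Real.zero_rpow (by positivity), zero_mul, zero_div, zero_div]
    · have hqp : 0 < q y := by rw [hq]; positivity
      have hAq : A y = q y ^ β * F ^ β := by
        rw [← Real.mul_rpow hqp.le hFpos.le]
        rw [hq, div_mul_cancel₀ _ hFpos.ne', ← Real.rpow_mul h.le, one_div_mul_cancel hβ0.ne',
          Real.rpow_one]
      have h2 : q y ^ β * q y ^ (1 - β) = q y := by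
        rw [← Real.rpow_add hqp]; simp
      rw [hAq]
      have : 0 < F ^ β := by positivity
      field_simp
      linarith
  have hJok : Jok w J := by
    refine ⟨hJ0, ?_, fun x y h => ?_⟩
    · rw [Finset.sum_comm]
      calc ∑ y, jY J y = ∑ y, q y := Finset.sum_congr rfl fun y _ => hjY y
        _ = 1 := hq1
    · simp only [hJ]; rw [h, Real.zero_rpow hβ0.ne']; simp
  refine ⟨J, hJok, ?_⟩
  -- compare with the divergence relative to `P`
  have hJpos : ∀ x y, J x y ≠ 0 → 0 < J x y ∧ 0 < P x ∧ 0 < w x y ∧ 0 < q y ∧ 0 < jX J x := by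
    intro x y h
    have hp : 0 < J x y := lt_of_le_of_ne (hJ0 x y) (Ne.symm h)
    refine ⟨hp, lt_of_le_of_ne (h0 x) fun h' => h ?_, lt_of_le_of_ne (hw0 x y) fun h' => h (hJok.supp x y h'.symm), ?_, hp.trans_le (hJok.le_jX x y)⟩
    · simp only [hJ]; rw [← h']; simp
    · rw [← hjY]; exact hp.trans_le (hJok.le_jY x y)
  have hpt : ∀ x y, (β - 1) * (J x y * Real.logb 2 (w x y / jY J y))
      - J x y * Real.logb 2 (J x y / (jX J x * w x y))
      = J x y * (β * Real.logb 2 F) + J x y * (Real.log (jX J x / P x) / Real.log 2) := by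
    intro x y
    by_cases hz : J x y = 0
    · simp [hz]
    · obtain ⟨hp, hP, hwp, hqp, hXp⟩ := hJpos x y hz
      rw [hjY]
      have e1 : Real.log (J x y) = Real.log (P x) + β * Real.log (w x y) + (1 - β) * Real.log (q y)
          - β * Real.log F := by
        simp only [hJ]
        rw [Real.log_div (by positivity) (by positivity), Real.log_mul (by positivity) (by positivity),
          Real.log_mul (by positivity) (by positivity), Real.log_rpow hwp, Real.log_rpow hqp,
          Real.log_rpow hFpos]
      simp only [Real.logb]
      rw [Real.log_div hwp.ne' hqp.ne', Real.log_div hp.ne' (by positivity),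
        Real.log_mul hXp.ne' hwp.ne', Real.log_div hXp.ne' hP.ne', e1]
      field_simp
      ring
  have hgibbs : 0 ≤ ∑ x, jX J x * (Real.log (jX J x / P x) / Real.log 2) := by
    have hb : ∀ x, jX J x - P x ≤ jX J x * Real.log (jX J x / P x) := by
      intro x
      have := xlog_lower (hJok.jX_nonneg x) (h0 x) (fun hP => ?_) (k := 1) one_pos
      · simpa using this
      · simp [jX, hJ, hP]
    have h2 : ∑ x, (jX J x - P x) ≤ ∑ x, jX J x * Real.log (jX J x / P x) :=
      Finset.sum_le_sum fun x _ => hb x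
    rw [Finset.sum_sub_distrib, h1] at h2
    have h3 : ∑ x, jX J x = 1 := hJok.sum
    rw [h3, sub_self] at h2
    simp only [← mul_div_assoc]
    rw [← Finset.sum_div]
    positivity
  have hsum : (β - 1) * jT w J - jD w J = β * Real.logb 2 F
      + ∑ x, jX J x * (Real.log (jX J x / P x) / Real.log 2) := by
    simp only [jT, jD, Finset.mul_sum]
    rw [← Finset.sum_sub_distrib]
    simp only [← Finset.sum_sub_distrib, hpt, Finset.sum_add_distrib]
    congr 1
    · simp only [← Finset.sum_mul]; rw [hJok.sum, one_mul]
    · refine Finset.sum_congr rfl fun x _ => ?_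
      rw [← Finset.sum_mul]; rfl
  rw [hsum]
  linarith

end

/-! ### Part 12: assembly -/

lemma one_sub_one_ereal : ((1 : ℝ≥0∞) : EReal) - 1 = 0 := by
  rw [EReal.coe_ennreal_one, ← EReal.coe_one, ← EReal.coe_sub, sub_self, EReal.coe_zero]

lemma ofReal_sub_one {β : ℝ} (hβ : 0 ≤ β) :
    ((ENNReal.ofReal β : ℝ≥0∞) : EReal) - 1 = ((β - 1 : ℝ) : EReal) := by
  rw [EReal.coe_ennreal_ofReal, max_eq_left hβ, ← EReal.coe_one, ← EReal.coe_sub]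

/-- duality: a uniform lower bound on the converse functional is witnessed by some order -/
lemma dual {X Y : Type*} [Fintype X] [Fintype Y] [Nonempty X] {W : X → Y → ℝ≥0∞}
    (hW : IsChannel W) {a r v : ℝ} (ha : 0 ≤ a) (hr : r < Real.logb 2 (Zmax W).toReal)
    (h : ∀ J, Jok (fun x y => (W x y).toReal) J → r < jT (fun x y => (W x y).toReal) J →
      v ≤ jD (fun x y => (W x y).toReal) J - a * (jT (fun x y => (W x y).toReal) J - r)) :
    ∃ b : ℝ, a ≤ b ∧ (v : EReal) ≤ ((ENNReal.ofReal (1 + b) : ℝ≥0∞) - 1 : EReal) *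
      ((r : EReal) - renyiCap (ENNReal.ofReal (1 + b)) W) := by
  have hw0 : ∀ x y, 0 ≤ (W x y).toReal := fun x y => ENNReal.toReal_nonneg
  obtain ⟨s, hs0, hs⟩ := lagrange {J : X → Y → ℝ | Jok (fun x y => (W x y).toReal) J}
    (fun J => jD (fun x y => (W x y).toReal) J
      - a * (jT (fun x y => (W x y).toReal) J - r) - v)
    (fun J => jT (fun x y => (W x y).toReal) J - r)
    (by
      intro J1 h1 J2 h2 t ht0 ht1
      refine ⟨_, Jok.mix h1 h2 ht0 ht1, ?_, ?_⟩
      · have e1 := jD_convex hw0 h1 h2 ht0 ht1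
        have e2 := mul_le_mul_of_nonneg_left (jT_concave h1 h2 ht0 ht1) ha
        linarith
      · have e2 := jT_concave h1 h2 ht0 ht1
        linarith)
    (by
      obtain ⟨J, hJ, hT⟩ := slater hW
      exact ⟨J, hJ, by rw [hT]; linarith⟩)
    (by
      intro J hJ hT
      have := h J hJ (by linarith)
      linarith)
  refine ⟨a + s, by linarith, ?_⟩
  rcases (add_nonneg ha hs0).eq_or_lt with hb | hb
  · have ha0 : a = 0 := by linarith
    have hs0' : s = 0 := by linarith
    obtain ⟨J, hJ, hD⟩ := prod_point hW
    have h2 := hs J hJ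
    simp only [hD, ha0, hs0'] at h2
    have hv : v ≤ 0 := by linarith
    rw [ha0, hs0', add_zero, add_zero, ENNReal.ofReal_one, one_sub_one_ereal, zero_mul]
    exact_mod_cast hv
  · set b := a + s with hbdef
    have hβ : 1 < 1 + b := by linarith
    have hcap : renyiCap (ENNReal.ofReal (1 + b)) W ≤ ((r - v / b : ℝ) : EReal) := by
      refine iSup_le fun P => ?_
      have hP : P.1 = fun x => ENNReal.ofReal (P.1 x).toReal :=
        funext fun x => (ENNReal.ofReal_toReal (dist_ne_top P.2 x)).symm
      rw [hP, sibson hW (fun x => ENNReal.toReal_nonneg) (dist_toReal P.2) hβ]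
      obtain ⟨J, hJ, hJ2⟩ := tilt hW (P := fun x => (P.1 x).toReal)
        (fun x => ENNReal.toReal_nonneg) (dist_toReal P.2) hβ
      have h2 := hs J hJ
      rw [EReal.coe_le_coe_iff]
      have e : 1 + b - 1 = b := by ring
      rw [e] at hJ2 ⊢
      rw [div_mul_eq_mul_div, div_le_iff₀ hb]
      have e3 : (r - v / b) * b = r * b - v := by field_simp
      rw [e3]
      refine hJ2.trans ?_
      rw [hbdef]
      linarith
    rw [ofReal_sub_one (by linarith)]
    have e : 1 + b - 1 = b := by ring
    rw [e]
    calc (v : EReal) = (b : EReal) * ((r : EReal) - ((r - v / b : ℝ) : EReal)) := by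
          rw [← EReal.coe_sub, ← EReal.coe_mul, EReal.coe_eq_coe_iff]
          field_simp
          ring
      _ ≤ _ := by
          refine mul_le_mul_of_nonneg_left (EReal.sub_le_sub le_rfl hcap) ?_
          exact_mod_cast hb.le

/-- achievability, term by term -/
lemma ach_term {X Y : Type*} [Fintype X] [Fintype Y] [Nonempty X] [Nonempty Y]
    {W : X → Y → ℝ≥0∞} (hW : IsChannel W) {α : ℝ≥0∞} (hα : 0 < α) {r : ℝ} (hr : 0 ≤ r)
    (hr1 : (r : EReal) < renyiCap ⊤ W) {β : ℝ≥0∞} (h1 : 1 ≤ β) (hαβ : α ≤ β) :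
    ((β : EReal) - 1) * ((r : EReal) - renyiCap β W) ≤ Erf α W r := by
  rcases eq_or_ne β ⊤ with rfl | ht
  · rw [cap_top_real hW] at hr1 ⊢
    have hr2 : r < Real.logb 2 (Zmax W).toReal := by exact_mod_cast hr1
    rw [EReal.coe_ennreal_top, ← EReal.coe_one, EReal.top_sub_coe, ← EReal.coe_sub,
      EReal.top_mul_coe_of_neg (by linarith)]
    exact bot_le
  rcases h1.eq_or_lt with rfl | h1
  · rw [one_sub_one_ereal, zero_mul]
    exact Erf_nonneg hW hα hr
  have hαt : α ≠ ⊤ := ne_top_of_le_ne_top ht hαβ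
  have hb : 1 < β.toReal := by
    have := (ENNReal.toReal_lt_toReal ENNReal.one_ne_top ht).2 h1
    rwa [ENNReal.toReal_one] at this
  have hαb : α.toReal ≤ β.toReal := ENNReal.toReal_mono ht hαβ
  obtain ⟨b, hbdef⟩ : ∃ b, β.toReal = b := ⟨_, rfl⟩
  have hβ : β = ENNReal.ofReal b := by rw [← hbdef, ENNReal.ofReal_toReal ht]
  rw [hbdef] at hb hαb
  rw [hβ]
  obtain ⟨q, F, hF, hq0, hq1, hsupp, hbd, hcap⟩ := cap_lower hW hb
  have key : ((ENNReal.ofReal b : ℝ≥0∞) - 1 : EReal) * ((r : EReal) - renyiCap (ENNReal.ofReal b) W)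
      ≤ (((b - 1) * r - b * Real.logb 2 F : ℝ) : EReal) := by
    rw [ofReal_sub_one (by linarith)]
    have hb1 : 0 < b - 1 := by linarith
    calc ((b - 1 : ℝ) : EReal) * ((r : EReal) - renyiCap (ENNReal.ofReal b) W)
        ≤ ((b - 1 : ℝ) : EReal) * ((r : EReal) - ((b / (b - 1) * Real.logb 2 F : ℝ) : EReal)) := by
          refine mul_le_mul_of_nonneg_left (EReal.sub_le_sub le_rfl hcap) ?_
          exact_mod_cast hb1.le
      _ = _ := by
          rw [← EReal.coe_sub, ← EReal.coe_mul, EReal.coe_eq_coe_iff]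
          field_simp
  refine key.trans ?_
  rcases le_or_gt ((b - 1) * r - b * Real.logb 2 F) 0 with hE | hE
  · exact le_trans (by exact_mod_cast hE) (Erf_nonneg hW hα hr)
  · exact ach_beta hW hα hαt hb hαb hr hF hq0 hq1 hsupp hbd hE

/-- converse for finite orders -/
lemma conv_sup {X Y : Type*} [Fintype X] [Fintype Y] [Nonempty X]
    {W : X → Y → ℝ≥0∞} (hW : IsChannel W) {α : ℝ≥0∞} (hα : 0 < α) (ht : α ≠ ⊤) {r : ℝ}
    (hr1 : (r : EReal) < renyiCap ⊤ W) {S : EReal} (hS0 : 0 ≤ S)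
    (hS : ∀ β : ℝ≥0∞, 1 ≤ β → α ≤ β → ((β : EReal) - 1) * ((r : EReal) - renyiCap β W) ≤ S) :
    Erf α W r ≤ S := by
  rw [cap_top_real hW] at hr1
  have hr2 : r < Real.logb 2 (Zmax W).toReal := by exact_mod_cast hr1
  rw [← EReal.le_of_forall_lt_iff_le]
  intro e he
  have he0 : 0 < e := by exact_mod_cast hS0.trans_lt he
  by_cases h : ∀ J, Jok (fun x y => (W x y).toReal) J → r < jT (fun x y => (W x y).toReal) J →
      e ≤ jD (fun x y => (W x y).toReal) J -
        max (α.toReal - 1) 0 * (jT (fun x y => (W x y).toReal) J - r)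
  · obtain ⟨b, hb, hv⟩ := dual hW (le_max_right _ _) hr2 h
    have hb0 : 0 ≤ b := (le_max_right _ _).trans hb
    have hb1 : α.toReal - 1 ≤ b := (le_max_left _ _).trans hb
    have h3 := hS (ENNReal.ofReal (1 + b))
      (by rw [← ENNReal.ofReal_one]; exact ENNReal.ofReal_le_ofReal (by linarith))
      (by rw [← ENNReal.ofReal_toReal ht]; exact ENNReal.ofReal_le_ofReal (by linarith))
    exact absurd (hv.trans h3) (not_le.2 he)
  · push Not at h
    obtain ⟨J, hJ, hT, hlt⟩ := h
    refine (conv_fin hW hα ht hJ hT).trans ?_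
    rw [EReal.coe_le_coe_iff]
    exact max_le he0.le hlt.le

end RST

namespace RST

/-- **Reliability function of channel simulation** (Theorem 2), for `α ∈ (0,∞]`.
If `0 ≤ r < I_∞(W)`, then `E_rf^{(α)}(W,r) = sup_{β ≥ 1} (β-1)(r - I_β(W))` for
`α ∈ (0,1]` and `E_rf^{(α)}(W,r) = |sup_{β ≥ α} (β-1)(r - I_β(W))|⁺` for `α ∈ (1,∞]`;
moreover `E_rf^{(α)}(W,r) = ∞` for `r ≥ I_∞(W)`. -/
theorem reliability_function
    {X Y : Type*} [Fintype X] [Fintype Y] [Nonempty X] [Nonempty Y]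
    (W : X → Y → ℝ≥0∞) (hW : IsChannel W) (α : ℝ≥0∞) (hα : 0 < α) :
    (∀ r : ℝ, 0 ≤ r → (r : EReal) < renyiCap ⊤ W →
      (α ≤ 1 →
        Erf α W r =
          ⨆ β : {β : ℝ≥0∞ // 1 ≤ β},
            ((β.1 : EReal) - 1) * ((r : EReal) - renyiCap β.1 W)) ∧
      (1 < α →
        Erf α W r =
          max (⨆ β : {β : ℝ≥0∞ // α ≤ β},
            ((β.1 : EReal) - 1) * ((r : EReal) - renyiCap β.1 W)) 0)) ∧
    (∀ r : ℝ, renyiCap ⊤ W ≤ (r : EReal) → Erf α W r = ⊤) := by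
  refine ⟨fun r hr hr1 => ⟨fun h1 => ?_, fun h1 => ?_⟩, fun r hr => Erf_top hW hα hr⟩
  · apply le_antisymm
    · refine conv_sup hW hα (ne_top_of_le_ne_top ENNReal.one_ne_top h1) hr1 ?_ fun β hβ _ => ?_
      · refine le_trans (le_of_eq ?_) (le_iSup (fun β : {β : ℝ≥0∞ // 1 ≤ β} =>
          ((β.1 : EReal) - 1) * ((r : EReal) - renyiCap β.1 W)) ⟨1, le_rfl⟩)
        simp only [one_sub_one_ereal, zero_mul]
      · exact le_iSup (fun β : {β : ℝ≥0∞ // 1 ≤ β} =>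
          ((β.1 : EReal) - 1) * ((r : EReal) - renyiCap β.1 W)) ⟨β, hβ⟩
    · exact iSup_le fun β => ach_term hW hα hr hr1 β.2 (h1.trans β.2)
  · apply le_antisymm
    · rcases eq_or_ne α ⊤ with rfl | ht
      · obtain ⟨J, hJ, hT⟩ := slater hW
        rw [cap_top_real hW] at hr1
        have hr2 : r < Real.logb 2 (Zmax W).toReal := by exact_mod_cast hr1
        exact (conv_top hW hJ (by rw [hT]; exact hr2)).trans (le_max_right _ _)
      · refine conv_sup hW hα ht hr1 (le_max_right _ _) fun β _ hβ => le_max_of_le_left ?_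
        exact le_iSup (fun β : {β : ℝ≥0∞ // α ≤ β} =>
          ((β.1 : EReal) - 1) * ((r : EReal) - renyiCap β.1 W)) ⟨β, hβ⟩
    · refine max_le (iSup_le fun β => ?_) (Erf_nonneg hW hα hr)
      exact ach_term hW hα hr hr1 (h1.le.trans β.2) β.2

end RST
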